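/- arXiv:2408.13737 — 2 statements merged into one kernel-verified Lean document; each statement's English description precedes it below -/
import Mathlib

section
/- Let q = p^n be a prime power with q > 1. Let f be an even, algebraic-valued, Dirichlet-type periodic function with period q. Then L'(0,f) is transcendental if and only if f is not identically zero. -/
/-!
By the functional equation of the even Hurwitz zeta function, `L'(0, f)` equals
`-1/2 ∑ f(j) log |1 - ζ ^ j|`, with `ζ` a primitive `q`-th root of unity. For a prime power `q`,
every `ℚ`-linear relation between these logarithms, `j` prime to `q`, is preserved by the
automorphisms of `ℚ(ζ)`. If the sum is algebraic, then by Baker's theorem it vanishes together with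
all of its translates `∑ f(j) log |1 - ζ ^ (b j)|`. Fourier analysis on the units modulo `q` turns
this into `∑ f(j) χ⁻¹(j) * ∑ χ(j) log |1 - ζ ^ j| = 0` for every `χ`. For even `χ` the second factor
is, up to a nonzero constant, `L'(0, χ)`, which is nonzero: for `χ = 1` it is `-(log p) / 2`, and
for `χ ≠ 1` it reduces to `L(1, χ⁻¹) ≠ 0` when `χ` is primitive. Hence `f = 0`.

Baker's theorem is proved over a Galois number field `K` of degree `d` with an auxiliary exponential
polynomial on `ℂ ^ d`, in which the grid `ℕ ^ d` represents integers of `K` and the directions of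
differentiation conjugate the given linear form. Siegel's lemma makes it vanish to high order on a
fixed grid. At the first order for which it does not, some derivative is, up to a denominator, a
nonzero algebraic integer. Schwarz's lemma makes it smaller than the bounds for its conjugates and
the product formula allow, so that no such order exists.
-/

open scoped Real

/-- The value at `s = 0` of the derivative of the analytic continuation of
`L(s,f) = ∑_{n ≥ 1} f(n)/n^s`, given via `L(s,f) = q^{-s} ∑_{a=1}^q f(a) ζ(s, a/q)`
with `ζ` the Hurwitz zeta function. -/
noncomputable def Lderiv0 (q : ℕ) (f : ℤ → ℂ) : ℂ :=
  deriv (fun s : ℂ =>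
    (q : ℂ) ^ (-s) *
      ∑ a ∈ Finset.Icc 1 q, f a * HurwitzZeta.hurwitzZeta (((a : ℝ) / q : ℝ) : UnitAddCircle) s) 0

/-! ### Schwarz's lemma and exponential polynomials -/

namespace Baker

open Complex Polynomial
open scoped ContDiff

section Hermite

theorem exists_eq_sub_pow_mul {g : ℂ → ℂ} (hg : Differentiable ℂ g) {a : ℂ} {T : ℕ}
    (hv : ∀ t < T, iteratedDeriv t g a = 0) :
    ∃ h : ℂ → ℂ, Differentiable ℂ h ∧ ∀ z, g z = (z - a) ^ T * h z := by
  have hg' : AnalyticAt ℂ g a := hg.analyticAt a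
  obtain ⟨k, hk, hgk⟩ := (natCast_le_analyticOrderAt hg').1
    ((natCast_le_analyticOrderAt_iff_iteratedDeriv_eq_zero hg').2 hv)
  have hne {z : ℂ} (hz : z ≠ a) : (z - a) ^ T ≠ 0 := pow_ne_zero _ (sub_ne_zero.2 hz)
  refine ⟨Function.update (fun z ↦ ((z - a) ^ T)⁻¹ * g z) a (k a), fun z ↦ ?_, fun z ↦ ?_⟩
  · rcases eq_or_ne z a with rfl | hz
    · refine hk.differentiableAt.congr_of_eventuallyEq ?_
      filter_upwards [hgk] with y hy
      rcases eq_or_ne y z with rfl | hyz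
      · simp
      · rw [Function.update_of_ne hyz, hy, smul_eq_mul, inv_mul_cancel_left₀ (hne hyz)]
    · have hpow : DifferentiableAt ℂ (fun z ↦ (z - a) ^ T) z := by fun_prop
      have hd : DifferentiableAt ℂ (fun z ↦ ((z - a) ^ T)⁻¹ * g z) z :=
        (hpow.fun_inv (hne hz)).mul (hg z)
      refine hd.congr_of_eventuallyEq ?_
      filter_upwards [isOpen_ne.mem_nhds hz] with y hy using Function.update_of_ne hy ..
  · rcases eq_or_ne z a with rfl | hz
    · simpa using hgk.self_of_nhds
    · rw [Function.update_of_ne hz, mul_inv_cancel_left₀ (hne hz)]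

theorem iteratedDeriv_eq_zero_of_mul {a h : ℂ → ℂ} {z : ℂ} {T : ℕ} (ha : Differentiable ℂ a)
    (hh : Differentiable ℂ h) (haz : a z ≠ 0)
    (hv : ∀ t < T, iteratedDeriv t (a * h) z = 0) {t : ℕ} (ht : t < T) :
    iteratedDeriv t h z = 0 := by
  have hord := (natCast_le_analyticOrderAt_iff_iteratedDeriv_eq_zero
    ((ha.mul hh).analyticAt z)).2 hv
  rw [analyticOrderAt_mul (ha.analyticAt z) (hh.analyticAt z),
    (ha.analyticAt z).analyticOrderAt_eq_zero.2 haz, zero_add] at hord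
  exact (natCast_le_analyticOrderAt_iff_iteratedDeriv_eq_zero (hh.analyticAt z)).1 hord t ht

/-- The monic polynomial function with a zero of order `T` at every node in `A`: the denominator
of Hermite's remainder formula. -/
def nodal (A : Finset ℂ) (T : ℕ) (z : ℂ) : ℂ := ∏ a ∈ A, (z - a) ^ T

theorem differentiable_nodal (A : Finset ℂ) (T : ℕ) : Differentiable ℂ (nodal A T) := by
  unfold nodal
  fun_prop

theorem exists_eq_nodal_mul (A : Finset ℂ) {T : ℕ} {g : ℂ → ℂ} (hg : Differentiable ℂ g)
    (hv : ∀ a ∈ A, ∀ t < T, iteratedDeriv t g a = 0) :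
    ∃ h : ℂ → ℂ, Differentiable ℂ h ∧ ∀ z, g z = nodal A T z * h z := by
  classical
  induction A using Finset.induction_on with
  | empty => exact ⟨g, hg, by simp [nodal]⟩
  | insert a A ha ih =>
    obtain ⟨h, hh, hgh⟩ := ih fun b hb ↦ hv b (Finset.mem_insert_of_mem hb)
    have hne : nodal A T a ≠ 0 := Finset.prod_ne_zero_iff.2 fun b hb ↦
      pow_ne_zero _ (sub_ne_zero.2 (ne_of_mem_of_not_mem hb ha).symm)
    have hga : ∀ t < T, iteratedDeriv t (nodal A T * h) a = 0 := by
      rw [← show g = nodal A T * h from funext hgh]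
      exact hv a (Finset.mem_insert_self a A)
    obtain ⟨k, hk, hhk⟩ := exists_eq_sub_pow_mul hh fun t ht ↦
      iteratedDeriv_eq_zero_of_mul (differentiable_nodal A T) hh hne hga ht
    refine ⟨k, hk, fun z ↦ ?_⟩
    rw [hgh, hhk, nodal, nodal, Finset.prod_insert ha]
    ring

theorem norm_nodal_le {A : Finset ℂ} {ρ r : ℝ} (hA : ∀ a ∈ A, ‖a‖ ≤ ρ) {z : ℂ} (hz : ‖z‖ ≤ r)
    (T : ℕ) : ‖nodal A T z‖ ≤ (r + ρ) ^ (A.card * T) := by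
  rw [nodal, norm_prod, mul_comm, pow_mul, ← Finset.prod_const]
  refine Finset.prod_le_prod (fun _ _ ↦ norm_nonneg _) fun a ha ↦ ?_
  rw [norm_pow]
  gcongr
  exact (norm_sub_le z a).trans (add_le_add hz (hA a ha))

theorem pow_le_norm_nodal {A : Finset ℂ} {ρ R : ℝ} (hA : ∀ a ∈ A, ‖a‖ ≤ ρ) (hρ : ρ ≤ R) {z : ℂ}
    (hz : ‖z‖ = R) (T : ℕ) : (R - ρ) ^ (A.card * T) ≤ ‖nodal A T z‖ := by
  rw [nodal, norm_prod, mul_comm, pow_mul, ← Finset.prod_const]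
  refine Finset.prod_le_prod (fun _ _ ↦ pow_nonneg (sub_nonneg.2 hρ) _) fun a ha ↦ ?_
  rw [norm_pow]
  have hza := norm_sub_norm_le z a
  have := hA a ha
  gcongr
  linarith

theorem nodal_ne_zero {A : Finset ℂ} {R : ℝ} (hA : ∀ a ∈ A, ‖a‖ < R) {z : ℂ} (hz : ‖z‖ = R)
    (T : ℕ) : nodal A T z ≠ 0 :=
  Finset.prod_ne_zero_iff.2 fun a ha ↦ pow_ne_zero _ <| sub_ne_zero.2 fun h ↦
    (hA a ha).ne (h ▸ hz)

theorem circleIntegrable_cauchy_div_nodal {A : Finset ℂ} {R : ℝ} (hR : 0 ≤ R)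
    (hA : ∀ a ∈ A, ‖a‖ < R) {y : ℂ} (hy : ‖y‖ < R) (T : ℕ) {g : ℂ → ℂ} (hg : Continuous g) :
    CircleIntegrable (fun z ↦ (z - y)⁻¹ * (g z / nodal A T z)) 0 R := by
  refine ContinuousOn.circleIntegrable hR fun z hz ↦ ContinuousAt.continuousWithinAt ?_
  have hz' : ‖z‖ = R := by simpa using hz
  refine ContinuousAt.mul (ContinuousAt.inv₀ (by fun_prop) ?_) ?_
  · exact sub_ne_zero.2 fun h ↦ hy.ne (h ▸ hz')
  · exact hg.continuousAt.div (differentiable_nodal A T).continuous.continuousAt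
      (nodal_ne_zero hA hz' T)

/-- The error at `y` of Hermite interpolation with multiplicity `T` at the nodes in `A`,
written as a Cauchy integral over the circle of radius `R` around the origin. -/
noncomputable def hermiteRemainder (A : Finset ℂ) (T : ℕ) (R : ℝ) (y : ℂ) (g : ℂ → ℂ) : ℂ :=
  nodal A T y * ((2 * π * I : ℂ)⁻¹ • ∮ z in C(0, R), (z - y)⁻¹ * (g z / nodal A T z))

theorem hermiteRemainder_nodal_mul {A : Finset ℂ} {R : ℝ} (hR : 0 ≤ R) (hA : ∀ a ∈ A, ‖a‖ < R)
    {y : ℂ} (hy : ‖y‖ < R) (T : ℕ) {h : ℂ → ℂ} (hh : Differentiable ℂ h) :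
    hermiteRemainder A T R y (fun z ↦ nodal A T z * h z) = nodal A T y * h y := by
  have hcancel : (∮ z in C(0, R), (z - y)⁻¹ * (nodal A T z * h z / nodal A T z)) =
      ∮ z in C(0, R), (z - y)⁻¹ • h z := by
    refine circleIntegral.integral_congr hR fun z hz ↦ ?_
    simp only [smul_eq_mul]
    rw [mul_div_cancel_left₀ _ (nodal_ne_zero hA (by simpa using hz) T)]
  rw [hermiteRemainder, hcancel,
    two_pi_I_inv_smul_circleIntegral_sub_inv_smul_of_differentiable_on_off_countable
      Set.countable_empty (by simpa using hy) hh.continuous.continuousOn fun z _ ↦ hh z]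

theorem norm_hermiteRemainder_le {A : Finset ℂ} {ρ r R M : ℝ} (hA : ∀ a ∈ A, ‖a‖ ≤ ρ)
    (hρ : ρ < R) {y : ℂ} (hy : ‖y‖ ≤ r) (hr : r < R) (T : ℕ) {g : ℂ → ℂ}
    (hg : ∀ z, ‖z‖ = R → ‖g z‖ ≤ M) :
    ‖hermiteRemainder A T R y g‖ ≤ R / (R - r) * ((r + ρ) / (R - ρ)) ^ (A.card * T) * M := by
  have hR : 0 ≤ R := (norm_nonneg y).trans (hy.trans hr.le)
  have hM : 0 ≤ M := (norm_nonneg _).trans (hg R (by simp [abs_of_nonneg hR]))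
  have hint : ‖(2 * π * I : ℂ)⁻¹ • ∮ z in C(0, R), (z - y)⁻¹ * (g z / nodal A T z)‖ ≤
      R * ((R - r)⁻¹ * (M / (R - ρ) ^ (A.card * T))) := by
    refine circleIntegral.norm_two_pi_i_inv_smul_integral_le_of_norm_le_const hR fun z hz ↦ ?_
    have hz' : ‖z‖ = R := by simpa using hz
    have hzy := norm_sub_norm_le z y
    have : 0 < (R - ρ) ^ (A.card * T) := pow_pos (sub_pos.2 hρ) _
    rw [norm_mul, norm_inv, norm_div]
    gcongr
    · linarith
    · exact hg z hz'
    · exact pow_le_norm_nodal hA hρ.le hz' T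
  calc ‖hermiteRemainder A T R y g‖
      ≤ (r + ρ) ^ (A.card * T) * (R * ((R - r)⁻¹ * (M / (R - ρ) ^ (A.card * T)))) := by
        rw [hermiteRemainder, norm_mul]
        exact mul_le_mul (norm_nodal_le hA hy T) hint (norm_nonneg _)
          ((norm_nonneg _).trans (norm_nodal_le hA hy T))
    _ = R / (R - r) * ((r + ρ) / (R - ρ)) ^ (A.card * T) * M := by
        rw [div_pow]
        ring

/-- The space of entire functions of one variable, the domain of the interpolation functionals. -/
def entire : Submodule ℂ (ℂ → ℂ) where
  carrier := {g | Differentiable ℂ g}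
  add_mem' := Differentiable.add
  zero_mem' := differentiable_const 0
  smul_mem' c _ h := h.const_smul c

/-- `hermiteRemainder` as a linear functional on entire functions. -/
noncomputable def hermiteRemainderₗ (A : Finset ℂ) (T : ℕ) {R : ℝ} (hR : 0 ≤ R)
    (hA : ∀ a ∈ A, ‖a‖ < R) {y : ℂ} (hy : ‖y‖ < R) : entire →ₗ[ℂ] ℂ where
  toFun g := hermiteRemainder A T R y g
  map_add' f g := by
    have hf := circleIntegrable_cauchy_div_nodal hR hA hy T f.2.continuous
    have hg := circleIntegrable_cauchy_div_nodal hR hA hy T g.2.continuous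
    simp only [hermiteRemainder, Submodule.coe_add, Pi.add_apply, add_div, mul_add]
    rw [circleIntegral.integral_add hf hg, smul_add, mul_add]
  map_smul' c g := by
    simp only [hermiteRemainder, Submodule.coe_smul, Pi.smul_apply, smul_eq_mul, mul_div_assoc,
      mul_left_comm _ c, circleIntegral.integral_const_mul, RingHom.id_apply]

/-- `g ↦ g⁽ᵗ⁾(a)` as a linear functional on entire functions. -/
noncomputable def evalDerivₗ (t : ℕ) (a : ℂ) : entire →ₗ[ℂ] ℂ where
  toFun g := iteratedDeriv t g a
  map_add' f g := iteratedDeriv_add f.2.contDiff.contDiffAt g.2.contDiff.contDiffAt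
  map_smul' c g := iteratedDeriv_const_smul_field c g.1

theorem exists_hermite (A : Finset ℂ) (T : ℕ) {ρ r R : ℝ} (hA : ∀ a ∈ A, ‖a‖ ≤ ρ) (hρ : ρ < R)
    {y : ℂ} (hy : ‖y‖ ≤ r) (hr : r < R) :
    ∃ c : A × Fin T → ℂ, ∀ (g : ℂ → ℂ) (M : ℝ), Differentiable ℂ g →
      (∀ z, ‖z‖ = R → ‖g z‖ ≤ M) →
      ‖g y - ∑ p, c p * iteratedDeriv p.2 g p.1‖ ≤
        R / (R - r) * ((r + ρ) / (R - ρ)) ^ (A.card * T) * M := by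
  have hR : 0 ≤ R := (norm_nonneg y).trans (hy.trans hr.le)
  have hA' : ∀ a ∈ A, ‖a‖ < R := fun a ha ↦ (hA a ha).trans_lt hρ
  let E := hermiteRemainderₗ A T hR hA' (hy.trans_lt hr)
  let L (p : A × Fin T) : entire →ₗ[ℂ] ℂ := evalDerivₗ p.2 p.1
  -- An entire function killed by all the nodal functionals is divisible by `nodal A T`.
  have hker : ⨅ p, LinearMap.ker (L p) ≤ LinearMap.ker (evalDerivₗ 0 y - E) := by
    intro g hg
    rw [Submodule.mem_iInf] at hg
    obtain ⟨h, hh, hgh⟩ := exists_eq_nodal_mul A g.2 fun a ha t ht ↦ hg (⟨a, ha⟩, ⟨t, ht⟩)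
    have hE : E g = g.1 y := by
      rw [hgh y, ← hermiteRemainder_nodal_mul hR hA' (hy.trans_lt hr) T hh]
      exact congrArg (hermiteRemainder A T R y) (funext hgh)
    simp [evalDerivₗ, hE]
  obtain ⟨c, hc⟩ := (Submodule.mem_span_range_iff_exists_fun ℂ).1 (mem_span_of_iInf_ker_le_ker hker)
  refine ⟨c, fun g M hg hM ↦ ?_⟩
  have hcg := LinearMap.congr_fun hc ⟨g, hg⟩
  simp only [L, evalDerivₗ, LinearMap.sum_apply, LinearMap.smul_apply, LinearMap.coe_mk,
    AddHom.coe_mk, smul_eq_mul, LinearMap.sub_apply, iteratedDeriv_zero] at hcg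
  rw [hcg, sub_sub_cancel]
  exact norm_hermiteRemainder_le hA hρ hy hr T hM

end Hermite

section DirectionalDerivatives

variable {E E' : Type*} [NormedAddCommGroup E] [NormedSpace ℂ E] [NormedAddCommGroup E']
  [NormedSpace ℂ E'] {F G : E → ℂ}

/-- The iterated directional derivative `∂_{vₙ} ⋯ ∂_{v₁} F` along a list `[v₁, …, vₙ]` of
directions. -/
noncomputable def dirDeriv : List E → (E → ℂ) → E → ℂ
  | [], F => F
  | v :: l, F => dirDeriv l fun x ↦ fderiv ℂ F x v

theorem contDiff_fderiv_apply (hF : ContDiff ℂ ∞ F) (v : E) :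
    ContDiff ℂ ∞ fun x ↦ fderiv ℂ F x v :=
  (contDiff_infty_iff_fderiv.1 hF).2.clm_apply contDiff_const

theorem contDiff_dirDeriv (l : List E) (hF : ContDiff ℂ ∞ F) : ContDiff ℂ ∞ (dirDeriv l F) := by
  induction l generalizing F with
  | nil => exact hF
  | cons v _ ih => exact ih (contDiff_fderiv_apply hF v)

theorem dirDeriv_append (l₁ l₂ : List E) (F : E → ℂ) :
    dirDeriv (l₁ ++ l₂) F = dirDeriv l₂ (dirDeriv l₁ F) := by
  induction l₁ generalizing F with
  | nil => rfl
  | cons _ _ ih => exact ih _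

theorem dirDeriv_add (l : List E) (hF : ContDiff ℂ ∞ F) (hG : ContDiff ℂ ∞ G) :
    dirDeriv l (F + G) = dirDeriv l F + dirDeriv l G := by
  induction l generalizing F G with
  | nil => rfl
  | cons v l ih =>
    have hv : (fun x ↦ fderiv ℂ (F + G) x v) =
        (fun x ↦ fderiv ℂ F x v) + fun x ↦ fderiv ℂ G x v := by
      funext x
      rw [fderiv_add (hF.differentiable (by simp) x) (hG.differentiable (by simp) x)]
      rfl
    rw [dirDeriv, hv, ih (contDiff_fderiv_apply hF v) (contDiff_fderiv_apply hG v)]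
    rfl

theorem dirDeriv_const_smul (l : List E) (c : ℂ) (hF : ContDiff ℂ ∞ F) :
    dirDeriv l (c • F) = c • dirDeriv l F := by
  induction l generalizing F with
  | nil => rfl
  | cons v l ih =>
    have hv : (fun x ↦ fderiv ℂ (c • F) x v) = c • fun x ↦ fderiv ℂ F x v := by
      funext x
      rw [fderiv_const_smul (hF.differentiable (by simp) x)]
      rfl
    rw [dirDeriv, hv, ih (contDiff_fderiv_apply hF v)]
    rfl

theorem dirDeriv_zero (l : List E) : dirDeriv l (0 : E → ℂ) = 0 := by
  simpa using dirDeriv_const_smul l 0 (contDiff_const (c := (0 : ℂ)) : ContDiff ℂ ∞ (0 : E → ℂ))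

theorem contDiff_finset_sum {κ : Type*} (s : Finset κ) {F : κ → E → ℂ}
    (hF : ∀ i, ContDiff ℂ ∞ (F i)) : ContDiff ℂ ∞ (∑ i ∈ s, F i) := by
  simpa only [← Finset.sum_apply] using! ContDiff.sum fun i _ ↦ hF i

theorem dirDeriv_sum (l : List E) {κ : Type*} (s : Finset κ) {F : κ → E → ℂ}
    (hF : ∀ i, ContDiff ℂ ∞ (F i)) :
    dirDeriv l (∑ i ∈ s, F i) = ∑ i ∈ s, dirDeriv l (F i) := by
  classical
  induction s using Finset.induction_on with
  | empty => exact dirDeriv_zero l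
  | insert a s ha ih =>
    rw [Finset.sum_insert ha, Finset.sum_insert ha,
      dirDeriv_add l (hF a) (contDiff_finset_sum s hF), ih]

theorem dirDeriv_comp_affine (A : E →L[ℂ] E') (b : E') (l : List E) {F : E' → ℂ}
    (hF : ContDiff ℂ ∞ F) :
    dirDeriv l (fun x ↦ F (A x + b)) = fun x ↦ dirDeriv (l.map A) F (A x + b) := by
  induction l generalizing F with
  | nil => rfl
  | cons v l ih =>
    have hv : (fun x ↦ fderiv ℂ (fun x ↦ F (A x + b)) x v) =
        fun x ↦ fderiv ℂ F (A x + b) (A v) := by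
      funext x
      have hcomp := (hF.differentiable (by simp) (A x + b)).hasFDerivAt.comp x
        (A.hasFDerivAt.add_const b)
      exact DFunLike.congr_fun hcomp.fderiv v
    rw [dirDeriv, hv, ih (contDiff_fderiv_apply hF _)]
    rfl

theorem dirDeriv_eq_zero_of_span_eq_top {V : Set E} (hV : Submodule.span ℂ V = ⊤) {x : E}
    (hF : ContDiff ℂ ∞ F) {l : List E}
    (h : ∀ l' : List E, l'.length = l.length → (∀ v ∈ l', v ∈ V) → dirDeriv l' F x = 0) :
    dirDeriv l F x = 0 := by
  induction l generalizing F with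
  | nil => exact h [] rfl (by simp)
  | cons v l ih =>
    refine ih (contDiff_fderiv_apply hF v) fun l' hl' hl'V ↦ ?_
    have hv : v ∈ Submodule.span ℂ V := hV ▸ Submodule.mem_top
    induction hv using Submodule.span_induction with
    | mem v hv => exact h (v :: l') (by simp [hl']) (by simpa using ⟨hv, hl'V⟩)
    | zero =>
      simpa only [map_zero] using! congrFun (dirDeriv_zero l') x
    | add a b _ _ ha hb =>
      have hab := dirDeriv_add l' (contDiff_fderiv_apply hF a) (contDiff_fderiv_apply hF b)
      simp only [map_add]
      exact (congrFun hab x).trans (by simp [ha h, hb h])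
    | smul c a _ ha =>
      simp only [map_smul]
      exact (congrFun (dirDeriv_const_smul l' c (contDiff_fderiv_apply hF a)) x).trans
        (by simp [ha h])

theorem hasDerivAt_comp_line (hF : ContDiff ℂ ∞ F) (x v : E) (u : ℂ) :
    HasDerivAt (fun u : ℂ ↦ F (x + u • v)) (fderiv ℂ F (x + u • v) v) u := by
  have hline : HasDerivAt (fun u : ℂ ↦ x + u • v) v u := by
    simpa using ((hasDerivAt_id u).smul_const v).const_add x
  exact (hF.differentiable (by simp) _).hasFDerivAt.comp_hasDerivAt u hline

theorem iteratedDeriv_comp_line (hF : ContDiff ℂ ∞ F) (x v : E) (n : ℕ) (u : ℂ) :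
    iteratedDeriv n (fun u : ℂ ↦ F (x + u • v)) u =
      dirDeriv (List.replicate n v) F (x + u • v) := by
  induction n generalizing F with
  | zero => rfl
  | succ n ih =>
    have hderiv : deriv (fun u : ℂ ↦ F (x + u • v)) = fun u ↦ fderiv ℂ F (x + u • v) v :=
      funext fun u ↦ (hasDerivAt_comp_line hF x v u).deriv
    rw [iteratedDeriv_succ', hderiv, ih (contDiff_fderiv_apply hF v)]
    rfl

theorem norm_fderiv_apply_le (hF : ContDiff ℂ ∞ F) {v x : E} {ρ C M : ℝ} (hρ : 0 < ρ)
    (hC : 0 < C) (hv : ‖v‖ ≤ C) (hM : ∀ y, ‖y - x‖ ≤ ρ → ‖F y‖ ≤ M) :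
    ‖fderiv ℂ F x v‖ ≤ C / ρ * M := by
  have hd : DiffContOnCl ℂ (fun u : ℂ ↦ F (x + u • v)) (Metric.ball 0 (ρ / C)) :=
    Differentiable.diffContOnCl fun u ↦ (hasDerivAt_comp_line hF x v u).differentiableAt
  have hcauchy := norm_deriv_le_of_forall_mem_sphere_norm_le (C := M) (div_pos hρ hC) hd
    fun z hz ↦ hM _ <| by
      have hz' : ‖z‖ = ρ / C := by simpa using hz
      rw [add_sub_cancel_left, norm_smul, hz']
      calc ρ / C * ‖v‖ ≤ ρ / C * C := by gcongr
        _ = ρ := div_mul_cancel₀ ρ hC.ne'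
  rw [(hasDerivAt_comp_line hF x v 0).deriv, zero_smul, add_zero] at hcauchy
  exact hcauchy.trans_eq (by field_simp)

theorem norm_dirDeriv_le (hF : ContDiff ℂ ∞ F) {l : List E} {x : E} {ρ C M : ℝ} (hρ : 0 < ρ)
    (hC : 0 < C) (hl : ∀ v ∈ l, ‖v‖ ≤ C) (hM : ∀ y, ‖y - x‖ ≤ l.length * ρ → ‖F y‖ ≤ M) :
    ‖dirDeriv l F x‖ ≤ (C / ρ) ^ l.length * M := by
  induction l generalizing F M with
  | nil => simpa [dirDeriv] using hM x (by simp)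
  | cons v l ih =>
    rw [List.forall_mem_cons] at hl
    have hv : ∀ y, ‖y - x‖ ≤ l.length * ρ → ‖fderiv ℂ F y v‖ ≤ C / ρ * M := fun y hy ↦
      norm_fderiv_apply_le hF hρ hC hl.1 fun z hz ↦ hM z <| by
        have := norm_sub_le_norm_sub_add_norm_sub z y x
        push_cast [List.length_cons]
        linarith
    calc ‖dirDeriv (v :: l) F x‖ ≤ (C / ρ) ^ l.length * (C / ρ * M) :=
          ih (contDiff_fderiv_apply hF v) hl.2 hv
      _ = (C / ρ) ^ (v :: l).length * M := by rw [List.length_cons, pow_succ, mul_assoc]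

end DirectionalDerivatives

section Schwarz

variable {ι : Type*}

/-- The projection of `ℂ^ι` onto the hyperplane where the coordinate `j` vanishes, that is, the
linear part of the affine map `y ↦ Function.update y j a`. -/
noncomputable def eraseCoord [DecidableEq ι] (j : ι) : (ι → ℂ) →L[ℂ] (ι → ℂ) :=
  ContinuousLinearMap.pi fun i ↦ if i = j then 0 else ContinuousLinearMap.proj i

theorem update_eq_eraseCoord_add [DecidableEq ι] (j : ι) (y : ι → ℂ) (a : ℂ) :
    Function.update y j a = eraseCoord j y + Pi.single j a := by
  funext i
  rcases eq_or_ne i j with rfl | h <;> simp [eraseCoord, *]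

theorem update_eq_eraseCoord_add_smul [DecidableEq ι] (j : ι) (y : ι → ℂ) (a : ℂ) :
    Function.update y j a = eraseCoord j y + a • Pi.single j (1 : ℂ) := by
  rw [update_eq_eraseCoord_add, ← Pi.single_smul, smul_eq_mul, mul_one]

variable [Fintype ι]

theorem dependsOn_dirDeriv {F : (ι → ℂ) → ℂ} (hF : ContDiff ℂ ∞ F) {s : Set ι}
    (h : DependsOn F s) (l : List (ι → ℂ)) : DependsOn (dirDeriv l F) s := by
  intro x y hxy
  have htranslate : (fun z ↦ F (ContinuousLinearMap.id ℂ (ι → ℂ) z + (x - y))) = F :=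
    funext fun z ↦ h fun i hi ↦ by simp [hxy i hi]
  have hd := congrFun (dirDeriv_comp_affine (ContinuousLinearMap.id ℂ (ι → ℂ)) (x - y) l hF) y
  rw [htranslate] at hd
  simpa using hd.symm

variable [DecidableEq ι]

theorem norm_update_le {j : ι} {y : ι → ℂ} {a : ℂ} {R : ℝ} (hy : ‖y‖ ≤ R) (ha : ‖a‖ ≤ R) :
    ‖Function.update y j a‖ ≤ R := by
  refine (pi_norm_le_iff_of_nonneg ((norm_nonneg a).trans ha)).2 fun i ↦ ?_
  rcases eq_or_ne i j with rfl | h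
  · simpa using ha
  · simpa [h] using (norm_le_pi_norm y i).trans hy

variable {A : Finset ℂ} {T : ℕ}

/-- The Hermite interpolant of `F` in the coordinate `j`, with nodes in `A` of multiplicity `T` and
interpolation weights `c`; it no longer depends on the coordinate `j`. -/
noncomputable def interpolant (j : ι) (c : A × Fin T → ℂ) (F : (ι → ℂ) → ℂ) : (ι → ℂ) → ℂ :=
  ∑ p : A × Fin T, c p •
    fun y ↦ dirDeriv (List.replicate p.2 (Pi.single j 1)) F (Function.update y j p.1)

variable {j : ι} {c : A × Fin T → ℂ} {F : (ι → ℂ) → ℂ}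

theorem interpolant_apply (y : ι → ℂ) : interpolant j c F y =
    ∑ p : A × Fin T, c p * dirDeriv (List.replicate p.2 (Pi.single j 1)) F
      (Function.update y j p.1) := by
  simp [interpolant]

theorem contDiff_comp_update (j : ι) (a : ℂ) (hF : ContDiff ℂ ∞ F) :
    ContDiff ℂ ∞ fun y ↦ F (Function.update y j a) := by
  simp only [update_eq_eraseCoord_add]
  exact hF.comp ((eraseCoord j).contDiff.add contDiff_const)

theorem contDiff_interpolant (hF : ContDiff ℂ ∞ F) : ContDiff ℂ ∞ (interpolant j c F) := by
  have hsum : ContDiff ℂ ∞ fun y ↦ interpolant j c F y := by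
    simp only [interpolant_apply]
    exact ContDiff.sum fun p _ ↦ contDiff_const.mul
      (contDiff_comp_update j _ (contDiff_dirDeriv _ hF))
  exact hsum

theorem dependsOn_interpolant (hF : ContDiff ℂ ∞ F) {J : Finset ι}
    (h : DependsOn F (insert j J : Finset ι)) : DependsOn (interpolant j c F) J := by
  intro y z hyz
  simp only [interpolant_apply]
  refine Finset.sum_congr rfl fun p _ ↦ congrArg _ (dependsOn_dirDeriv hF h _ fun k hk ↦ ?_)
  rcases eq_or_ne k j with rfl | hkj
  · simp
  · simpa [hkj] using hyz k (by simpa [hkj] using hk)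

theorem dirDeriv_interpolant_eq_zero (hF : ContDiff ℂ ∞ F) {n : ℕ}
    (hv : ∀ s : ι → ℂ, (∀ i, s i ∈ A) → ∀ l : List (ι → ℂ), l.length < n → dirDeriv l F s = 0)
    {s : ι → ℂ} (hs : ∀ i, s i ∈ A) {l : List (ι → ℂ)} (hl : l.length < n - T) :
    dirDeriv l (interpolant j c F) s = 0 := by
  have hsm (p : A × Fin T) : ContDiff ℂ ∞ fun y ↦
      dirDeriv (List.replicate p.2 (Pi.single j 1)) F (Function.update y j (p.1 : ℂ)) :=
    contDiff_comp_update j _ (contDiff_dirDeriv _ hF)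
  rw [interpolant, dirDeriv_sum l _ fun p ↦ by exact (hsm p).const_smul (c p), Finset.sum_apply]
  refine Finset.sum_eq_zero fun p _ ↦ ?_
  rw [dirDeriv_const_smul l _ (hsm p)]
  simp only [update_eq_eraseCoord_add]
  rw [dirDeriv_comp_affine _ _ _ (contDiff_dirDeriv _ hF), Pi.smul_apply, ← dirDeriv_append,
    ← update_eq_eraseCoord_add, hv, smul_zero]
  · intro i
    rcases eq_or_ne i j with rfl | h
    · simp
    · simpa [h] using hs i
  · have := p.2.2
    simp only [List.length_append, List.length_replicate, List.length_map]
    omega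

theorem exists_norm_sub_interpolant_le {ρ r R : ℝ} (hA : ∀ a ∈ A, ‖a‖ ≤ ρ) (hρ : ρ < R)
    (hr : r < R) (j : ι) {u : ℂ} (hu : ‖u‖ ≤ r) {M : ℝ} (hF : ContDiff ℂ ∞ F)
    (hM : ∀ x, ‖x‖ ≤ R → ‖F x‖ ≤ M) :
    ∃ c : A × Fin T → ℂ, ∀ y : ι → ℂ, ‖y‖ ≤ R → ‖F (Function.update y j u) - interpolant j c F y‖ ≤
      R / (R - r) * ((r + ρ) / (R - ρ)) ^ (A.card * T) * M := by
  obtain ⟨c, hc⟩ := exists_hermite A T hA hρ hu hr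
  refine ⟨c, fun y hy ↦ ?_⟩
  have hslice : (fun a : ℂ ↦ F (Function.update y j a)) =
      fun a : ℂ ↦ F (eraseCoord j y + a • Pi.single j (1 : ℂ)) :=
    funext fun a ↦ by rw [update_eq_eraseCoord_add_smul]
  have hdiff : Differentiable ℂ fun a : ℂ ↦ F (Function.update y j a) := by
    rw [hslice]
    exact fun a ↦ (hasDerivAt_comp_line hF _ _ a).differentiableAt
  have herr := hc _ M hdiff fun z hz ↦ hM _ (norm_update_le hy hz.le)
  simp only [hslice, iteratedDeriv_comp_line hF, ← update_eq_eraseCoord_add_smul] at herr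
  rwa [interpolant_apply]

omit [DecidableEq ι] in
/-- A Schwarz lemma on polydiscs. The proof eliminates one variable at a time by Hermite
interpolation. -/
theorem norm_le_of_dirDeriv_eq_zero {ρ r R ε : ℝ} (hA0 : A.Nonempty) (hA : ∀ a ∈ A, ‖a‖ ≤ ρ)
    (hρ : ρ < R) (hr : r < R) (hε : R / (R - r) * ((r + ρ) / (R - ρ)) ^ (A.card * T) ≤ ε)
    (hε1 : ε ≤ 1) {J : Finset ι} {n : ℕ} {M : ℝ} (hF : ContDiff ℂ ∞ F) (hJ : DependsOn F J)
    (hn : J.card * T < n)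
    (hv : ∀ s : ι → ℂ, (∀ i, s i ∈ A) → ∀ l : List (ι → ℂ), l.length < n → dirDeriv l F s = 0)
    (hM : ∀ x, ‖x‖ ≤ R → ‖F x‖ ≤ M) {x : ι → ℂ} (hx : ‖x‖ ≤ r) :
    ‖F x‖ ≤ (2 ^ J.card - 1) * ε * M := by
  classical
  have hM0 : 0 ≤ M := (norm_nonneg _).trans (hM x (hx.trans hr.le))
  induction J using Finset.induction_on generalizing n F M with
  | empty =>
    obtain ⟨a, ha⟩ := hA0
    have hconst : F x = F fun _ ↦ a := hJ (by simp)
    have hzero : F (fun _ ↦ a) = 0 := hv _ (fun _ ↦ ha) [] (by simpa using hn)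
    simp [hconst, hzero]
  | insert j J hj ih =>
    rw [Finset.card_insert_of_notMem hj] at hn ⊢
    have hu : ‖x j‖ ≤ r := (norm_le_pi_norm x j).trans hx
    obtain ⟨c, hc⟩ := exists_norm_sub_interpolant_le (T := T) hA hρ hr j hu hF hM
    have herr (y : ι → ℂ) (hy : ‖y‖ ≤ R) :
        ‖F (Function.update y j (x j)) - interpolant j c F y‖ ≤ ε * M :=
      (hc y hy).trans (by gcongr)
    have hB (y : ι → ℂ) (hy : ‖y‖ ≤ R) : ‖interpolant j c F y‖ ≤ 2 * M := by
      have htri := norm_le_norm_add_norm_sub (F (Function.update y j (x j))) (interpolant j c F y)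
      have hεM : ε * M ≤ M := mul_le_of_le_one_left hM0 hε1
      linarith [herr y hy, hM _ (norm_update_le hy (hu.trans hr.le) (j := j))]
    have hBx := ih (contDiff_interpolant hF) (dependsOn_interpolant hF hJ)
      (by rw [add_mul] at hn; omega) (fun s hs l hl ↦ dirDeriv_interpolant_eq_zero hF hv hs hl)
      hB (by positivity)
    have hFx := herr x (hx.trans hr.le)
    rw [Function.update_eq_self] at hFx
    calc ‖F x‖ ≤ ‖interpolant j c F x‖ + ‖F x - interpolant j c F x‖ :=
          norm_le_norm_add_norm_sub' ..
      _ ≤ (2 ^ J.card - 1) * ε * (2 * M) + ε * M := add_le_add hBx hFx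
      _ = (2 ^ (J.card + 1) - 1) * ε * M := by ring

end Schwarz

section TwistedDerivatives

variable {A B : Type*} [CommRing A] [CommRing B]

/-- The operator `P ↦ d P' + c P` attached to `v = (d, c)`: differentiating `P(ℓ₀ x) e^{ℓ x}` in a
direction `w` amounts to applying it to `P`, with `d = ℓ₀ w` and `c = ℓ w`. -/
noncomputable def twistedDeriv (v : A × A) : Module.End A A[X] :=
  v.1 • derivative + v.2 • 1

/-- The composition of the (commuting) operators `twistedDeriv v`, for `v` in a list. -/
noncomputable def twistedDerivs (l : List (A × A)) : Module.End A A[X] :=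
  (l.map twistedDeriv).prod

theorem twistedDeriv_apply (v : A × A) (P : A[X]) :
    twistedDeriv v P = v.1 • derivative P + v.2 • P := rfl

theorem commute_twistedDeriv (v w : A × A) : Commute (twistedDeriv v) (twistedDeriv w) := by
  refine LinearMap.ext fun P ↦ ?_
  simp only [Module.End.mul_apply, twistedDeriv_apply, map_add, derivative_smul, smul_smul]
  rw [mul_comm v.1 w.1, mul_comm v.2 w.2, mul_comm v.1 w.2, mul_comm v.2 w.1]
  abel

theorem twistedDerivs_cons_apply (v : A × A) (l : List (A × A)) (P : A[X]) :
    twistedDerivs (v :: l) P = twistedDerivs l (twistedDeriv v P) := by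
  have hcomm : Commute (twistedDeriv v) (twistedDerivs l) :=
    Commute.list_prod_right _ _ fun _ hx ↦ by
      obtain ⟨w, -, rfl⟩ := List.mem_map.1 hx
      exact commute_twistedDeriv v w
  rw [twistedDerivs, List.map_cons, List.prod_cons]
  exact LinearMap.congr_fun hcomm.eq P

theorem twistedDerivs_perm {l₁ l₂ : List (A × A)} (h : l₁.Perm l₂) :
    twistedDerivs l₁ = twistedDerivs l₂ :=
  (h.map _).prod_eq' <| List.pairwise_map.2 <|
    List.pairwise_of_forall fun v w ↦ commute_twistedDeriv v w

theorem map_twistedDerivs (f : A →+* B) (l : List (A × A)) (P : A[X]) :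
    (twistedDerivs l P).map f = twistedDerivs (l.map (Prod.map f f)) (P.map f) := by
  induction l generalizing P with
  | nil => rfl
  | cons v l ih =>
    rw [List.map_cons, twistedDerivs_cons_apply, twistedDerivs_cons_apply, ih]
    simp [twistedDeriv_apply, Polynomial.map_smul, derivative_map]

theorem twistedDeriv_pow_eq_zero {N : ℕ} {P : A[X]} (hP : P.natDegree < N) :
    (twistedDeriv (1, 0) ^ N) P = 0 := by
  have h : twistedDeriv (1, 0) = (derivative : Module.End A A[X]) := by simp [twistedDeriv]
  rw [h, Module.End.pow_apply]
  exact iterate_derivative_eq_zero hP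

theorem twistedDeriv_injective [IsDomain A] (d : A) {c : A} (hc : c ≠ 0) :
    Function.Injective (twistedDeriv (d, c)) := by
  refine (injective_iff_map_eq_zero _).2 fun P hP ↦ by_contra fun hne ↦ ?_
  have h : C c * P = -(d • derivative P) := by
    rw [← smul_eq_C_mul]
    exact eq_neg_of_add_eq_zero_right hP
  refine (degree_derivative_lt hne).not_ge ?_
  calc P.degree = (d • derivative P).degree := by rw [← degree_C_mul hc, h, degree_neg]
    _ ≤ (derivative P).degree := degree_smul_le d _

end TwistedDerivatives

section CoefficientBounds

variable {N : ℕ} {b c₀ : ℝ} {P : ℂ[X]}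

/-- `P` has degree at most `N` and length (sum of the absolute values of the coefficients) at
most `b`. -/
structure HasLengthLE (N : ℕ) (b : ℝ) (P : ℂ[X]) : Prop where
  natDegree_le : P.natDegree ≤ N
  sum_le : ∑ i ∈ Finset.range (N + 1), ‖P.coeff i‖ ≤ b

namespace HasLengthLE

theorem X_pow {a : ℕ} (h : a ≤ N) : HasLengthLE N 1 (X ^ a : ℂ[X]) where
  natDegree_le := by simpa using h
  sum_le := by
    rw [Finset.sum_eq_single_of_mem a (Finset.mem_range.2 (by lia))
      fun i _ hi ↦ by simp [coeff_X_pow, hi]]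
    simp

theorem of_norm_coeff_le (hP : P.degree < N) (hb : ∀ i, ‖P.coeff i‖ ≤ b) :
    HasLengthLE N (N * b) P where
  natDegree_le := natDegree_le_of_degree_le hP.le
  sum_le := by
    rw [Finset.sum_range_succ, coeff_eq_zero_of_degree_lt hP, norm_zero, add_zero]
    simpa using Finset.sum_le_card_nsmul (Finset.range N) _ _ fun i _ ↦ hb i

theorem derivative (h : HasLengthLE N b P) : HasLengthLE N (N * b) (derivative P) where
  natDegree_le := (natDegree_derivative_le P).trans (by have := h.natDegree_le; lia)
  sum_le := by
    have hshift : ∑ i ∈ Finset.range N, ‖P.coeff (i + 1)‖ ≤ b := by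
      refine le_trans ?_ h.sum_le
      rw [Finset.sum_range_succ']
      exact le_add_of_nonneg_right (norm_nonneg _)
    have hcoeff {i : ℕ} (hi : i ∈ Finset.range N) :
        ‖(Polynomial.derivative P).coeff i‖ ≤ N * ‖P.coeff (i + 1)‖ := by
      have hiN : ‖(i + 1 : ℂ)‖ ≤ N := by
        rw [← Nat.cast_succ, norm_natCast]
        exact_mod_cast Finset.mem_range.1 hi
      rw [coeff_derivative, norm_mul, mul_comm]
      gcongr
    have htop : (Polynomial.derivative P).coeff N = 0 := by
      rw [coeff_derivative, coeff_eq_zero_of_natDegree_lt (Nat.lt_succ_of_le h.natDegree_le),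
        zero_mul]
    rw [Finset.sum_range_succ, htop, norm_zero, add_zero]
    calc _ ≤ ∑ i ∈ Finset.range N, N * ‖P.coeff (i + 1)‖ := Finset.sum_le_sum fun _ ↦ hcoeff
      _ ≤ N * b := by rw [← Finset.mul_sum]; gcongr

theorem twistedDeriv (h : HasLengthLE N b P) {v : ℂ × ℂ} (h₁ : ‖v.1‖ ≤ 1) (h₂ : ‖v.2‖ ≤ c₀) :
    HasLengthLE N ((N + c₀) * b) (twistedDeriv v P) where
  natDegree_le := (natDegree_add_le _ _).trans <| max_le
    ((natDegree_smul_le _ _).trans h.derivative.natDegree_le)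
    ((natDegree_smul_le _ _).trans h.natDegree_le)
  sum_le := by
    have hc₀ : 0 ≤ c₀ := (norm_nonneg _).trans h₂
    have hcoeff (i : ℕ) : ‖(Baker.twistedDeriv v P).coeff i‖ ≤
        ‖(Polynomial.derivative P).coeff i‖ + c₀ * ‖P.coeff i‖ := by
      rw [twistedDeriv_apply, coeff_add, coeff_smul, coeff_smul, smul_eq_mul, smul_eq_mul]
      refine (norm_add_le _ _).trans ?_
      rw [norm_mul, norm_mul]
      gcongr
      exact mul_le_of_le_one_left (norm_nonneg _) h₁
    calc _ ≤ _ := Finset.sum_le_sum fun i _ ↦ hcoeff i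
      _ ≤ N * b + c₀ * b := by
        rw [Finset.sum_add_distrib, ← Finset.mul_sum]
        gcongr
        exacts [h.derivative.sum_le, h.sum_le]
      _ = (N + c₀) * b := by ring

theorem twistedDerivs (h : HasLengthLE N b P) {l : List (ℂ × ℂ)}
    (hl : ∀ v ∈ l, ‖v.1‖ ≤ 1 ∧ ‖v.2‖ ≤ c₀) :
    HasLengthLE N ((N + c₀) ^ l.length * b) (twistedDerivs l P) := by
  induction l generalizing b P with
  | nil => simpa [Baker.twistedDerivs] using h
  | cons v l ih =>
    rw [List.forall_mem_cons] at hl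
    rw [twistedDerivs_cons_apply, List.length_cons, pow_succ, mul_assoc]
    exact ih (h.twistedDeriv hl.1.1 hl.1.2) hl.2

theorem norm_eval_le (h : HasLengthLE N b P) {z : ℂ} {Z : ℝ} (hZ : 1 ≤ Z) (hz : ‖z‖ ≤ Z) :
    ‖P.eval z‖ ≤ b * Z ^ N := by
  rw [eval_eq_sum_range' (Nat.lt_succ_of_le h.natDegree_le)]
  have hterm {i : ℕ} (hi : i ∈ Finset.range (N + 1)) :
      ‖P.coeff i * z ^ i‖ ≤ ‖P.coeff i‖ * Z ^ N := by
    rw [norm_mul, norm_pow]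
    gcongr
    exact (pow_le_pow_left₀ (norm_nonneg _) hz i).trans
      (pow_le_pow_right₀ hZ (Nat.lt_succ_iff.1 (Finset.mem_range.1 hi)))
  calc _ ≤ ∑ i ∈ Finset.range (N + 1), ‖P.coeff i‖ * Z ^ N := norm_sum_le_of_le _ fun _ ↦ hterm
    _ ≤ b * Z ^ N := by rw [← Finset.sum_mul]; gcongr; exact h.sum_le

end HasLengthLE

end CoefficientBounds

section ExponentialPolynomials

variable {κ : Type*} {c : κ → ℂ} {s : Finset κ} {P : κ → ℂ[X]}

theorem sum_eval_twistedDeriv_mul_exp_eq_zero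
    (h : ∀ u, ∑ k ∈ s, (P k).eval u * exp (c k * u) = 0) (a u : ℂ) :
    ∑ k ∈ s, (twistedDeriv (1, c k - a) (P k)).eval u * exp (c k * u) = 0 := by
  have hderiv : HasDerivAt (fun u ↦ ∑ k ∈ s, (P k).eval u * exp (c k * u))
      (∑ k ∈ s, ((derivative (P k)).eval u * exp (c k * u) +
        (P k).eval u * (exp (c k * u) * (c k * 1)))) u :=
    HasDerivAt.fun_sum fun k _ ↦ ((P k).hasDerivAt u).mul (((hasDerivAt_id u).const_mul (c k)).cexp)
  rw [funext h] at hderiv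
  calc _ = ∑ k ∈ s, ((derivative (P k)).eval u * exp (c k * u) +
        (P k).eval u * (exp (c k * u) * (c k * 1))) -
        a * ∑ k ∈ s, (P k).eval u * exp (c k * u) := by
        rw [Finset.mul_sum, ← Finset.sum_sub_distrib]
        refine Finset.sum_congr rfl fun k _ ↦ ?_
        simp only [twistedDeriv_apply, one_smul, eval_add, eval_smul, smul_eq_mul]
        ring
    _ = 0 := by rw [hderiv.unique (hasDerivAt_const u 0), h, mul_zero, sub_zero]

theorem eq_zero_of_sum_eval_mul_exp_eq_zero (hc : Set.InjOn c s)
    (h : ∀ u, ∑ k ∈ s, (P k).eval u * exp (c k * u) = 0) : ∀ k ∈ s, P k = 0 := by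
  classical
  induction s using Finset.induction_on generalizing P with
  | empty => simp
  | insert a s ha ih =>
    -- Enough twisted derivatives centred at `c a` kill the `a`-th term.
    have hiter (N : ℕ) (u : ℂ) :
        ∑ k ∈ insert a s, ((twistedDeriv (1, c k - c a) ^ N) (P k)).eval u * exp (c k * u) = 0 := by
      induction N generalizing u with
      | zero => simpa using h u
      | succ N ihN => simpa only [pow_succ', Module.End.mul_apply] using
          sum_eval_twistedDeriv_mul_exp_eq_zero ihN (c a) u
    have hs : ∀ k ∈ s, P k = 0 := by
      set N := (P a).natDegree + 1
      have hkill := ih (hc.mono (by simp)) (P := fun k ↦ (twistedDeriv (1, c k - c a) ^ N) (P k))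
        fun u ↦ by simpa [Finset.sum_insert ha, twistedDeriv_pow_eq_zero (Nat.lt_succ_self _), N]
          using hiter N u
      intro k hk
      have hne : c k - c a ≠ 0 := sub_ne_zero.2 fun heq ↦
        ha (hc (by simp [hk]) (by simp) heq ▸ hk)
      refine (twistedDeriv_injective 1 hne).iterate N ?_
      rw [← Module.End.pow_apply, ← Module.End.pow_apply, map_zero]
      exact hkill k hk
    rw [Finset.forall_mem_insert]
    refine ⟨Polynomial.funext fun u ↦ ?_, hs⟩
    have hu := h u
    rw [Finset.sum_insert ha, Finset.sum_eq_zero fun k hk ↦ by rw [hs k hk]; simp, add_zero] at hu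
    simpa [exp_ne_zero] using hu

variable {E : Type*} [NormedAddCommGroup E] [NormedSpace ℂ E] (ℓ₀ ℓ : E →L[ℂ] ℂ)

/-- The exponential polynomial `x ↦ P(ℓ₀ x) e^{ℓ x}`. -/
noncomputable def expPoly (P : ℂ[X]) (x : E) : ℂ := P.eval (ℓ₀ x) * exp (ℓ x)

theorem contDiff_expPoly (P : ℂ[X]) : ContDiff ℂ ∞ (expPoly ℓ₀ ℓ P) := by
  have heval : ContDiff ℂ ∞ fun z : ℂ ↦ P.eval z := P.differentiable.contDiff
  exact (heval.comp ℓ₀.contDiff).mul ℓ.contDiff.cexp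

theorem fderiv_expPoly_apply (P : ℂ[X]) (v : E) :
    (fun x ↦ fderiv ℂ (expPoly ℓ₀ ℓ P) x v) = expPoly ℓ₀ ℓ (twistedDeriv (ℓ₀ v, ℓ v) P) := by
  funext x
  have hpoly : HasFDerivAt (fun x ↦ P.eval (ℓ₀ x)) _ x :=
    (P.hasDerivAt (ℓ₀ x)).comp_hasFDerivAt x ℓ₀.hasFDerivAt
  have h : HasFDerivAt (expPoly ℓ₀ ℓ P) _ x := hpoly.mul ℓ.hasFDerivAt.cexp
  rw [h.fderiv]
  simp only [expPoly, twistedDeriv_apply, _root_.add_apply, _root_.smul_apply,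
    smul_eq_mul, eval_add, eval_smul]
  ring

theorem dirDeriv_expPoly (l : List E) (P : ℂ[X]) :
    dirDeriv l (expPoly ℓ₀ ℓ P) =
      expPoly ℓ₀ ℓ (twistedDerivs (l.map fun v ↦ (ℓ₀ v, ℓ v)) P) := by
  induction l generalizing P with
  | nil => rfl
  | cons v _ ih => rw [dirDeriv, fderiv_expPoly_apply, ih, List.map_cons, twistedDerivs_cons_apply]

theorem eq_zero_of_dirDeriv_sum_expPoly_eq_zero {κ : Type*} [Fintype κ] {ℓ₀ : E →L[ℂ] ℂ}
    {ℓ : κ → E →L[ℂ] ℂ} {P : κ → ℂ[X]} {w : E} (h₀ : ℓ₀ w = 1)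
    (hw : Function.Injective fun k ↦ ℓ k w)
    (h : ∀ l, dirDeriv l (∑ k, expPoly ℓ₀ (ℓ k) (P k)) 0 = 0) (k : κ) : P k = 0 := by
  have hsmooth : ContDiff ℂ ∞ (∑ k, expPoly ℓ₀ (ℓ k) (P k)) :=
    contDiff_finset_sum _ fun k ↦ contDiff_expPoly ℓ₀ (ℓ k) (P k)
  have hline : Differentiable ℂ fun u : ℂ ↦ (∑ k, expPoly ℓ₀ (ℓ k) (P k)) (0 + u • w) :=
    fun u ↦ (hasDerivAt_comp_line hsmooth 0 w u).differentiableAt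
  refine eq_zero_of_sum_eval_mul_exp_eq_zero (hw.injOn (s := (Finset.univ : Finset κ)))
    (fun u ↦ ?_) k (Finset.mem_univ k)
  have hzero : (∑ k, expPoly ℓ₀ (ℓ k) (P k)) (0 + u • w) = 0 := by
    rw [← Complex.taylorSeries_eq_of_entire' 0 u hline]
    simp only [iteratedDeriv_comp_line hsmooth, zero_smul, add_zero, h, mul_zero, zero_mul,
      tsum_zero]
  simpa [Finset.sum_apply, expPoly, h₀, mul_comm u] using hzero

end ExponentialPolynomials

section Words

variable {G : Type*} [Fintype G]

/-- A word in which each letter `σ` occurs `τ σ` times. -/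
noncomputable def wordOfCount (τ : G → ℕ) : List G :=
  (∑ σ, Multiset.replicate (τ σ) σ).toList

theorem length_wordOfCount (τ : G → ℕ) : (wordOfCount τ).length = ∑ σ, τ σ := by
  simp [wordOfCount]

theorem perm_wordOfCount_count [DecidableEq G] (l : List G) :
    l.Perm (wordOfCount fun σ ↦ l.count σ) := by
  rw [← Multiset.coe_eq_coe, wordOfCount, Multiset.coe_toList]
  ext σ
  simp [Multiset.count_sum', Multiset.count_replicate]

end Words

end Baker

/-! ### The choice of parameters -/

namespace Baker

open Real (exp)

section Parameters

/-- The constant `R / (R - r) * ((r + ρ) / (R - ρ)) ^ (|A| T)` of `norm_le_of_dirDeriv_eq_zero` for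
the points of `{0, …, S - 1}`, with `ρ = r = S`. -/
noncomputable def schwarzFactor (S R T : ℕ) : ℝ :=
  (R : ℝ) / (R - S) * (((S : ℝ) + S) / (R - S)) ^ (S * T)

theorem schwarzFactor_nonneg {S R : ℕ} (h : S < R) (T : ℕ) : 0 ≤ schwarzFactor S R T := by
  have hSR : (0 : ℝ) < R - S := sub_pos.2 (mod_cast h)
  rw [schwarzFactor]
  positivity

theorem schwarzFactor_mul_pow_le {S R T N : ℕ} (hS : 0 < S) (hR : (4 * S) ^ 2 ≤ R)
    (hN : 2 * N ≤ S * T) : schwarzFactor S R T * (R : ℝ) ^ N ≤ 2 := by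
  have hR' : (4 * S : ℝ) ^ 2 ≤ R := by exact_mod_cast hR
  have hS' : (1 : ℝ) ≤ S := by exact_mod_cast hS
  have hSR : (4 * S : ℝ) ≤ R := by nlinarith
  have hdiff : (0 : ℝ) < R - S := by linarith
  have hR0 : (0 : ℝ) < R := by linarith
  have hratio : (R : ℝ) / (R - S) ≤ 2 := by
    rw [div_le_iff₀ hdiff]
    linarith
  have hbase : ((S : ℝ) + S) / (R - S) ≤ 4 * S / R := by
    rw [div_le_div_iff₀ hdiff hR0]
    nlinarith
  have hsq : (4 * S / R : ℝ) ^ 2 ≤ 1 / R := by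
    rw [div_pow, div_le_div_iff₀ (by positivity) hR0, one_mul, sq (R : ℝ)]
    gcongr
  have hpow : (((S : ℝ) + S) / (R - S)) ^ (S * T) ≤ (1 / R : ℝ) ^ N :=
    calc _ ≤ (4 * S / R : ℝ) ^ (S * T) := by gcongr
      _ ≤ (4 * S / R : ℝ) ^ (2 * N) :=
        pow_le_pow_of_le_one (by positivity) ((div_le_one hR0).2 hSR) hN
      _ ≤ (1 / R : ℝ) ^ N := by rw [pow_mul]; gcongr
  calc _ ≤ 2 * (1 / R : ℝ) ^ N * (R : ℝ) ^ N := by rw [schwarzFactor]; gcongr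
    _ = 2 := by rw [mul_assoc, ← mul_pow, one_div_mul_cancel hR0.ne', one_pow, mul_one]

/-- The integers governing Baker's construction for `D` logarithms: the auxiliary function vanishes
at the points of `{0, …, S - 1}ᴰ` to order `M ^ D`. The constant `c` bounds the given data. -/
structure Params (c D : ℕ) where
  /-- The side of the box of interpolation points. -/
  S : ℕ
  /-- The `D`-th root of the order of vanishing. -/
  M : ℕ
  S_pos : 0 < S
  M_pos : 0 < M

namespace Params

variable {c D : ℕ} (p : Params c D)

/-- The order of vanishing `T` of the auxiliary function. -/
def order : ℕ := p.M ^ D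

/-- The bound `L₀` for the degrees of the polynomial coefficients of the auxiliary function. It is
chosen, with `expDeg`, so that the system of equations has twice as many unknowns as equations. -/
def polyDeg : ℕ := 2 * p.order

/-- The bound `L` for the coordinates of the frequencies of the auxiliary function. -/
def expDeg : ℕ := p.S * p.M ^ (D - 1)

/-- A bound for the entries of the system of linear equations solved by Siegel's lemma. -/
noncomputable def entryBound : ℝ :=
  exp (c * p.expDeg * p.S) * (p.polyDeg + c * p.expDeg) ^ (D * p.order) * (c * p.S) ^ p.polyDeg

/-- A bound for the solution of the system of linear equations given by Siegel's lemma. -/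
noncomputable def coeffBound : ℝ :=
  c * (c * (p.expDeg ^ D * p.polyDeg) * p.entryBound)

/-- A bound for the conjugates of the derivatives of order `n` of the auxiliary function. -/
noncomputable def valueBound (n : ℕ) : ℝ :=
  p.expDeg ^ D * (exp (c * p.expDeg * p.S) * ((p.polyDeg + c * p.expDeg) ^ n *
    (p.polyDeg * p.coeffBound) * (c * p.S) ^ p.polyDeg))

/-- A bound for the auxiliary function on the polydisc of radius `R`. -/
noncomputable def growthBound (R : ℕ) : ℝ :=
  p.expDeg ^ D * (p.polyDeg * p.coeffBound * (c * R) ^ p.polyDeg * exp (c * p.expDeg * R))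

/-- A bound, up to the factor given by Schwarz's lemma, for the derivatives of order `n` of the
auxiliary function multiplied by a denominator of the values of its exponentials. -/
noncomputable def derivBound (n R : ℕ) : ℝ :=
  exp (c * p.expDeg * p.S) * ((c * n) ^ n * (2 ^ D * p.growthBound R))

/-- The size conditions under which all the quantities above are bounded by powers of `R ^ n`. -/
structure Admissible (n R : ℕ) : Prop where
  D_pos : 0 < D
  M_le : p.M ≤ R
  pow_le : R ^ D ≤ n
  lt_pow : n < (R + 1) ^ D
  c_add_le : c + 3 ≤ R
  sq_le : (4 * p.S) ^ 2 ≤ R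
  exp_le : exp p.S ≤ R

/-- The quantity `R ^ (e n)`, where `e` depends only on `c` and `D`, that serves as a unit in the
estimates. -/
noncomputable def scale (c D n R : ℕ) : ℝ :=
  ((R : ℝ) ^ n) ^ ((2 * D + 1) * D + 2 * D + c + 5)

variable {p}

namespace Admissible

variable {n R : ℕ} (h : p.Admissible n R)

include h

theorem three_le : (3 : ℝ) ≤ R := by
  exact_mod_cast (Nat.le_add_left 3 c).trans h.c_add_le

theorem le_n : R ≤ n := (Nat.le_self_pow h.D_pos.ne' R).trans h.pow_le

theorem n_ne_zero : n ≠ 0 := by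
  have hR := h.c_add_le
  have hRn := h.le_n
  lia

theorem le_pow : (R : ℝ) ≤ (R : ℝ) ^ n :=
  le_self_pow₀ (by linarith [h.three_le]) h.n_ne_zero

theorem three_le_pow : (3 : ℝ) ≤ (R : ℝ) ^ n := h.three_le.trans h.le_pow

theorem le_scale {x : ℝ} {a : ℕ} (ha : a ≤ (2 * D + 1) * D + 2 * D + c + 5)
    (hx : x ≤ ((R : ℝ) ^ n) ^ a) : x ≤ scale c D n R :=
  hx.trans (pow_le_pow_right₀ (by linarith [h.three_le_pow]) ha)

theorem one_le_scale : 1 ≤ scale c D n R :=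
  one_le_pow₀ (by linarith [h.three_le_pow])

theorem n_le : (n : ℝ) ≤ (R : ℝ) ^ (2 * D) := by
  have hsq : R + 1 ≤ R ^ 2 := by have := h.c_add_le; nlinarith
  have hn : n ≤ R ^ (2 * D) := by
    rw [pow_mul]
    exact h.lt_pow.le.trans (Nat.pow_le_pow_left hsq D)
  exact_mod_cast hn

theorem order_le : p.order ≤ n := (Nat.pow_le_pow_left h.M_le D).trans h.pow_le

theorem expDeg_mul_le : p.expDeg * R ≤ p.S * n :=
  calc p.S * p.M ^ (D - 1) * R ≤ p.S * R ^ (D - 1) * R := by gcongr; exact h.M_le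
    _ = p.S * R ^ D := by rw [mul_assoc, ← pow_succ, Nat.sub_add_cancel h.D_pos]
    _ ≤ p.S * n := by gcongr; exact h.pow_le

theorem S_le : p.S ≤ R := by
  have := h.sq_le
  nlinarith

theorem expDeg_le : p.expDeg ≤ n := by
  refine Nat.le_of_mul_le_mul_right (c := R) ?_ (by have := h.c_add_le; lia)
  rw [mul_comm n]
  exact h.expDeg_mul_le.trans (Nat.mul_le_mul_right n h.S_le)

theorem exp_le_scale {Y : ℕ} (hY : Y ≤ R) : exp (c * p.expDeg * Y) ≤ scale c D n R := by
  have hLY : (p.expDeg * Y : ℝ) ≤ p.S * n := by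
    exact_mod_cast (Nat.mul_le_mul_left _ hY).trans h.expDeg_mul_le
  refine h.le_scale (a := c) (by lia) ?_
  calc exp (c * p.expDeg * Y) ≤ exp ((n * c : ℕ) * p.S) := by
        refine Real.exp_le_exp.2 ?_
        push_cast
        linarith [mul_le_mul_of_nonneg_left hLY (c.cast_nonneg (α := ℝ))]
    _ = exp p.S ^ (n * c) := Real.exp_nat_mul _ _
    _ ≤ (R : ℝ) ^ (n * c) := by gcongr; exact h.exp_le
    _ = ((R : ℝ) ^ n) ^ c := pow_mul _ _ _

theorem polyDeg_le : (p.polyDeg : ℝ) ≤ 2 * n := by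
  rw [polyDeg]
  exact_mod_cast Nat.mul_le_mul_left 2 h.order_le

theorem add_pow_le_scale {m : ℕ} (hm : m ≤ D * n) :
    (p.polyDeg + c * p.expDeg : ℝ) ^ m ≤ scale c D n R := by
  have hL : (p.expDeg : ℝ) ≤ n := by exact_mod_cast h.expDeg_le
  have hc : (c + 2 : ℝ) ≤ R := by exact_mod_cast (Nat.le_succ _).trans h.c_add_le
  have hbase : (p.polyDeg + c * p.expDeg : ℝ) ≤ (R : ℝ) ^ (2 * D + 1) :=
    calc _ ≤ (c + 2) * (n : ℝ) := by
          linarith [h.polyDeg_le, mul_le_mul_of_nonneg_left hL c.cast_nonneg]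
      _ ≤ R * (R : ℝ) ^ (2 * D) := by gcongr; exact h.n_le
      _ = (R : ℝ) ^ (2 * D + 1) := by ring
  refine h.le_scale (a := (2 * D + 1) * D) (by lia) ?_
  calc _ ≤ ((R : ℝ) ^ (2 * D + 1)) ^ m := by gcongr
    _ ≤ ((R : ℝ) ^ (2 * D + 1)) ^ (D * n) :=
      pow_le_pow_right₀ (one_le_pow₀ (by linarith [h.three_le])) hm
    _ = ((R : ℝ) ^ n) ^ ((2 * D + 1) * D) := by ring

theorem c_le : c ≤ R := (Nat.le_add_right c 3).trans h.c_add_le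

theorem mul_pow_polyDeg_le_scale {Y : ℕ} (hY : Y ≤ R) :
    (c * Y : ℝ) ^ p.polyDeg ≤ scale c D n R := by
  have hY' : (Y : ℝ) ≤ R := by exact_mod_cast hY
  refine h.le_scale (a := 4) (by lia) ?_
  calc (c * Y : ℝ) ^ p.polyDeg ≤ ((R : ℝ) ^ 2) ^ p.polyDeg := by rw [sq]; gcongr; exact h.c_le
    _ ≤ ((R : ℝ) ^ 2) ^ (2 * n) :=
      pow_le_pow_right₀ (one_le_pow₀ (by linarith [h.three_le])) (Nat.mul_le_mul_left 2 h.order_le)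
    _ = ((R : ℝ) ^ n) ^ 4 := by ring

theorem n_le_pow : (n : ℝ) ≤ ((R : ℝ) ^ n) ^ (2 * D) := by
  refine h.n_le.trans ?_
  gcongr
  exact h.le_pow

theorem expDeg_pow_le_scale : (p.expDeg : ℝ) ^ D ≤ scale c D n R := by
  refine h.le_scale (a := 2 * D * D) (by nlinarith) ?_
  rw [pow_mul _ (2 * D)]
  gcongr
  exact (Nat.cast_le.2 h.expDeg_le).trans h.n_le_pow

theorem polyDeg_le_scale : (p.polyDeg : ℝ) ≤ scale c D n R := by
  refine h.le_scale (a := 2 * D + 1) (by lia) ?_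
  rw [pow_succ']
  refine h.polyDeg_le.trans ?_
  gcongr
  exacts [by linarith [h.three_le_pow], h.n_le_pow]

theorem c_le_scale : (c : ℝ) ≤ scale c D n R := by
  refine h.le_scale (a := 1) (by lia) ?_
  rw [pow_one]
  exact (Nat.cast_le.2 h.c_le).trans h.le_pow

theorem mul_self_pow_le_scale : (c * n : ℝ) ^ n ≤ scale c D n R := by
  refine h.le_scale (a := 2 * D + 1) (by lia) ?_
  calc (c * n : ℝ) ^ n ≤ (R * (R : ℝ) ^ (2 * D)) ^ n := by gcongr; exacts [h.c_le, h.n_le]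
    _ = ((R : ℝ) ^ n) ^ (2 * D + 1) := by ring

theorem two_pow_le_scale : (2 : ℝ) ^ D ≤ scale c D n R := by
  refine h.le_scale (a := D) (by lia) ?_
  gcongr
  linarith [h.three_le_pow]

theorem entryBound_le : p.entryBound ≤ scale c D n R ^ 3 := by
  have hU := h.one_le_scale
  calc p.entryBound ≤ scale c D n R * scale c D n R * scale c D n R := by
        rw [entryBound]
        gcongr
        exacts [h.exp_le_scale h.S_le, h.add_pow_le_scale (Nat.mul_le_mul_left D h.order_le),
          h.mul_pow_polyDeg_le_scale h.S_le]
    _ = scale c D n R ^ 3 := by ring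

theorem coeffBound_le : p.coeffBound ≤ scale c D n R ^ 7 := by
  have hU := h.one_le_scale
  have hA : 0 ≤ p.entryBound := by rw [entryBound]; positivity
  calc p.coeffBound ≤ scale c D n R * (scale c D n R * (scale c D n R * scale c D n R) *
        scale c D n R ^ 3) := by
        rw [coeffBound]
        gcongr
        exacts [h.c_le_scale, h.c_le_scale, h.expDeg_pow_le_scale, h.polyDeg_le_scale,
          h.entryBound_le]
    _ = scale c D n R ^ 7 := by ring

theorem valueBound_le : p.valueBound n ≤ scale c D n R ^ 12 := by
  have hU := h.one_le_scale
  have hX : 0 ≤ p.coeffBound := by rw [coeffBound, entryBound]; positivity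
  calc p.valueBound n ≤ scale c D n R * (scale c D n R * (scale c D n R *
        (scale c D n R * scale c D n R ^ 7) * scale c D n R)) := by
        rw [valueBound]
        gcongr
        exacts [h.expDeg_pow_le_scale, h.exp_le_scale h.S_le,
          h.add_pow_le_scale (Nat.le_mul_of_pos_left n h.D_pos), h.polyDeg_le_scale,
          h.coeffBound_le, h.mul_pow_polyDeg_le_scale h.S_le]
    _ = scale c D n R ^ 12 := by ring

theorem growthBound_le : p.growthBound R ≤ scale c D n R ^ 11 := by
  have hU := h.one_le_scale
  have hX : 0 ≤ p.coeffBound := by rw [coeffBound, entryBound]; positivity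
  calc p.growthBound R ≤ scale c D n R * (scale c D n R * scale c D n R ^ 7 *
        scale c D n R * scale c D n R) := by
        rw [growthBound]
        gcongr
        exacts [h.expDeg_pow_le_scale, h.polyDeg_le_scale, h.coeffBound_le,
          h.mul_pow_polyDeg_le_scale le_rfl, h.exp_le_scale le_rfl]
    _ = scale c D n R ^ 11 := by ring

theorem derivBound_mul_valueBound_pow_le (d : ℕ) :
    p.derivBound n R * p.valueBound n ^ d ≤ scale c D n R ^ (14 + 12 * d) := by
  have hU := h.one_le_scale
  have hX : 0 ≤ p.coeffBound := by rw [coeffBound, entryBound]; positivity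
  have hG : 0 ≤ p.growthBound R := by rw [growthBound]; positivity
  have hB : 0 ≤ p.valueBound n := by rw [valueBound]; positivity
  calc _ ≤ scale c D n R * (scale c D n R * (scale c D n R * scale c D n R ^ 11)) *
        (scale c D n R ^ 12) ^ d := by
        rw [derivBound]
        gcongr
        exacts [h.exp_le_scale h.S_le, h.mul_self_pow_le_scale, h.two_pow_le_scale,
          h.growthBound_le, h.valueBound_le]
    _ = scale c D n R ^ (14 + 12 * d) := by ring

theorem schwarzFactor_mul_scale_pow_lt_one {m T : ℕ}
    (hT : 2 * ((((2 * D + 1) * D + 2 * D + c + 5) * m + 1) * n) ≤ p.S * T) :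
    schwarzFactor p.S R T * scale c D n R ^ m < 1 := by
  have hsplit : (R : ℝ) ^ ((((2 * D + 1) * D + 2 * D + c + 5) * m + 1) * n) =
      scale c D n R ^ m * (R : ℝ) ^ n := by
    rw [scale]
    ring
  have hle := schwarzFactor_mul_pow_le p.S_pos h.sq_le hT
  have hSR : p.S < R := by have := h.sq_le; have := p.S_pos; nlinarith
  have hnonneg := mul_nonneg (schwarzFactor_nonneg hSR T)
    (pow_nonneg (zero_le_one.trans h.one_le_scale) m)
  rw [hsplit, ← mul_assoc] at hle
  nlinarith [h.three_le_pow]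

end Admissible

end Params

theorem exists_params (c d : ℕ) {D : ℕ} (hD : 0 < D) :
    ∃ p : Params c D, ∀ n, p.order ≤ n → ∃ R T, p.S < R ∧ D * T < n ∧
      schwarzFactor p.S R T ≤ 1 ∧
      schwarzFactor p.S R T * (p.derivBound n R * p.valueBound n ^ d) < 1 := by
  set k := ((2 * D + 1) * D + 2 * D + c + 5) * (14 + 12 * d) + 1
  set S := 4 * D * k with hS
  set M := (4 * S) ^ 2 + (c + 3) + 2 * D + ⌈exp S⌉₊ with hM
  let p : Params c D := ⟨S, M, by positivity, by lia⟩
  refine ⟨p, fun n hn ↦ ?_⟩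
  set R := D.nthRoot n
  have hnR : n < (R + 1) ^ D := Nat.lt_pow_nthRoot_add_one hD.ne' n
  have hMR : M ≤ R := Nat.lt_succ_iff.1 (lt_of_pow_lt_pow_left₀ D (by positivity) (hn.trans_lt hnR))
  have h : p.Admissible n R :=
    { D_pos := hD
      M_le := hMR
      pow_le := Nat.pow_nthRoot_le (.inl hD.ne')
      lt_pow := hnR
      c_add_le := by lia
      sq_le := show (4 * S) ^ 2 ≤ R by lia
      exp_le := (Nat.le_ceil _).trans (Nat.cast_le.2 (show ⌈exp S⌉₊ ≤ R by lia)) }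
  have hnD : n ≤ 2 * (D * ((n - 1) / D)) := by
    have hdiv := Nat.div_add_mod (n - 1) D
    have hmod := Nat.mod_lt (n - 1) hD
    have hRn := h.le_n
    lia
  have hT : 2 * (k * n) ≤ p.S * ((n - 1) / D) :=
    calc 2 * (k * n) ≤ 2 * (k * (2 * (D * ((n - 1) / D)))) := by gcongr
      _ = S * ((n - 1) / D) := by rw [hS]; ring
  have hSR : p.S < R := by have := h.sq_le; have := p.S_pos; nlinarith
  have hlt := h.schwarzFactor_mul_scale_pow_lt_one hT
  have hε := schwarzFactor_nonneg hSR ((n - 1) / D)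
  refine ⟨R, (n - 1) / D, hSR, ?_, ?_, ?_⟩
  · have hdiv := Nat.mul_div_le (n - 1) D
    have hRn := h.le_n
    lia
  · exact (le_mul_of_one_le_right hε (one_le_pow₀ h.one_le_scale)).trans hlt.le
  · exact (mul_le_mul_of_nonneg_left (h.derivBound_mul_valueBound_pow_le d) hε).trans_lt hlt

end Parameters

end Baker

/-! ### The auxiliary function -/

namespace Baker

open NumberField Polynomial
open scoped Matrix ContDiff

section AlgebraicIntegers

variable {K : Type} [Field K]

/-- The complex embedding of the ring of integers of `K` induced by an embedding of `K`. -/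
def intEmb (ψ : K →+* ℂ) : 𝓞 K →+* ℂ := ψ.comp (algebraMap (𝓞 K) K)

theorem intEmb_injective (ψ : K →+* ℂ) : Function.Injective (intEmb ψ) :=
  ψ.injective.comp RingOfIntegers.coe_injective

variable (K) in
/-- `c` is an admissible constant in Siegel's lemma over the integers of `K`, for systems with twice
as many unknowns as equations. -/
def IsSiegelConstant (c : ℕ) : Prop :=
  ∀ (α β : Type) [Fintype α] [Fintype β] [Nonempty α], Fintype.card β = 2 * Fintype.card α →
    ∀ (a : Matrix α β (𝓞 K)) (A : ℝ), 1 ≤ A → (∀ k l (ψ : K →+* ℂ), ‖intEmb ψ (a k l)‖ ≤ A) →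
      ∃ ξ : β → 𝓞 K, ξ ≠ 0 ∧ a *ᵥ ξ = 0 ∧
        ∀ l (ψ : K →+* ℂ), ‖intEmb ψ (ξ l)‖ ≤ c * (c * Fintype.card β * A)

theorem IsSiegelConstant.mono {c c' : ℕ} (h : IsSiegelConstant K c) (hc : c ≤ c') :
    IsSiegelConstant K c' := by
  intro α β _ _ _ hcard a A hA ha
  obtain ⟨ξ, hξ, haξ, hle⟩ := h α β hcard a A hA ha
  refine ⟨ξ, hξ, haξ, fun l ψ ↦ (hle l ψ).trans ?_⟩
  gcongr

variable [NumberField K]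

theorem house_le_iff {x : 𝓞 K} {B : ℝ} :
    house (x : K) ≤ B ↔ ∀ ψ : K →+* ℂ, ‖intEmb ψ x‖ ≤ B :=
  pi_norm_le_iff_of_nonempty _

theorem one_le_norm_intEmb_mul_pow {x : 𝓞 K} (hx : x ≠ 0) {B : ℝ}
    (hB : ∀ ψ : K →+* ℂ, ‖intEmb ψ x‖ ≤ B) (φ : K →+* ℂ) :
    1 ≤ ‖intEmb φ x‖ * B ^ (Module.finrank ℚ K - 1) := by
  have hnorm : (1 : ℝ) ≤ ‖Algebra.norm ℚ (x : K)‖ := by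
    rw [← Algebra.coe_norm_int, Int.norm_cast_rat, Int.norm_eq_abs]
    exact_mod_cast Int.one_le_abs (Algebra.norm_ne_zero_iff.2 hx)
  calc 1 ≤ ‖Algebra.norm ℚ (x : K)‖ := hnorm
    _ ≤ ‖intEmb φ x‖ * house (x : K) ^ (Module.finrank ℚ K - 1) :=
      norm_norm_le_norm_mul_house_pow (x : K) φ
    _ ≤ ‖intEmb φ x‖ * B ^ (Module.finrank ℚ K - 1) := by
      gcongr
      exacts [house_nonneg _, house_le_iff.2 hB]

variable (K) in
theorem exists_house_le_of_card_eq : ∃ c₁ : ℝ, ∀ (α β : Type) [Fintype α] [Fintype β] [Nonempty α],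
    Fintype.card β = 2 * Fintype.card α → ∀ a : Matrix α β (𝓞 K), a ≠ 0 →
      ∀ A : ℝ, (∀ k l, house (a k l : K) ≤ A) →
        ∃ ξ : β → 𝓞 K, ξ ≠ 0 ∧ a *ᵥ ξ = 0 ∧
          ∀ l, house (ξ l : K) ≤ c₁ * (c₁ * Fintype.card β * A) := by
  classical
  refine ⟨?c₁, fun α β _ _ _ hcard a ha A hle ↦ ?bound⟩
  case bound =>
    have hα : 0 < Fintype.card α := Fintype.card_pos
    have hexp : ((Fintype.card α : ℝ) / (Fintype.card β - Fintype.card α)) = 1 := by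
      rw [hcard, div_eq_one_iff_eq (by push_cast; ring_nf; positivity)]
      push_cast
      ring
    have hsiegel := house.exists_ne_zero_int_vec_house_le K a ha hα (by lia) rfl hle rfl
    rw [hexp] at hsiegel
    simp only [Real.rpow_one] at hsiegel
    exact hsiegel

variable (K) in
theorem exists_isSiegelConstant : ∃ c, IsSiegelConstant K c := by
  obtain ⟨c₁, hc₁⟩ := exists_house_le_of_card_eq K
  refine ⟨⌈|c₁|⌉₊ + 1, fun α β _ _ _ hcard a A hA ha ↦ ?_⟩
  set c := ⌈|c₁|⌉₊ + 1
  have hβ : 0 < Fintype.card β := by have : 0 < Fintype.card α := Fintype.card_pos; lia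
  have hβ' : (1 : ℝ) ≤ Fintype.card β := by exact_mod_cast hβ
  have hc : |c₁| ≤ c := (Nat.le_ceil _).trans (by exact_mod_cast Nat.le_succ _)
  have hc' : (1 : ℝ) ≤ c := by exact_mod_cast Nat.le_add_left 1 _
  by_cases ha0 : a = 0
  · have : Nonempty β := Fintype.card_pos_iff.1 hβ
    refine ⟨1, one_ne_zero, by rw [ha0, Matrix.zero_mulVec], fun l ψ ↦ ?_⟩
    rw [Pi.one_apply, map_one, norm_one]
    exact one_le_mul_of_one_le_of_one_le hc' (one_le_mul_of_one_le_of_one_le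
      (one_le_mul_of_one_le_of_one_le hc' hβ') hA)
  · obtain ⟨ξ, hξ, haξ, hle⟩ :=
      hc₁ α β hcard a ha0 A fun k l ↦ house_le_iff.2 (ha k l)
    refine ⟨ξ, hξ, haξ, fun l ↦ house_le_iff.1 ((hle l).trans ?_)⟩
    calc c₁ * (c₁ * Fintype.card β * A) = |c₁| * (|c₁| * Fintype.card β * A) := by
          linear_combination (-(Fintype.card β * A) : ℝ) * abs_mul_abs_self c₁
      _ ≤ c * (c * Fintype.card β * A) := by gcongr

end AlgebraicIntegers

variable {K : Type} [Field K]

/-- The data for Baker's construction of an auxiliary exponential polynomial in the variables `ι`,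
with frequencies `ℓ κ` for `κ : ι → ℕ`: derivatives along the vectors `v i`, and values at the
points of `ℕ^ι`, are (up to the denominators `denom`) the images under `φ` of algebraic integers,
whose conjugates are controlled by the constant `c`. -/
structure AuxiliaryData (φ : K →+* ℂ) (ι : Type) [Fintype ι] (c : ℕ) where
  /-- The linear form in which the polynomial coefficients are evaluated. -/
  ℓ₀ : (ι → ℂ) →L[ℂ] ℂ
  /-- The linear forms in the exponentials. -/
  ℓ : (ι → ℕ) → (ι → ℂ) →L[ℂ] ℂ
  /-- The directions of differentiation. -/
  v : ι → ι → ℂ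
  /-- The algebraic values of `ℓ₀` at the points of `ℕ^ι`. -/
  point : (ι → ℕ) → 𝓞 K
  /-- The algebraic values of `ℓ₀` and `ℓ κ` at the directions `v i`. -/
  symbol : (ι → ℕ) → ι → 𝓞 K × 𝓞 K
  /-- A common denominator of the values of the exponentials of `ℓ κ` at the points of
  `{0, …, S - 1}^ι`, for `κ` in `{0, …, L - 1}^ι`. -/
  denom (L S : ℕ) : ℂ
  /-- The values of these exponentials, multiplied by the common denominator. -/
  expValue (L S : ℕ) (κ s : ι → ℕ) : 𝓞 K
  one_le : 1 ≤ c
  isSiegelConstant : IsSiegelConstant K c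
  ℓ₀_natCast s : ℓ₀ (Nat.cast ∘ s) = intEmb φ (point s)
  norm_point_le {S : ℕ} {s} : (∀ i, s i < S) → ∀ ψ, ‖intEmb ψ (point s)‖ ≤ c * S
  ℓ_v κ i : (ℓ₀ (v i), ℓ κ (v i)) = (symbol κ i).map (intEmb φ) (intEmb φ)
  norm_symbol_fst_le κ i ψ : ‖intEmb ψ (symbol κ i).1‖ ≤ 1
  norm_symbol_snd_le {L : ℕ} {κ} : (∀ i, κ i < L) → ∀ i ψ, ‖intEmb ψ (symbol κ i).2‖ ≤ c * L
  norm_ℓ₀_le : ‖ℓ₀‖ ≤ c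
  norm_ℓ_le {L : ℕ} {κ} : (∀ i, κ i < L) → ‖ℓ κ‖ ≤ c * L
  norm_v_le i : ‖v i‖ ≤ c
  span_v : Submodule.span ℂ (Set.range v) = ⊤
  denom_ne_zero L S : denom L S ≠ 0
  norm_denom_le L S : ‖denom L S‖ ≤ Real.exp (c * L * S)
  intEmb_expValue {L S κ s} : (∀ i, κ i < L) → (∀ i, s i < S) →
    intEmb φ (expValue L S κ s) = denom L S * Complex.exp (ℓ κ (Nat.cast ∘ s))
  norm_expValue_le {L S κ s} : (∀ i, κ i < L) → (∀ i, s i < S) →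
    ∀ ψ, ‖intEmb ψ (expValue L S κ s)‖ ≤ Real.exp (c * L * S)
  exists_separating : ∃ w, ℓ₀ w = 1 ∧ Function.Injective fun κ ↦ ℓ κ w

namespace AuxiliaryData

variable {φ : K →+* ℂ} {ι : Type} [Fintype ι] {c : ℕ} (a : AuxiliaryData φ ι c)

/-- The derivative of `P(ℓ₀ x) e^{ℓ κ x}` along the word `l` at the point `s`, multiplied by the
common denominator `a.denom L S`. -/
noncomputable def term (L S : ℕ) (κ s : ι → ℕ) (l : List ι) (P : (𝓞 K)[X]) : 𝓞 K :=
  a.expValue L S κ s * (twistedDerivs (l.map (a.symbol κ)) P).eval (a.point s)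

theorem term_perm (L S : ℕ) (κ s : ι → ℕ) {l l' : List ι} (h : l.Perm l') :
    a.term L S κ s l = a.term L S κ s l' := by
  funext P
  rw [term, term, twistedDerivs_perm (h.map _)]

open scoped Classical in
theorem term_ofFn (L S : ℕ) (κ s : ι → ℕ) (l : List ι) {N : ℕ} (ξ : Fin N → 𝓞 K) :
    a.term L S κ s l (ofFn N ξ) =
      ∑ i : Fin N, a.term L S κ s l (X ^ (i : ℕ)) * ξ i := by
  simp only [term, ofFn_eq_sum_monomial, map_sum, eval_finsetSum, Finset.mul_sum,
    ← C_mul_X_pow_eq_monomial, ← smul_eq_C_mul, map_smul, eval_smul, smul_eq_mul]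
  exact Finset.sum_congr rfl fun i _ ↦ by ring

variable {L S : ℕ} {κ s : ι → ℕ} (hκ : ∀ i, κ i < L) (hs : ∀ i, s i < S)

include hκ hs

theorem intEmb_term (l : List ι) (P : (𝓞 K)[X]) :
    intEmb φ (a.term L S κ s l P) = a.denom L S *
      dirDeriv (l.map a.v) (expPoly a.ℓ₀ (a.ℓ κ) (P.map (intEmb φ))) (Nat.cast ∘ s) := by
  have hsymbol : (l.map (a.symbol κ)).map (Prod.map (intEmb φ) (intEmb φ)) =
      (l.map a.v).map fun v ↦ (a.ℓ₀ v, a.ℓ κ v) := by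
    simp only [List.map_map]
    exact List.map_congr_left fun i _ ↦ (a.ℓ_v κ i).symm
  rw [dirDeriv_expPoly, expPoly, ← hsymbol, ← map_twistedDerivs, a.ℓ₀_natCast, eval_map_apply,
    term, map_mul, a.intEmb_expValue hκ hs]
  ring

theorem norm_term_le (hS : 0 < S) (l : List ι) {P : (𝓞 K)[X]} {N : ℕ} {b : ℝ} {ψ : K →+* ℂ}
    (hP : HasLengthLE N b (P.map (intEmb ψ))) :
    ‖intEmb ψ (a.term L S κ s l P)‖ ≤
      Real.exp (c * L * S) * ((N + c * L) ^ l.length * b * (c * S) ^ N) := by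
  have hcS : (1 : ℝ) ≤ c * S := by exact_mod_cast Nat.mul_pos a.one_le hS
  have hlength : HasLengthLE N ((N + c * L) ^ l.length * b)
      ((twistedDerivs (l.map (a.symbol κ)) P).map (intEmb ψ)) := by
    rw [map_twistedDerivs]
    simpa using hP.twistedDerivs (l := (l.map (a.symbol κ)).map (Prod.map (intEmb ψ) (intEmb ψ)))
      (c₀ := c * L) (by simpa using fun i _ ↦
        ⟨a.norm_symbol_fst_le κ i ψ, a.norm_symbol_snd_le hκ i ψ⟩)
  rw [term, map_mul, norm_mul, ← eval_map_apply]
  exact mul_le_mul (a.norm_expValue_le hκ hs ψ) (hlength.norm_eval_le hcS (a.norm_point_le hs ψ))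
    (norm_nonneg _) (Real.exp_pos _).le

end AuxiliaryData

namespace Params

variable {c D : ℕ} (p : Params c D)

theorem order_pos : 0 < p.order := pow_pos p.M_pos D

theorem two_mul_card_equations (hD : 0 < D) :
    2 * (p.order ^ D * p.S ^ D) = p.expDeg ^ D * p.polyDeg := by
  have hM : (p.M ^ D) ^ D = (p.M ^ (D - 1)) ^ D * p.M ^ D := by
    rw [← mul_pow, ← pow_succ, Nat.sub_add_cancel hD]
  rw [polyDeg, expDeg, order, mul_pow, hM]
  ring

theorem one_le_entryBound (hc : 1 ≤ c) : 1 ≤ p.entryBound := by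
  have hcS : (1 : ℝ) ≤ c * p.S := by exact_mod_cast Nat.mul_pos hc p.S_pos
  have hbase : (1 : ℝ) ≤ p.polyDeg + c * p.expDeg := by
    exact_mod_cast Nat.le_add_right_of_le (Nat.mul_pos two_pos p.order_pos)
  exact one_le_mul_of_one_le_of_one_le (one_le_mul_of_one_le_of_one_le
    (Real.one_le_exp (by positivity)) (one_le_pow₀ hbase)) (one_le_pow₀ hcS)

end Params

namespace AuxiliaryData

variable {φ : K →+* ℂ} {ι : Type} [Fintype ι] [DecidableEq ι] {c : ℕ} (a : AuxiliaryData φ ι c)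

section Value

variable {L : ℕ}

/-- The function `x ↦ ∑ κ, P κ (ℓ₀ x) e^{ℓ κ x}`, for `κ` in `{0, …, L - 1}^ι`. -/
noncomputable def auxFun (P : (ι → Fin L) → (𝓞 K)[X]) : (ι → ℂ) → ℂ :=
  ∑ κ, expPoly a.ℓ₀ (a.ℓ (Fin.val ∘ κ)) ((P κ).map (intEmb φ))

/-- The derivative of `a.auxFun P` along the word `l` at the point `s`, multiplied by the common
denominator `a.denom L S`. -/
noncomputable def auxValue (S : ℕ) (P : (ι → Fin L) → (𝓞 K)[X]) (s : ι → ℕ) (l : List ι) : 𝓞 K :=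
  ∑ κ, a.term L S (Fin.val ∘ κ) s l (P κ)

variable {S : ℕ} {P : (ι → Fin L) → (𝓞 K)[X]} {s : ι → ℕ}

theorem contDiff_auxFun (P : (ι → Fin L) → (𝓞 K)[X]) : ContDiff ℂ ∞ (a.auxFun P) :=
  contDiff_finset_sum _ fun _ ↦ contDiff_expPoly _ _ _

theorem intEmb_auxValue (P : (ι → Fin L) → (𝓞 K)[X]) (hs : ∀ i, s i < S) (l : List ι) :
    intEmb φ (a.auxValue S P s l) =
      a.denom L S * dirDeriv (l.map a.v) (a.auxFun P) (Nat.cast ∘ s) := by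
  rw [auxFun, dirDeriv_sum _ _ fun _ ↦ contDiff_expPoly _ _ _, Finset.sum_apply, Finset.mul_sum,
    auxValue, map_sum]
  exact Finset.sum_congr rfl fun κ _ ↦ a.intEmb_term (fun i ↦ (κ i).2) hs l (P κ)

theorem dirDeriv_auxFun_eq_zero (hs : ∀ i, s i < S) {l : List (ι → ℂ)}
    (h : ∀ l' : List ι, l'.length = l.length → a.auxValue S P s l' = 0) :
    dirDeriv l (a.auxFun P) (Nat.cast ∘ s) = 0 := by
  refine dirDeriv_eq_zero_of_span_eq_top a.span_v (a.contDiff_auxFun P) fun l' hlen hl' ↦ ?_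
  obtain ⟨l', rfl⟩ : ∃ l'' : List ι, l''.map a.v = l' := by
    rwa [← Set.mem_range, Set.range_list_map]
  have hvalue := a.intEmb_auxValue P hs l'
  rw [h l' (by rw [← hlen, List.length_map]), map_zero] at hvalue
  exact (mul_eq_zero.1 hvalue.symm).resolve_left (a.denom_ne_zero L S)

theorem exists_auxValue_ne_zero (hP : P ≠ 0) (hS : 0 < S) :
    ∃ l s, (∀ i, s i < S) ∧ a.auxValue S P s l ≠ 0 := by
  by_contra! h
  obtain ⟨w, hw₀, hw⟩ := a.exists_separating
  refine hP (funext fun κ ↦ (Polynomial.map_eq_zero_iff (intEmb_injective φ)).1 ?_)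
  refine eq_zero_of_dirDeriv_sum_expPoly_eq_zero hw₀
    (P := fun κ ↦ (P κ).map (intEmb φ))
    (hw.comp (Fin.val_injective.comp_left)) (fun l ↦ ?_) κ
  have hzero := a.dirDeriv_auxFun_eq_zero (s := 0) (P := P) (l := l) (fun _ ↦ hS)
    fun l' _ ↦ h l' 0 fun _ ↦ hS
  rwa [show (Nat.cast ∘ (0 : ι → ℕ) : ι → ℂ) = 0 from funext fun _ ↦ Nat.cast_zero] at hzero

end Value

variable (p : Params c (Fintype.card ι))

section Siegel

/-- The system of linear equations for the coefficients of the polynomials `P κ` which expresses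
that `a.auxFun P` vanishes to high order. -/
noncomputable def coeffMatrix : Matrix ((ι → Fin p.order) × (ι → Fin p.S))
    ((ι → Fin p.expDeg) × Fin p.polyDeg) (𝓞 K) :=
  .of fun k l ↦ a.term p.expDeg p.S (Fin.val ∘ l.1) (Fin.val ∘ k.2)
    (wordOfCount (Fin.val ∘ k.1)) (X ^ (l.2 : ℕ))

omit [DecidableEq ι] in
theorem norm_coeffMatrix_le (k l) (ψ : K →+* ℂ) :
    ‖intEmb ψ (a.coeffMatrix p k l)‖ ≤ p.entryBound := by
  have hbase : (1 : ℝ) ≤ p.polyDeg + c * p.expDeg := by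
    exact_mod_cast Nat.le_add_right_of_le (Nat.mul_pos two_pos p.order_pos)
  have hlength : (wordOfCount (Fin.val ∘ k.1)).length ≤ Fintype.card ι * p.order := by
    rw [length_wordOfCount]
    simpa using Finset.sum_le_card_nsmul Finset.univ _ _ fun i _ ↦ (k.1 i).2.le
  refine (a.norm_term_le (fun i ↦ (l.1 i).2) (fun i ↦ (k.2 i).2) p.S_pos _ (N := p.polyDeg)
    (b := 1) (by simpa using HasLengthLE.X_pow l.2.2.le)).trans ?_
  rw [Params.entryBound, mul_one, mul_assoc (Real.exp _)]
  gcongr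

open scoped Classical in
theorem auxValue_ofFn (ξ : (ι → Fin p.expDeg) × Fin p.polyDeg → 𝓞 K) (τ : ι → Fin p.order)
    (s : ι → Fin p.S) {l : List ι} (hl : l.Perm (wordOfCount (Fin.val ∘ τ))) :
    a.auxValue p.S (fun κ ↦ ofFn p.polyDeg fun i ↦ ξ (κ, i)) (Fin.val ∘ s) l =
      (a.coeffMatrix p *ᵥ ξ) (τ, s) := by
  rw [Matrix.mulVec, dotProduct, Fintype.sum_prod_type, auxValue]
  refine Finset.sum_congr rfl fun κ _ ↦ ?_
  rw [a.term_perm _ _ _ _ hl, term_ofFn]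
  rfl

/-- The polynomials `P` have coefficients with small conjugates, and `a.auxFun P` vanishes to
order `p.order` on the grid `{0, …, S - 1}^ι`. -/
structure IsSolution (P : (ι → Fin p.expDeg) → (𝓞 K)[X]) : Prop where
  ne_zero : P ≠ 0
  hasLengthLE κ ψ : HasLengthLE p.polyDeg (p.polyDeg * p.coeffBound) ((P κ).map (intEmb ψ))
  auxValue_eq_zero {s l} : (∀ i, s i < p.S) → l.length < p.order → a.auxValue p.S P s l = 0

theorem exists_isSolution [Nonempty ι] : ∃ P, a.IsSolution p P := by
  classical
  have hcard := p.two_mul_card_equations Fintype.card_pos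
  have := Fin.pos_iff_nonempty.1 p.order_pos
  have := Fin.pos_iff_nonempty.1 p.S_pos
  obtain ⟨ξ, hξ, haξ, hle⟩ := a.isSiegelConstant _ _ (by simp [← hcard]) (a.coeffMatrix p)
    p.entryBound (p.one_le_entryBound a.one_le) (a.norm_coeffMatrix_le p)
  refine ⟨fun κ ↦ ofFn p.polyDeg fun i ↦ ξ (κ, i), ?_, fun κ ψ ↦ ?_, fun {s l} hs hl ↦ ?_⟩
  · refine fun hzero ↦ hξ (funext fun ⟨κ, i⟩ ↦ ?_)
    rw [← ofFn_coeff_eq_val_of_lt (fun i ↦ ξ (κ, i)) i.2]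
    exact congr_arg (coeff · i) (congr_fun hzero κ)
  · have hbound {i : ℕ} (hi : i < p.polyDeg) : ‖intEmb ψ (ξ (κ, ⟨i, hi⟩))‖ ≤ p.coeffBound := by
      simpa [Params.coeffBound] using hle (κ, ⟨i, hi⟩) ψ
    refine .of_norm_coeff_le (degree_map_le.trans_lt (ofFn_degree_lt _)) fun i ↦ ?_
    rw [coeff_map]
    obtain hi | hi := lt_or_ge i p.polyDeg
    · rw [ofFn_coeff_eq_val_of_lt _ hi]
      exact hbound hi
    · rw [ofFn_coeff_eq_zero_of_ge _ hi, map_zero, norm_zero]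
      exact (norm_nonneg _).trans (hbound (Nat.mul_pos two_pos p.order_pos))
  · have hcount i : l.count i < p.order := List.count_le_length.trans_lt hl
    have hvalue := a.auxValue_ofFn p ξ (fun i ↦ ⟨l.count i, hcount i⟩) (fun i ↦ ⟨s i, hs i⟩)
      (perm_wordOfCount_count l)
    rwa [haξ] at hvalue

end Siegel

variable {p}

namespace IsSolution

variable {a} {P : (ι → Fin p.expDeg) → (𝓞 K)[X]} (hP : a.IsSolution p P)

include hP

theorem norm_auxValue_le {s : ι → ℕ} (hs : ∀ i, s i < p.S) (l : List ι) (ψ : K →+* ℂ) :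
    ‖intEmb ψ (a.auxValue p.S P s l)‖ ≤ p.valueBound l.length := by
  rw [auxValue, map_sum]
  refine (norm_sum_le_of_le _ fun κ _ ↦
    a.norm_term_le (fun i ↦ (κ i).2) hs p.S_pos l (hP.hasLengthLE κ ψ)).trans_eq ?_
  simp [Params.valueBound]

theorem norm_auxFun_le {R : ℕ} (hR : 0 < R) {x : ι → ℂ} (hx : ‖x‖ ≤ R) :
    ‖a.auxFun P x‖ ≤ p.growthBound R := by
  have hcR : (1 : ℝ) ≤ c * R := by exact_mod_cast Nat.mul_pos a.one_le hR
  have hterm (κ : ι → Fin p.expDeg) :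
      ‖expPoly a.ℓ₀ (a.ℓ (Fin.val ∘ κ)) ((P κ).map (intEmb φ)) x‖ ≤
        p.polyDeg * p.coeffBound * (c * R) ^ p.polyDeg * Real.exp (c * p.expDeg * R) := by
    have hℓ₀ : ‖a.ℓ₀ x‖ ≤ c * R := a.ℓ₀.le_of_opNorm_le_of_le a.norm_ℓ₀_le hx
    have hℓ : ‖a.ℓ (Fin.val ∘ κ) x‖ ≤ c * p.expDeg * R :=
      (a.ℓ _).le_of_opNorm_le_of_le (a.norm_ℓ_le fun i ↦ (κ i).2) hx
    have heval := (hP.hasLengthLE κ φ).norm_eval_le hcR hℓ₀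
    rw [expPoly, norm_mul]
    exact mul_le_mul heval ((Complex.norm_exp_le_exp_norm _).trans (Real.exp_le_exp.2 hℓ))
      (norm_nonneg _) ((norm_nonneg _).trans heval)
  rw [auxFun, Finset.sum_apply]
  refine (norm_sum_le_of_le _ fun κ _ ↦ hterm κ).trans_eq ?_
  simp [Params.growthBound]

theorem norm_auxFun_le_of_auxValue_eq_zero {n R T : ℕ} (hR : p.S < R)
    (hT : Fintype.card ι * T < n) (hε : schwarzFactor p.S R T ≤ 1)
    (hzero : ∀ s l, (∀ i, s i < p.S) → l.length < n → a.auxValue p.S P s l = 0)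
    {x : ι → ℂ} (hx : ‖x‖ ≤ p.S) :
    ‖a.auxFun P x‖ ≤
      (2 ^ Fintype.card ι - 1) * schwarzFactor p.S R T * p.growthBound R := by
  have hR' : (p.S : ℝ) < R := by exact_mod_cast hR
  set A : Finset ℂ := (Finset.range p.S).image Nat.cast with hA
  have hAcard : A.card = p.S := by
    rw [hA, Finset.card_image_of_injective _ Nat.cast_injective, Finset.card_range]
  refine norm_le_of_dirDeriv_eq_zero (A := A) (T := T) (n := n) (J := Finset.univ) (ρ := p.S)
    (R := R) ?_ ?_ hR' hR' ?_ hε (a.contDiff_auxFun P) ?_ hT (fun s hs l hl ↦ ?_)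
    (fun x hx ↦ hP.norm_auxFun_le (p.S_pos.trans hR) hx) hx
  · rw [← Finset.card_pos, hAcard]
    exact p.S_pos
  · simp only [hA, Finset.forall_mem_image, Finset.mem_range, Complex.norm_natCast, Nat.cast_le]
    exact fun _ ↦ le_of_lt
  · rw [hAcard, schwarzFactor]
  · exact fun x y hxy ↦ congr_arg _ (funext fun i ↦ hxy i (Finset.mem_univ i))
  · have hs' i : ∃ m, m < p.S ∧ (m : ℂ) = s i := by simpa [hA] using hs i
    choose m hm hms using hs'
    obtain rfl : Nat.cast ∘ m = s := funext hms
    exact a.dirDeriv_auxFun_eq_zero hm fun l' hl' ↦ hzero m l' hm (hl' ▸ hl)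

theorem norm_auxValue_le_of_auxValue_eq_zero {n R T : ℕ} (hR : p.S < R)
    (hT : Fintype.card ι * T < n) (hε : schwarzFactor p.S R T ≤ 1)
    (hzero : ∀ s l, (∀ i, s i < p.S) → l.length < n → a.auxValue p.S P s l = 0)
    {s : ι → ℕ} (hs : ∀ i, s i < p.S) {l : List ι} (hl : l.length = n) :
    ‖intEmb φ (a.auxValue p.S P s l)‖ ≤ schwarzFactor p.S R T * p.derivBound n R := by
  have hn : (0 : ℝ) < n := by exact_mod_cast (Nat.zero_le _).trans_lt hT
  have hc : (0 : ℝ) < c := by exact_mod_cast a.one_le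
  have hG : 0 ≤ p.growthBound R :=
    (norm_nonneg _).trans (hP.norm_auxFun_le (x := 0) (p.S_pos.trans hR) (by simp))
  have hball {y : ι → ℂ} (hy : ‖y - Nat.cast ∘ s‖ ≤ 1) : ‖y‖ ≤ p.S := by
    have hs' : ‖(Nat.cast ∘ s : ι → ℂ)‖ ≤ p.S - 1 :=
      (pi_norm_le_iff_of_nonneg (sub_nonneg.2 (mod_cast p.S_pos))).2 fun i ↦ by
        simpa [le_sub_iff_add_le] using mod_cast hs i
    linarith [norm_le_norm_add_norm_sub' y (Nat.cast ∘ s)]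
  have hderiv := norm_dirDeriv_le (a.contDiff_auxFun P) (l := l.map a.v) (x := Nat.cast ∘ s)
    (inv_pos.2 hn) hc (by simpa using fun i _ ↦ a.norm_v_le i) fun y hy ↦
      hP.norm_auxFun_le_of_auxValue_eq_zero hR hT hε hzero
        (hball (by simpa [hl, mul_inv_cancel₀ hn.ne'] using hy))
  rw [List.length_map, hl, div_inv_eq_mul] at hderiv
  rw [a.intEmb_auxValue P hs, norm_mul, Params.derivBound]
  calc _ ≤ Real.exp (c * p.expDeg * p.S) * ((c * n) ^ n *
        ((2 ^ Fintype.card ι - 1) * schwarzFactor p.S R T * p.growthBound R)) := by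
        gcongr
        exact a.norm_denom_le _ _
    _ ≤ Real.exp (c * p.expDeg * p.S) * ((c * n) ^ n *
        (2 ^ Fintype.card ι * schwarzFactor p.S R T * p.growthBound R)) := by
        gcongr
        exacts [schwarzFactor_nonneg hR T, sub_le_self _ zero_le_one]
    _ = _ := by ring

end IsSolution

omit [DecidableEq ι] in
theorem isEmpty [NumberField K] [Nonempty ι] : IsEmpty (AuxiliaryData φ ι c) := by
  classical
  refine ⟨fun a ↦ ?_⟩
  obtain ⟨p, hp⟩ := exists_params c (Module.finrank ℚ K - 1) (Fintype.card_pos (α := ι))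
  obtain ⟨P, hP⟩ := a.exists_isSolution p
  have hne : ∃ n s l, (∀ i, s i < p.S) ∧ l.length = n ∧ a.auxValue p.S P s l ≠ 0 := by
    obtain ⟨l, s, hs, hl⟩ := a.exists_auxValue_ne_zero hP.ne_zero p.S_pos
    exact ⟨_, s, l, hs, rfl, hl⟩
  obtain ⟨s, l, hs, hl, hvalue⟩ := Nat.find_spec hne
  have hzero s l (hs : ∀ i, s i < p.S) (hl : l.length < Nat.find hne) :
      a.auxValue p.S P s l = 0 :=
    not_not.1 fun h ↦ Nat.find_min hne hl ⟨s, l, hs, rfl, h⟩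
  obtain ⟨R, T, hR, hT, hε, hlt⟩ := hp (Nat.find hne)
    (hl ▸ not_lt.1 fun h ↦ hvalue (hP.auxValue_eq_zero hs h))
  have hupper := hP.norm_auxValue_le_of_auxValue_eq_zero hR hT hε hzero hs hl
  have hlower := one_le_norm_intEmb_mul_pow hvalue (hP.norm_auxValue_le hs l) φ
  rw [hl] at hlower
  refine hlt.not_ge (hlower.trans ?_)
  rw [← mul_assoc]
  have hbound := (norm_nonneg _).trans (hP.norm_auxValue_le hs l φ)
  rw [hl] at hbound
  gcongr

end AuxiliaryData

end Baker

/-! ### Linear forms in logarithms -/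

namespace Baker

open NumberField Module
open scoped NNReal nonZeroDivisors

section Conjugates

variable {K : Type} [Field K] [NumberField K]

theorem sum_embeddings_eq_trace (x : K) : ∑ τ : K →+* ℂ, τ x = (Algebra.trace ℚ K x : ℂ) := by
  rw [← eq_ratCast (algebraMap ℚ ℂ), trace_eq_sum_embeddings]
  exact Fintype.sum_equiv (RingHom.equivRatAlgHom K ℂ) _ _ fun _ ↦ rfl

theorem exists_intEmb_eq_intEmb [IsGalois ℚ K] (φ τ : K →+* ℂ) :
    ∃ σ : 𝓞 K →+* 𝓞 K, (∀ x, intEmb φ (σ x) = intEmb τ x) ∧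
      ∀ ψ : K →+* ℂ, ∃ ψ' : K →+* ℂ, ∀ x, intEmb ψ (σ x) = intEmb ψ' x := by
  obtain ⟨σ, hσ⟩ := ComplexEmbedding.exists_comp_symm_eq_of_comp_eq (k := ℚ) φ τ
    (Subsingleton.elim _ _)
  refine ⟨RingOfIntegers.mapRingHom (σ.symm : K →+* K), fun x ↦ ?_,
    fun ψ ↦ ⟨ψ.comp (σ.symm : K →+* K), fun x ↦ rfl⟩⟩
  exact RingHom.congr_fun hσ x

/-- The automorphism of the ring of integers through which `φ` becomes `τ`. -/
noncomputable def conj [IsGalois ℚ K] (φ τ : K →+* ℂ) : 𝓞 K →+* 𝓞 K :=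
  (exists_intEmb_eq_intEmb φ τ).choose

theorem intEmb_conj [IsGalois ℚ K] (φ τ : K →+* ℂ) (x : 𝓞 K) :
    intEmb φ (conj φ τ x) = intEmb τ x :=
  (exists_intEmb_eq_intEmb φ τ).choose_spec.1 x

theorem exists_intEmb_conj_eq [IsGalois ℚ K] (φ τ ψ : K →+* ℂ) :
    ∃ ψ' : K →+* ℂ, ∀ x, intEmb ψ (conj φ τ x) = intEmb ψ' x :=
  (exists_intEmb_eq_intEmb φ τ).choose_spec.2 ψ

end Conjugates

section Lattice

variable (K : Type) [Field K] [NumberField K]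

/-- The embeddings of `K`, as an index set for an integral basis. -/
noncomputable def basisIndexEquiv : Free.ChooseBasisIndex ℤ (𝓞 K) ≃ (K →+* ℂ) :=
  Fintype.equivOfCardEq <| by
    rw [← finrank_eq_card_chooseBasisIndex, RingOfIntegers.rank, Embeddings.card]

/-- The map `ℂ^d → ∏_τ ℂ` which extends the canonical embedding of `𝓞 K`, in the coordinates given
by an integral basis. -/
noncomputable def conjCoords : ((K →+* ℂ) → ℂ) ≃L[ℂ] ((K →+* ℂ) → ℂ) :=
  ((canonicalEmbedding.latticeBasis K).reindex
    (basisIndexEquiv K)).equivFun.symm.toContinuousLinearEquiv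

/-- The operator norm of `conjCoords K`. -/
noncomputable def conjCoordsNorm : ℝ≥0 := ‖(conjCoords K).toContinuousLinearMap‖₊

variable {K}

/-- The coordinate `τ` of the canonical embedding, extended to `ℂ^d`. -/
noncomputable def coord (τ : K →+* ℂ) : ((K →+* ℂ) → ℂ) →L[ℂ] ℂ :=
  (ContinuousLinearMap.proj τ).comp (conjCoords K).toContinuousLinearMap

theorem coord_conjCoords_symm (τ : K →+* ℂ) (z : (K →+* ℂ) → ℂ) :
    coord τ ((conjCoords K).symm z) = z τ :=
  congrFun ((conjCoords K).apply_symm_apply z) τ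

theorem norm_coord_le (τ : K →+* ℂ) : ‖coord τ‖ ≤ conjCoordsNorm K :=
  ContinuousLinearMap.opNorm_le_bound _ (NNReal.coe_nonneg _) fun x ↦
    (norm_le_pi_norm _ τ).trans ((conjCoords K).toContinuousLinearMap.le_opNorm x)

/-- The algebraic integer with coordinates `s` in an integral basis. -/
noncomputable def natComb (s : (K →+* ℂ) → ℕ) : 𝓞 K :=
  ∑ τ, s τ • RingOfIntegers.basis K ((basisIndexEquiv K).symm τ)

theorem coord_natCast (s : (K →+* ℂ) → ℕ) (τ : K →+* ℂ) :
    coord τ (Nat.cast ∘ s) = intEmb τ (natComb s) := by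
  simp [coord, conjCoords, natComb, intEmb, Basis.equivFun_symm_apply,
    canonicalEmbedding.latticeBasis_apply, integralBasis_apply]

theorem natComb_injective : Function.Injective (natComb (K := K)) := by
  intro s t h
  have hcoords : conjCoords K (Nat.cast ∘ s) = conjCoords K (Nat.cast ∘ t) := by
    funext τ
    exact (coord_natCast s τ).trans (h ▸ (coord_natCast t τ).symm)
  exact Nat.cast_injective.comp_left ((conjCoords K).injective hcoords)

theorem norm_intEmb_natComb_le {S : ℕ} {s : (K →+* ℂ) → ℕ} (hs : ∀ τ, s τ < S) (ψ : K →+* ℂ) :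
    ‖intEmb ψ (natComb s)‖ ≤ conjCoordsNorm K * S := by
  have hnorm : ‖(Nat.cast ∘ s : (K →+* ℂ) → ℂ)‖ ≤ S :=
    (pi_norm_le_iff_of_nonneg S.cast_nonneg).2 fun τ ↦ by simpa using (hs τ).le
  rw [← coord_natCast]
  exact (coord ψ).le_of_opNorm_le_of_le (norm_coord_le ψ) hnorm

end Lattice

section Denominators

variable {K : Type} [Field K] [NumberField K]

theorem exists_mul_mem_range {ι : Type*} [Finite ι] (x : ι → K) :
    ∃ d : 𝓞 K, d ≠ 0 ∧ ∃ y : ι → 𝓞 K, ∀ i, (y i : K) = d * x i := by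
  obtain ⟨d, hd⟩ := IsLocalization.exist_integer_multiples_of_finite (𝓞 K)⁰ x
  choose y hy using hd
  exact ⟨d, nonZeroDivisors.coe_ne_zero d, y, hy⟩

theorem exists_norm_intEmb_le {ι : Type*} [Finite ι] (x : ι → 𝓞 K) :
    ∃ C : ℝ, 1 ≤ C ∧ ∀ i (ψ : K →+* ℂ), ‖intEmb ψ (x i)‖ ≤ C := by
  obtain ⟨C, hC⟩ := Set.finite_range (fun q : ι × (K →+* ℂ) ↦ ‖intEmb q.2 (x q.1)‖) |>.bddAbove
  exact ⟨max 1 C, le_max_left _ _, fun i ψ ↦ (hC ⟨(i, ψ), rfl⟩).trans (le_max_right _ _)⟩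

theorem exists_mul_zpow (x : K) :
    ∃ d : 𝓞 K, d ≠ 0 ∧ ∃ C : ℝ, 1 ≤ C ∧ ∃ E : ℕ → ℤ → 𝓞 K, ∀ (H : ℕ) (t : ℤ), t.natAbs ≤ H →
      (E H t : K) = d ^ H * x ^ t ∧ ∀ ψ : K →+* ℂ, ‖intEmb ψ (E H t)‖ ≤ C ^ H := by
  obtain ⟨d, hd, y, hy⟩ := exists_mul_mem_range ![1, x, x⁻¹]
  obtain ⟨C, hC, hyC⟩ := exists_norm_intEmb_le y
  have hpow (i : Fin 3) {m H : ℕ} (hm : m ≤ H) (ψ : K →+* ℂ) :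
      ‖intEmb ψ (y i ^ m * y 0 ^ (H - m))‖ ≤ C ^ H := by
    rw [map_mul, map_pow, map_pow, norm_mul, norm_pow, norm_pow, ← Nat.add_sub_cancel' hm, pow_add,
      Nat.add_sub_cancel_left]
    gcongr
    exacts [hyC i ψ, hyC 0 ψ]
  refine ⟨d, hd, C, hC, fun H t ↦ y (if 0 ≤ t then 1 else 2) ^ t.natAbs * y 0 ^ (H - t.natAbs),
    fun H t ht ↦ ⟨?_, hpow _ ht⟩⟩
  have hy0 : (y 0 : K) = d := by simpa using hy 0
  simp only [map_mul, map_pow, hy0]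
  simp only [hy]
  rw [mul_pow, mul_right_comm, ← pow_add, Nat.add_sub_cancel' ht]
  obtain ⟨m, rfl | rfl⟩ := t.eq_nat_or_neg
  · simp
  · obtain rfl | hm := m.eq_zero_or_pos
    · simp
    · simp [hm.ne']

theorem exists_mul_prod_zpow {ι : Type*} [Fintype ι] (x : ι → K) :
    ∃ d : 𝓞 K, d ≠ 0 ∧ ∃ C : ℝ, 1 ≤ C ∧ ∃ E : ℕ → (ι → ℤ) → 𝓞 K,
      ∀ (H : ℕ) (t : ι → ℤ), (∀ i, (t i).natAbs ≤ H) →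
        (E H t : K) = d ^ H * ∏ i, x i ^ t i ∧ ∀ ψ : K →+* ℂ, ‖intEmb ψ (E H t)‖ ≤ C ^ H := by
  choose d hd C hC E hE using fun i ↦ exists_mul_zpow (x i)
  refine ⟨∏ i, d i, Finset.prod_ne_zero_iff.2 fun i _ ↦ hd i, ∏ i, C i,
    Finset.one_le_prod fun i _ ↦ hC i, fun H t ↦ ∏ i, E i H (t i), fun H t ht ↦ ⟨?_, fun ψ ↦ ?_⟩⟩
  · simp only [map_prod]
    rw [← Finset.prod_pow, ← Finset.prod_mul_distrib]
    exact Finset.prod_congr rfl fun i _ ↦ (hE i H (t i) (ht i)).1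
  · simp only [map_prod, norm_prod]
    rw [← Finset.prod_pow]
    exact Finset.prod_le_prod (fun _ _ ↦ norm_nonneg _) fun i _ ↦ (hE i H (t i) (ht i)).2 ψ

end Denominators

variable {K : Type} [Field K]

/-- A nontrivial relation `∑ βᵢ log xᵢ = β₀` over `K ⊆ ℂ`, embedded by `φ`, between `ℚ`-linearly
independent logarithms of elements of `K`. -/
structure LogRelation (φ : K →+* ℂ) (I : Type*) [Fintype I] where
  /-- The elements of `K` whose logarithms are related. -/
  x : I → K
  /-- The chosen logarithms. -/
  log : I → ℂ
  /-- The coefficients of the relation. -/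
  β : I → 𝓞 K
  /-- The value of the linear combination. -/
  β₀ : 𝓞 K
  exp_log i : Complex.exp (log i) = φ (x i)
  linearIndependent : LinearIndependent ℚ log
  sum_eq : ∑ i, intEmb φ (β i) * log i = intEmb φ β₀
  ne_zero : β ≠ 0

namespace LogRelation

variable {φ : K →+* ℂ} {I : Type*} [Fintype I] (r : LogRelation φ I)

/-- The linear form in logarithms whose coefficients are conjugated by `τ`. -/
noncomputable def conjLog (τ : K →+* ℂ) : ℂ := ∑ i, intEmb τ (r.β i) * r.log i

theorem conjLog_self : r.conjLog φ = intEmb φ r.β₀ := r.sum_eq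

open scoped Classical in
/-- The direction `τ` is scaled so that `conjLog τ` becomes `0` or `1`, for `τ ≠ φ`. -/
noncomputable def scale (τ : K →+* ℂ) : ℂ :=
  if τ = φ ∨ r.conjLog τ = 0 then 1 else (r.conjLog τ)⁻¹

open scoped Classical in
/-- The algebraic integer `conjLog τ * scale τ`. -/
noncomputable def weight (τ : K →+* ℂ) : 𝓞 K :=
  if τ = φ then r.β₀ else if r.conjLog τ = 0 then 0 else 1

theorem scale_self : r.scale φ = 1 := if_pos (.inl rfl)

theorem scale_ne_zero (τ : K →+* ℂ) : r.scale τ ≠ 0 := by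
  unfold scale
  split_ifs with h
  · exact one_ne_zero
  · exact inv_ne_zero (not_or.1 h).2

theorem intEmb_weight (τ : K →+* ℂ) : intEmb φ (r.weight τ) = r.conjLog τ * r.scale τ := by
  by_cases hτ : τ = φ
  · simp [weight, scale, hτ, conjLog_self]
  · by_cases h : r.conjLog τ = 0 <;> simp [weight, scale, hτ, h]

variable [NumberField K]

theorem sum_mul_conjLog (y : K) :
    ∑ τ : K →+* ℂ, τ y * r.conjLog τ = ∑ i, (Algebra.trace ℚ K (y * r.β i) : ℂ) * r.log i := by
  simp only [conjLog, Finset.mul_sum]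
  rw [Finset.sum_comm]
  refine Finset.sum_congr rfl fun i _ ↦ ?_
  rw [← sum_embeddings_eq_trace, Finset.sum_mul]
  refine Finset.sum_congr rfl fun τ _ ↦ ?_
  rw [map_mul, mul_assoc]
  rfl

theorem exists_conjLog_ne_zero : ∃ τ, r.conjLog τ ≠ 0 ∧ (τ ≠ φ → r.conjLog φ = 0) := by
  by_cases hφ : r.conjLog φ = 0
  · suffices h : ∃ τ, r.conjLog τ ≠ 0 from h.imp fun τ hτ ↦ ⟨hτ, fun _ ↦ hφ⟩
    by_contra! hzero
    obtain ⟨i, hi⟩ := Function.ne_iff.1 r.ne_zero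
    have htrace : Algebra.trace ℚ K ((r.β i : K)⁻¹ * r.β i) = 0 := by
      refine Fintype.linearIndependent_iff.1 r.linearIndependent
        (fun j ↦ Algebra.trace ℚ K ((r.β i : K)⁻¹ * r.β j)) ?_ i
      simpa [hzero, Rat.smul_def] using (r.sum_mul_conjLog (r.β i : K)⁻¹).symm
    rw [inv_mul_cancel₀ (RingOfIntegers.coe_ne_zero_iff.2 hi), ← map_one (algebraMap ℚ K),
      Algebra.trace_algebraMap] at htrace
    exact finrank_pos.ne' (by simpa using htrace)
  · exact ⟨φ, hφ, absurd rfl⟩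

/-- The linear form in the exponential with frequency `κ`. -/
noncomputable def form (κ : (K →+* ℂ) → ℕ) : ((K →+* ℂ) → ℂ) →L[ℂ] ℂ :=
  ∑ τ, (intEmb τ (natComb κ) * r.conjLog τ) • coord τ

theorem form_apply (κ : (K →+* ℂ) → ℕ) (z : (K →+* ℂ) → ℂ) :
    r.form κ z = ∑ τ, intEmb τ (natComb κ) * r.conjLog τ * coord τ z := by
  simp [form]

theorem norm_form_le {L : ℕ} {κ : (K →+* ℂ) → ℕ} (hκ : ∀ τ, κ τ < L) :
    ‖r.form κ‖ ≤ conjCoordsNorm K ^ 2 * (∑ τ, ‖r.conjLog τ‖) * L := by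
  refine ContinuousLinearMap.opNorm_le_bound _ (by positivity) fun z ↦ ?_
  calc ‖r.form κ z‖ ≤ ∑ τ, conjCoordsNorm K * L * ‖r.conjLog τ‖ * (conjCoordsNorm K * ‖z‖) := by
        rw [form_apply]
        refine norm_sum_le_of_le _ fun τ _ ↦ ?_
        rw [norm_mul, norm_mul]
        gcongr
        exacts [norm_intEmb_natComb_le hκ τ, (coord τ).le_of_opNorm_le (norm_coord_le τ) z]
    _ = conjCoordsNorm K ^ 2 * (∑ τ, ‖r.conjLog τ‖) * L * ‖z‖ := by
        rw [← Finset.sum_mul, ← Finset.mul_sum]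
        ring

open scoped Classical in
/-- The direction of differentiation attached to `τ`. -/
noncomputable def direction (τ : K →+* ℂ) : (K →+* ℂ) → ℂ :=
  (conjCoords K).symm (Pi.single τ (r.scale τ))

open scoped Classical in
theorem coord_direction (σ τ : K →+* ℂ) :
    coord σ (r.direction τ) = if σ = τ then r.scale τ else 0 := by
  rw [direction, coord_conjCoords_symm, Pi.single_apply]

theorem form_direction (κ : (K →+* ℂ) → ℕ) (τ : K →+* ℂ) :
    r.form κ (r.direction τ) = intEmb φ (r.weight τ) * intEmb τ (natComb κ) := by
  classical
  simp only [form_apply, coord_direction, mul_ite, mul_zero, Finset.sum_ite_eq',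
    Finset.mem_univ, if_true, intEmb_weight]
  ring

theorem span_direction : Submodule.span ℂ (Set.range r.direction) = ⊤ := by
  classical
  let e := (conjCoords K).symm.toLinearEquiv
  let b := ((Pi.basisFun ℂ (K →+* ℂ)).unitsSMul fun τ ↦ Units.mk0 _ (r.scale_ne_zero τ)).map e
  have hb : ⇑b = r.direction := by
    funext τ
    simp [b, e, direction, Basis.unitsSMul_apply, Units.smul_def, ← Pi.single_smul]
  exact hb ▸ b.span_eq

theorem exists_separating :
    ∃ w, coord φ w = 1 ∧ Function.Injective fun κ ↦ r.form κ w := by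
  classical
  obtain ⟨σ, hσ, hσφ⟩ := r.exists_conjLog_ne_zero
  refine ⟨(conjCoords K).symm fun τ ↦ if τ = φ ∨ τ = σ then 1 else 0,
    by simp [coord_conjCoords_symm], ?_⟩
  have hform κ : r.form κ ((conjCoords K).symm fun τ ↦ if τ = φ ∨ τ = σ then 1 else 0) =
      intEmb σ (natComb κ) * r.conjLog σ := by
    rw [form_apply, Finset.sum_eq_single σ]
    · simp [coord_conjCoords_symm]
    · intro τ _ hτ
      rw [coord_conjCoords_symm]
      obtain rfl | hτφ := eq_or_ne τ φ
      · simp [hσφ hτ.symm]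
      · simp [hτφ, hτ]
    · simp
  simp only [hform]
  exact (mul_left_injective₀ hσ).comp ((intEmb_injective σ).comp natComb_injective)

end LogRelation

end Baker

namespace Baker

open NumberField
open Filter (atTop eventually_ge_atTop)

theorem eventually_forall_le_natCast {α : Type*} [Finite α] (f : α → ℝ) :
    ∀ᶠ c : ℕ in atTop, ∀ a, f a ≤ c :=
  Filter.eventually_all.2 fun a ↦ tendsto_natCast_atTop_atTop.eventually_ge_atTop (f a)

theorem pow_mul_mul_le_exp {x : ℝ} (hx : 0 ≤ x) {h c : ℕ} (hc : x ^ h ≤ c) (L S : ℕ) :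
    x ^ (h * L * S) ≤ Real.exp (c * L * S) := by
  calc x ^ (h * L * S) = (x ^ h) ^ (L * S) := by rw [mul_assoc, pow_mul]
    _ ≤ Real.exp c ^ (L * S) := by
        gcongr
        linarith [Real.add_one_le_exp (c : ℝ)]
    _ = Real.exp (c * L * S) := by
        rw [← Real.exp_nat_mul]
        push_cast
        ring_nf

namespace LogRelation

variable {K : Type} [Field K] [NumberField K] {φ : K →+* ℂ} {I : Type*} [Fintype I]
variable (r : LogRelation φ I)

/-- The exponent of `x i` in `exp (form κ s)`. -/
noncomputable def exponent (κ s : (K →+* ℂ) → ℕ) (i : I) : ℤ :=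
  Algebra.trace ℤ (𝓞 K) (natComb κ * natComb s * r.β i)

theorem exp_form_natCast (κ s : (K →+* ℂ) → ℕ) :
    Complex.exp (r.form κ (Nat.cast ∘ s)) = φ (∏ i, r.x i ^ r.exponent κ s i) := by
  have hform : r.form κ (Nat.cast ∘ s) = ∑ i, (r.exponent κ s i : ℂ) * r.log i := by
    have h := r.sum_mul_conjLog (natComb κ * natComb s : 𝓞 K)
    simp only [← map_mul, ← Algebra.coe_trace_int, Rat.cast_intCast] at h
    rw [form_apply]
    refine (Finset.sum_congr rfl fun τ _ ↦ ?_).trans h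
    rw [coord_natCast, mul_right_comm, ← map_mul]
    rfl
  rw [hform, Complex.exp_sum, map_prod]
  exact Finset.prod_congr rfl fun i _ ↦ by rw [Complex.exp_int_mul, r.exp_log, map_zpow₀]

theorem natAbs_exponent_le {L S : ℕ} {κ s : (K →+* ℂ) → ℕ} (hκ : ∀ τ, κ τ < L)
    (hs : ∀ τ, s τ < S) {i : I} {h : ℕ}
    (hh : conjCoordsNorm K ^ 2 * ∑ ψ, ‖intEmb ψ (r.β i)‖ ≤ h) :
    (r.exponent κ s i).natAbs ≤ h * L * S := by
  have htrace : ((r.exponent κ s i : ℤ) : ℂ) =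
      ∑ ψ, intEmb ψ (natComb κ) * intEmb ψ (natComb s) * intEmb ψ (r.β i) := by
    rw [exponent, ← Rat.cast_intCast, Algebra.coe_trace_int, ← sum_embeddings_eq_trace]
    simp [intEmb]
  have hle : ((r.exponent κ s i).natAbs : ℝ) ≤ h * L * S := by
    calc ((r.exponent κ s i).natAbs : ℝ) = ‖((r.exponent κ s i : ℤ) : ℂ)‖ := by
          rw [Complex.norm_intCast, Nat.cast_natAbs, Int.cast_abs]
      _ ≤ ∑ ψ, conjCoordsNorm K * L * (conjCoordsNorm K * S) * ‖intEmb ψ (r.β i)‖ := by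
          rw [htrace]
          refine norm_sum_le_of_le _ fun ψ _ ↦ ?_
          rw [norm_mul, norm_mul]
          gcongr
          exacts [norm_intEmb_natComb_le hκ ψ, norm_intEmb_natComb_le hs ψ]
      _ = conjCoordsNorm K ^ 2 * (∑ ψ, ‖intEmb ψ (r.β i)‖) * L * S := by
          rw [← Finset.mul_sum]
          ring
      _ ≤ h * L * S := by gcongr
  exact_mod_cast hle

theorem exists_expValue :
    ∃ (d : ℕ → ℕ → ℂ) (E : ℕ → ℕ → ((K →+* ℂ) → ℕ) → ((K →+* ℂ) → ℕ) → 𝓞 K),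
      (∀ L S, d L S ≠ 0) ∧ ∀ᶠ c : ℕ in atTop, (∀ L S, ‖d L S‖ ≤ Real.exp (c * L * S)) ∧
        ∀ L S κ s, (∀ τ, κ τ < L) → (∀ τ, s τ < S) →
          intEmb φ (E L S κ s) = d L S * Complex.exp (r.form κ (Nat.cast ∘ s)) ∧
            ∀ ψ, ‖intEmb ψ (E L S κ s)‖ ≤ Real.exp (c * L * S) := by
  obtain ⟨d, hd, C, hC, E, hE⟩ := exists_mul_prod_zpow r.x
  obtain ⟨h, hh⟩ := (eventually_forall_le_natCast fun i ↦
    conjCoordsNorm K ^ 2 * ∑ ψ, ‖intEmb ψ (r.β i)‖).exists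
  refine ⟨fun L S ↦ intEmb φ d ^ (h * L * S), fun L S κ s ↦ E (h * L * S) (r.exponent κ s),
    fun L S ↦ pow_ne_zero _ ((map_ne_zero_iff _ (intEmb_injective φ)).2 hd), ?_⟩
  filter_upwards [eventually_forall_le_natCast ![‖intEmb φ d‖ ^ h, C ^ h]] with c hc
  refine ⟨fun L S ↦ ?_, fun L S κ s hκ hs ↦ ?_⟩
  · rw [norm_pow]
    exact pow_mul_mul_le_exp (norm_nonneg _) (hc 0) L S
  · obtain ⟨hval, hnorm⟩ :=
      hE (h * L * S) (r.exponent κ s) fun i ↦ r.natAbs_exponent_le hκ hs (hh i)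
    refine ⟨?_, fun ψ ↦ (hnorm ψ).trans (pow_mul_mul_le_exp (zero_le_one.trans hC) (hc 1) L S)⟩
    rw [exp_form_natCast, ← map_pow]
    exact (congrArg φ hval).trans (by simp [intEmb])

variable [IsGalois ℚ K]

open scoped Classical in
/-- The values at `direction τ` of the linear forms `coord φ` and `form κ`. -/
noncomputable def symbol (κ : (K →+* ℂ) → ℕ) (τ : K →+* ℂ) : 𝓞 K × 𝓞 K :=
  (if φ = τ then 1 else 0, r.weight τ * conj φ τ (natComb κ))

theorem map_symbol (κ : (K →+* ℂ) → ℕ) (τ : K →+* ℂ) :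
    (r.symbol κ τ).map (intEmb φ) (intEmb φ) =
      (coord φ (r.direction τ), r.form κ (r.direction τ)) := by
  rw [coord_direction, form_direction, symbol, Prod.map_apply, map_mul, intEmb_conj]
  obtain rfl | hτ := eq_or_ne φ τ
  · simp [scale_self]
  · simp [hτ]

theorem norm_symbol_fst_le (κ : (K →+* ℂ) → ℕ) (τ ψ : K →+* ℂ) :
    ‖intEmb ψ (r.symbol κ τ).1‖ ≤ 1 := by
  unfold symbol
  split_ifs <;> simp

theorem norm_symbol_snd_le {L : ℕ} {κ : (K →+* ℂ) → ℕ} (hκ : ∀ τ, κ τ < L) (τ ψ : K →+* ℂ) :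
    ‖intEmb ψ (r.symbol κ τ).2‖ ≤ ‖intEmb ψ (r.weight τ)‖ * conjCoordsNorm K * L := by
  obtain ⟨ψ', hψ'⟩ := exists_intEmb_conj_eq φ τ ψ
  rw [symbol, map_mul, norm_mul, hψ', mul_assoc]
  gcongr
  exact norm_intEmb_natComb_le hκ ψ'

include r in
theorem exists_auxiliaryData : ∃ c, Nonempty (AuxiliaryData φ (K →+* ℂ) c) := by
  classical
  obtain ⟨c₀, hc₀⟩ := exists_isSiegelConstant K
  obtain ⟨d, E, hd, hE⟩ := r.exists_expValue
  obtain ⟨c, ⟨hdc, hEc⟩, hone, hsiegel, hc, hweight, hdir⟩ := (hE.and <|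
    (eventually_ge_atTop 1).and <| (eventually_ge_atTop c₀).and <|
    (eventually_forall_le_natCast ![(conjCoordsNorm K : ℝ),
      conjCoordsNorm K ^ 2 * ∑ τ, ‖r.conjLog τ‖]).and <|
    (eventually_forall_le_natCast fun p : (K →+* ℂ) × (K →+* ℂ) ↦
      ‖intEmb p.2 (r.weight p.1)‖ * conjCoordsNorm K).and <|
    eventually_forall_le_natCast fun τ ↦ ‖r.direction τ‖).exists
  exact ⟨c, ⟨{
    ℓ₀ := coord φ
    ℓ := r.form
    v := r.direction
    point := natComb
    symbol := r.symbol
    denom := d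
    expValue := E
    one_le := hone
    isSiegelConstant := hc₀.mono hsiegel
    ℓ₀_natCast := fun s ↦ coord_natCast s φ
    norm_point_le := fun hs ψ ↦ (norm_intEmb_natComb_le hs ψ).trans (by gcongr; exact hc 0)
    ℓ_v := fun κ τ ↦ (r.map_symbol κ τ).symm
    norm_symbol_fst_le := r.norm_symbol_fst_le
    norm_symbol_snd_le := fun hκ τ ψ ↦ (r.norm_symbol_snd_le hκ τ ψ).trans
      (by gcongr; exact hweight (τ, ψ))
    norm_ℓ₀_le := (norm_coord_le φ).trans (hc 0)
    norm_ℓ_le := fun hκ ↦ (r.norm_form_le hκ).trans (by gcongr; exact hc 1)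
    norm_v_le := hdir
    span_v := r.span_direction
    denom_ne_zero := hd
    norm_denom_le := hdc
    intEmb_expValue := fun hκ hs ↦ (hEc _ _ _ _ hκ hs).1
    norm_expValue_le := fun hκ hs ↦ (hEc _ _ _ _ hκ hs).2
    exists_separating := r.exists_separating }⟩⟩

end LogRelation

theorem exists_isGalois_of_isIntegral {F L : Type*} [Field F] [PerfectField F] [Field L]
    [Algebra F L] [IsAlgClosed L] {S : Set L} [Finite S] (hS : ∀ x ∈ S, IsIntegral F x) :
    ∃ E : IntermediateField F L, FiniteDimensional F E ∧ IsGalois F E ∧ S ⊆ E := by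
  let A := IntermediateField.adjoin F S
  have : FiniteDimensional F A := IntermediateField.finiteDimensional_adjoin hS
  have hnormal : Normal F (IntermediateField.normalClosure F A L) :=
    (Algebra.IsAlgebraic.isNormalClosure_normalClosure fun _ ↦ IsAlgClosed.splits _).normal
  exact ⟨IntermediateField.normalClosure F A L, inferInstance, ⟨⟩,
    (IntermediateField.subset_adjoin F S).trans A.le_normalClosure⟩

/-- **Baker's theorem**. -/
theorem eq_zero_of_isAlgebraic_sum_mul {ι : Type*} [Fintype ι] {l β : ι → ℂ}
    (hl : LinearIndependent ℚ l) (hexp : ∀ i, IsAlgebraic ℚ (Complex.exp (l i)))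
    (hβ : ∀ i, IsAlgebraic ℚ (β i)) (hsum : IsAlgebraic ℚ (∑ i, β i * l i)) (i : ι) :
    β i = 0 := by
  obtain ⟨K, hK, hgalois, hmem⟩ := exists_isGalois_of_isIntegral (F := ℚ)
    (S := Set.range β ∪ Set.range (Complex.exp ∘ l) ∪ {∑ i, β i * l i}) (by
      rintro _ ((⟨i, rfl⟩ | ⟨i, rfl⟩) | rfl)
      exacts [(hβ i).isIntegral, (hexp i).isIntegral, hsum.isIntegral])
  have : NumberField K := ⟨⟩
  have : IsGalois ℚ K := by
    convert hgalois
    exact Subsingleton.elim _ _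
  have hβK i : β i ∈ K := hmem (.inl (.inl ⟨i, rfl⟩))
  obtain ⟨d, hd, y, hy⟩ := exists_mul_mem_range fun o : Option ι ↦
    o.elim (⟨∑ i, β i * l i, hmem (.inr rfl)⟩ : K) fun i ↦ ⟨β i, hβK i⟩
  let φ : K →+* ℂ := K.val
  have hφ {o : Option ι} : intEmb φ (y o) = intEmb φ d * _ :=
    (congrArg φ (hy o)).trans (map_mul φ _ _)
  suffices h : (fun i ↦ y (some i)) = 0 by
    have hi := hφ (o := some i)
    rw [congrFun h i, Pi.zero_apply, map_zero, eq_comm, mul_eq_zero,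
      map_eq_zero_iff _ (intEmb_injective φ)] at hi
    exact hi.resolve_left hd
  by_contra hne
  let r : LogRelation φ ι :=
    { x := fun i ↦ ⟨Complex.exp (l i), hmem (.inl (.inr ⟨i, rfl⟩))⟩
      log := l
      β := fun i ↦ y (some i)
      β₀ := y none
      exp_log := fun _ ↦ rfl
      linearIndependent := hl
      sum_eq := by
        simp only [hφ, mul_assoc, ← Finset.mul_sum]
        rfl
      ne_zero := hne }
  obtain ⟨c, ⟨a⟩⟩ := r.exists_auxiliaryData
  exact AuxiliaryData.isEmpty.false a

theorem eq_sum_smul_of_ker_linearCombination_le {R ι κ V W : Type*} [CommRing R] [Fintype ι]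
    [Fintype κ] [AddCommGroup V] [Module R V] [AddCommGroup W] [Module R W] {v : ι → V} {w : ι → W}
    (hker : LinearMap.ker (Fintype.linearCombination R v) ≤
      LinearMap.ker (Fintype.linearCombination R w))
    {a : κ → ι} {r : κ → R} {i : ι} (hv : v i = ∑ k, r k • v (a k)) :
    w i = ∑ k, r k • w (a k) := by
  classical
  have hmem : Pi.single i 1 - ∑ k, r k • Pi.single (a k) (1 : R) ∈
      LinearMap.ker (Fintype.linearCombination R v) := by
    simp [Fintype.linearCombination_apply_single, hv]
  simpa [Fintype.linearCombination_apply_single, sub_eq_zero] using hker hmem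

theorem sum_mul_eq_zero_of_ker_le {ι : Type*} [Fintype ι] {l m β : ι → ℂ}
    (hexp : ∀ i, IsAlgebraic ℚ (Complex.exp (l i))) (hβ : ∀ i, IsAlgebraic ℚ (β i))
    (hsum : IsAlgebraic ℚ (∑ i, β i * l i))
    (hker : LinearMap.ker (Fintype.linearCombination ℚ l) ≤
      LinearMap.ker (Fintype.linearCombination ℚ m)) :
    ∑ i, β i * m i = 0 := by
  obtain ⟨κ, a, hinj, hspan, hli⟩ := exists_linearIndependent' ℚ l
  have : Finite κ := Finite.of_injective a hinj
  have : Fintype κ := Fintype.ofFinite κ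
  have hmem (i : ι) : ∃ r : κ → ℚ, ∑ k, r k • l (a k) = l i :=
    (Submodule.mem_span_range_iff_exists_fun ℚ).1 (hspan ▸ Submodule.subset_span ⟨i, rfl⟩)
  choose r hr using hmem
  have hexpand {x : ι → ℂ} (hx : ∀ i, x i = ∑ k, r i k • x (a k)) :
      ∑ i, β i * x i = ∑ k, (∑ i, β i * r i k) * x (a k) := by
    simp_rw [Finset.sum_mul]
    rw [Finset.sum_comm]
    refine Finset.sum_congr rfl fun i _ ↦ ?_
    rw [hx, Finset.mul_sum]
    exact Finset.sum_congr rfl fun k _ ↦ by rw [Rat.smul_def]; ring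
  have hcoeff := eq_zero_of_isAlgebraic_sum_mul hli (fun k ↦ hexp (a k))
    (fun k ↦ mem_algebraicClosure_iff.1 <| sum_mem fun i _ ↦
      mem_algebraicClosure_iff.2 ((hβ i).mul (isAlgebraic_ratCast ℚ (r i k))))
    (hexpand (fun i ↦ (hr i).symm) ▸ hsum)
  rw [hexpand (x := m) fun i ↦ eq_sum_smul_of_ker_linearCombination_le hker (hr i).symm]
  exact Finset.sum_eq_zero fun k _ ↦ by rw [hcoeff, zero_mul]

end Baker

/-! ### Logarithms of cyclotomic numbers -/

namespace HurwitzLog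

open Filter Topology HurwitzZeta

section SummationByParts

theorem hasSum_pow_mul_sub {z E : ℂ} {u : ℕ → ℂ} (hu : u 0 = 0)
    (h : HasSum (fun n ↦ z ^ n * u n) E) :
    HasSum (fun n ↦ z ^ (n + 1) * (u (n + 1) - u n)) ((1 - z) * E) := by
  have hshift : HasSum (fun n ↦ z ^ (n + 1) * u (n + 1)) E := by
    simpa [hu] using (hasSum_nat_add_iff' (f := fun n ↦ z ^ n * u n) 1).2 h
  rw [one_sub_mul]
  exact (hshift.sub (h.mul_left z)).congr_fun fun n ↦ by ring

/-- Summation by parts makes a power series dominated up to the boundary of its disc of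
convergence. -/
theorem one_sub_mul_eq_tsum_of_tendsto {T : Type*} {l : Filter T} [l.NeBot] [l.IsCountablyGenerated]
    {z E : ℂ} {w e : T → ℂ} {u : T → ℕ → ℂ} {v : ℕ → ℂ} {bound : ℕ → ℝ}
    (hbound : Summable bound) (hw : Tendsto w l (𝓝 z)) (he : Tendsto e l (𝓝 E))
    (hu : ∀ n, Tendsto (u · n) l (𝓝 (v n))) (hw_le : ∀ᶠ t in l, ‖w t‖ ≤ 1)
    (hu_le : ∀ᶠ t in l, ∀ n, ‖u t (n + 1) - u t n‖ ≤ bound n)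
    (hsum : ∀ᶠ t in l, u t 0 = 0 ∧ HasSum (fun n ↦ w t ^ n * u t n) (e t)) :
    (1 - z) * E = ∑' n, z ^ (n + 1) * (v (n + 1) - v n) := by
  have hlim : Tendsto (fun t ↦ ∑' n, w t ^ (n + 1) * (u t (n + 1) - u t n)) l
      (𝓝 (∑' n, z ^ (n + 1) * (v (n + 1) - v n))) := by
    refine tendsto_tsum_of_dominated_convergence hbound
      (fun n ↦ (hw.pow _).mul ((hu (n + 1)).sub (hu n))) ?_
    filter_upwards [hw_le, hu_le] with t hwt hut n
    rw [norm_mul, norm_pow]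
    exact (mul_le_of_le_one_left (norm_nonneg _) (pow_le_one₀ (norm_nonneg _) hwt)).trans (hut n)
  refine tendsto_nhds_unique ((tendsto_const_nhds.sub hw).mul he) (hlim.congr' ?_)
  filter_upwards [hsum] with t ht
  exact (hasSum_pow_mul_sub ht.1 ht.2).tsum_eq

theorem one_div_rpow_sub_le {x s : ℝ} (hx : 1 ≤ x) (hs : 1 ≤ s) :
    1 / x ^ s - 1 / (x + 1) ^ s ≤ s / (x + 1) * (1 / x) := by
  have hx0 : 0 < x := by linarith
  have hbernoulli : 1 - s / (x + 1) ≤ (x / (x + 1)) ^ s := by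
    have hle : -1 ≤ -1 / (x + 1) := by
      rw [neg_div, neg_le_neg_iff, div_le_one (by linarith)]
      linarith
    have h := one_add_mul_self_le_rpow_one_add hle hs
    rw [show 1 + -1 / (x + 1) = x / (x + 1) by field_simp; ring] at h
    calc 1 - s / (x + 1) = 1 + s * (-1 / (x + 1)) := by ring
      _ ≤ _ := h
  rw [Real.div_rpow hx0.le (by linarith)] at hbernoulli
  have hxs : x ≤ x ^ s := by simpa using Real.rpow_le_rpow_of_exponent_le hx hs
  calc 1 / x ^ s - 1 / (x + 1) ^ s = (1 - x ^ s / (x + 1) ^ s) * (1 / x ^ s) := by field_simp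
    _ ≤ s / (x + 1) * (1 / x) := by gcongr; linarith

theorem norm_one_div_cpow_succ_sub_le (n : ℕ) {s : ℝ} (hs : 1 ≤ s) (hs' : s ≤ 2) :
    ‖1 / ((n + 1 : ℕ) : ℂ) ^ (s : ℂ) - 1 / (n : ℂ) ^ (s : ℂ)‖ ≤ 4 / ((n + 1 : ℕ) : ℝ) ^ 2 := by
  have hreal (m : ℕ) : 1 / (m : ℂ) ^ (s : ℂ) = ((1 / (m : ℝ) ^ s : ℝ) : ℂ) := by
    rw [Complex.ofReal_div, Complex.ofReal_cpow (by positivity)]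
    simp
  rw [hreal, hreal, ← Complex.ofReal_sub, Complex.norm_real, Real.norm_eq_abs, abs_sub_comm]
  rcases Nat.eq_zero_or_pos n with rfl | hn
  · simp [Real.zero_rpow (by linarith : s ≠ 0)]
  have hn1 : (1 : ℝ) ≤ n := by exact_mod_cast hn
  have hanti : 1 / ((n : ℝ) + 1) ^ s ≤ 1 / (n : ℝ) ^ s := by gcongr; linarith
  push_cast
  rw [abs_of_nonneg (by linarith)]
  calc 1 / (n : ℝ) ^ s - 1 / ((n : ℝ) + 1) ^ s ≤ s / (n + 1) * (1 / n) :=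
        one_div_rpow_sub_le hn1 hs
    _ ≤ 2 / (n + 1) * (1 / n) := by gcongr
    _ ≤ 4 / ((n : ℝ) + 1) ^ 2 := by
        rw [div_mul_div_comm, div_le_div_iff₀ (by positivity) (by positivity)]
        nlinarith

theorem summable_four_div_succ_sq : Summable fun n : ℕ ↦ 4 / ((n + 1 : ℕ) : ℝ) ^ 2 :=
  (((summable_nat_add_iff 1).2 (Real.summable_one_div_nat_pow.2 one_lt_two)).mul_left 4).congr
    fun n ↦ by ring

end SummationByParts

section ValueAtOne

open ComplexOrder in
theorem one_sub_mem_slitPlane {z : ℂ} (hz : ‖z‖ ≤ 1) (hz1 : z ≠ 1) :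
    1 - z ∈ Complex.slitPlane := by
  rw [Complex.mem_slitPlane_iff_not_le_zero, sub_nonpos, Complex.le_def]
  rintro ⟨hre, him⟩
  exact hz1 (Complex.ext (((Complex.re_le_norm z).trans hz).antisymm hre) him.symm)

theorem one_sub_mul_neg_log_eq_tsum {z : ℂ} (hz : ‖z‖ = 1) (hz1 : z ≠ 1) :
    (1 - z) * -Complex.log (1 - z) =
      ∑' n : ℕ, z ^ (n + 1) * (1 / ((n + 1 : ℕ) : ℂ) - 1 / (n : ℂ)) := by
  have hw : Tendsto (fun r : ℝ ↦ (r : ℂ) * z) (𝓝[<] 1) (𝓝 z) := by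
    have : Tendsto (fun r : ℝ ↦ (r : ℂ) * z) (𝓝 1) (𝓝 ((1 : ℝ) * z)) :=
      Continuous.tendsto (by fun_prop) 1
    simpa using this.mono_left nhdsWithin_le_nhds
  have hnorm : ∀ᶠ r : ℝ in 𝓝[<] 1, ‖(r : ℂ) * z‖ < 1 := by
    filter_upwards [nhdsWithin_le_nhds (lt_mem_nhds one_pos), self_mem_nhdsWithin] with r hr0 hr1
    rwa [norm_mul, hz, mul_one, Complex.norm_real, Real.norm_of_nonneg (le_of_lt hr0)]
  refine one_sub_mul_eq_tsum_of_tendsto (u := fun _ n ↦ 1 / (n : ℂ)) (v := fun n ↦ 1 / (n : ℂ))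
    summable_four_div_succ_sq hw
    ((tendsto_const_nhds.sub hw).clog (one_sub_mem_slitPlane hz.le hz1)).neg
    (fun _ ↦ tendsto_const_nhds) (hnorm.mono fun _ ↦ le_of_lt)
    (.of_forall fun _ n ↦ by simpa using norm_one_div_cpow_succ_sub_le n le_rfl one_le_two) ?_
  filter_upwards [hnorm] with r hr
  exact ⟨by simp, by simpa [div_eq_mul_inv] using Complex.hasSum_taylorSeries_neg_log hr⟩

theorem tendsto_one_div_natCast_cpow_one (n : ℕ) :
    Tendsto (fun s : ℝ ↦ 1 / (n : ℂ) ^ (s : ℂ)) (𝓝 1) (𝓝 (1 / (n : ℂ))) := by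
  rcases eq_or_ne n 0 with rfl | hn
  · rw [Nat.cast_zero, div_zero]
    refine tendsto_const_nhds.congr' ?_
    filter_upwards [lt_mem_nhds one_pos] with s hs
    simp [hs.ne']
  · have hn' : (n : ℂ) ≠ 0 := Nat.cast_ne_zero.2 hn
    have hcpow : Tendsto (fun s : ℝ ↦ (n : ℂ) ^ (s : ℂ)) (𝓝 1) (𝓝 ((n : ℂ) ^ (1 : ℂ))) :=
      ((continuousAt_const_cpow hn').tendsto (x := (1 : ℂ))).comp
        (Complex.continuous_ofReal.tendsto' 1 1 Complex.ofReal_one)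
    rw [Complex.cpow_one] at hcpow
    exact tendsto_const_nhds.div hcpow hn'

theorem one_sub_mul_expZeta_one_eq_tsum {a : ℝ} (ha : (a : UnitAddCircle) ≠ 0) {z : ℂ}
    (hz : z = Complex.exp (2 * π * Complex.I * a)) :
    (1 - z) * expZeta a 1 = ∑' n : ℕ, z ^ (n + 1) * (1 / ((n + 1 : ℕ) : ℂ) - 1 / (n : ℂ)) := by
  have hnorm : ‖z‖ = 1 := by
    rw [hz, Complex.norm_exp]
    simp
  have hcoe : Tendsto (fun s : ℝ ↦ (s : ℂ)) (𝓝[>] 1) (𝓝 1) :=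
    (Complex.continuous_ofReal.tendsto' 1 1 Complex.ofReal_one).mono_left nhdsWithin_le_nhds
  refine one_sub_mul_eq_tsum_of_tendsto (u := fun (s : ℝ) n ↦ 1 / (n : ℂ) ^ (s : ℂ))
    summable_four_div_succ_sq tendsto_const_nhds
    (((differentiable_expZeta_of_ne_zero ha).continuous.tendsto 1).comp hcoe)
    (fun n ↦ (tendsto_one_div_natCast_cpow_one n).mono_left nhdsWithin_le_nhds)
    (.of_forall fun _ ↦ hnorm.le) ?_ ?_
  · filter_upwards [nhdsWithin_le_nhds (gt_mem_nhds one_lt_two), self_mem_nhdsWithin]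
      with s hs2 hs1 n
    exact norm_one_div_cpow_succ_sub_le n (le_of_lt hs1) (le_of_lt hs2)
  · filter_upwards [self_mem_nhdsWithin] with s (hs1 : 1 < s)
    have hs0 : (s : ℂ) ≠ 0 := by exact_mod_cast (by linarith : s ≠ 0)
    refine ⟨by simp [hs0], ?_⟩
    refine (hasSum_expZeta_of_one_lt_re a (s := s) (by simpa using hs1)).congr_fun fun n ↦ ?_
    rw [hz, ← Complex.exp_nat_mul]
    ring_nf

theorem expZeta_one {a : ℝ} (ha : (a : UnitAddCircle) ≠ 0) {z : ℂ}
    (hz : z = Complex.exp (2 * π * Complex.I * a)) (hz1 : z ≠ 1) :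
    expZeta a 1 = -Complex.log (1 - z) := by
  have hnorm : ‖z‖ = 1 := by
    rw [hz, Complex.norm_exp]
    simp
  refine mul_left_cancel₀ (sub_ne_zero.2 hz1.symm) ?_
  rw [one_sub_mul_expZeta_one_eq_tsum ha hz, one_sub_mul_neg_log_eq_tsum hnorm hz1]

end ValueAtOne

section DerivativeAtZero

variable {a : UnitAddCircle}

theorem ne_neg_natCast_of_re_pos {s : ℂ} (hs : 0 < s.re) (m : ℕ) : s ≠ -(m : ℂ) := by
  rintro rfl
  simp at hs
  linarith [m.cast_nonneg (α := ℝ)]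

theorem hasDerivAt_hurwitzZetaEven_one_sub (ha : a ≠ 0) :
    HasDerivAt (fun s ↦ hurwitzZetaEven a (1 - s)) (-(cosZeta a 1 / 2)) 1 := by
  have hpi : (π : ℂ) ≠ 0 := Complex.ofReal_ne_zero.2 Real.pi_ne_zero
  have hcos : HasDerivAt (fun s : ℂ ↦ Complex.cos (π * s / 2)) (-(π / 2)) 1 := by
    simpa using (((hasDerivAt_id (1 : ℂ)).const_mul (π : ℂ)).div_const 2).ccos
  have hcofactor : DifferentiableAt ℂ
      (fun s : ℂ ↦ 2 * (2 * π : ℂ) ^ (-s) * Complex.Gamma s * cosZeta a s) 1 := by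
    have hgamma := Complex.differentiableAt_Gamma 1 (ne_neg_natCast_of_re_pos (by simp))
    have hpow : DifferentiableAt ℂ (fun s : ℂ ↦ (2 * π : ℂ) ^ (-s)) 1 :=
      (differentiable_id.neg.differentiableAt).const_cpow (Or.inl (by simp))
    exact ((hpow.const_mul 2).mul hgamma).mul (differentiable_cosZeta_of_ne_zero ha 1)
  have hprod := hcofactor.hasDerivAt.mul hcos
  have hcos_one : Complex.cos (π * 1 / 2) = 0 := by simp
  rw [hcos_one, mul_zero, zero_add, Complex.cpow_neg_one, Complex.Gamma_one] at hprod
  have hval : 2 * (2 * π : ℂ)⁻¹ * 1 * cosZeta a 1 * -(π / 2) = -(cosZeta a 1 / 2) := by field_simp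
  rw [hval] at hprod
  refine hprod.congr_of_eventuallyEq ?_
  have hre : ∀ᶠ s : ℂ in 𝓝 1, 0 < s.re :=
    (Complex.continuous_re.tendsto 1).eventually (lt_mem_nhds (by simp))
  filter_upwards [hre] with s hs
  rw [hurwitzZetaEven_one_sub a (ne_neg_natCast_of_re_pos hs) (Or.inl ha)]
  simp only [Pi.mul_apply]
  ring

theorem hasDerivAt_hurwitzZetaEven_zero (ha : a ≠ 0) :
    HasDerivAt (hurwitzZetaEven a) (cosZeta a 1 / 2) 0 := by
  have hreflect : HasDerivAt (fun s : ℂ ↦ 1 - s) (-1) 0 := (hasDerivAt_id 0).const_sub 1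
  have h := (hasDerivAt_hurwitzZetaEven_one_sub ha).comp_of_eq 0 hreflect (by simp)
  simpa only [mul_neg, mul_one, neg_neg, Function.comp_def, sub_sub_cancel] using h

end DerivativeAtZero

end HurwitzLog

/-- `log |1 - ζ|` for the root of unity `ζ = exp (2πi j / N)`; the junk value at `j = 0` is `0`. -/
noncomputable def cyclotomicLog {N : ℕ} [NeZero N] (j : ZMod N) : ℝ :=
  Real.log ‖1 - ZMod.stdAddChar j‖

namespace cyclotomicLog

open Filter Topology HurwitzZeta DirichletCharacter

section LFunction

variable {N : ℕ} [NeZero N] {j : ZMod N}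

theorem one_sub_stdAddChar_ne_zero (hj : j ≠ 0) : 1 - ZMod.stdAddChar j ≠ 0 :=
  sub_ne_zero.2 fun h ↦ hj (ZMod.injective_stdAddChar (by rw [← h, AddChar.map_zero_eq_one]))

theorem one_sub_stdAddChar_neg (j : ZMod N) :
    1 - ZMod.stdAddChar (-j) = starRingEnd ℂ (1 - ZMod.stdAddChar j) := by
  rw [AddChar.map_neg_eq_conj, map_sub, map_one]

theorem expZeta_toAddCircle_one (hj : j ≠ 0) :
    expZeta (ZMod.toAddCircle j) 1 = -Complex.log (1 - ZMod.stdAddChar j) := by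
  obtain ⟨m, rfl⟩ := ZMod.intCast_surjective j
  have hcircle : ZMod.toAddCircle (m : ZMod N) ≠ 0 := fun h ↦ hj (by simpa using h)
  rw [ZMod.toAddCircle_intCast] at hcircle ⊢
  refine HurwitzLog.expZeta_one hcircle ?_ (sub_ne_zero.1 (one_sub_stdAddChar_ne_zero hj)).symm
  rw [ZMod.stdAddChar_coe]
  push_cast
  ring_nf

theorem cosZeta_toAddCircle_one (hj : j ≠ 0) :
    cosZeta (ZMod.toAddCircle j) 1 = -(cyclotomicLog j : ℂ) := by
  have hslit : 1 - ZMod.stdAddChar j ∈ Complex.slitPlane :=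
    HurwitzLog.one_sub_mem_slitPlane (AddChar.norm_apply _ _).le
      (sub_ne_zero.1 (one_sub_stdAddChar_ne_zero hj)).symm
  have hpos := expZeta_toAddCircle_one hj
  have hneg := expZeta_toAddCircle_one (neg_ne_zero.2 hj)
  rw [one_sub_stdAddChar_neg, Complex.log_conj _ (Complex.slitPlane_arg_ne_pi hslit), map_neg,
    expZeta, cosZeta_neg, sinZeta_neg] at hneg
  rw [expZeta] at hpos
  have hre := Complex.add_conj (Complex.log (1 - ZMod.stdAddChar j))
  rw [Complex.log_re, ← cyclotomicLog] at hre
  push_cast at hre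
  linear_combination (hpos + hneg - hre) / 2

variable {Φ : ZMod N → ℂ}

theorem deriv_LFunction_zero (hΦ : Φ.Even) (h0 : Φ 0 = 0) :
    deriv (ZMod.LFunction Φ) 0 = -(1 / 2) * ∑ j, Φ j * cyclotomicLog j := by
  have hN : (N : ℂ) ≠ 0 := NeZero.ne _
  have hpow : HasDerivAt (fun s : ℂ ↦ (N : ℂ) ^ (-s)) (deriv (fun s : ℂ ↦ (N : ℂ) ^ (-s)) 0) 0 :=
    ((differentiable_id.neg.differentiableAt).const_cpow (Or.inl hN)).hasDerivAt
  have hsum : HasDerivAt (fun s ↦ ∑ j, Φ j * hurwitzZetaEven (ZMod.toAddCircle j) s)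
      (∑ j, Φ j * (-(cyclotomicLog j : ℂ) / 2)) 0 := by
    refine HasDerivAt.fun_sum fun j _ ↦ ?_
    rcases eq_or_ne j 0 with rfl | hj
    · simpa [h0] using hasDerivAt_const (0 : ℂ) (0 : ℂ)
    · rw [← cosZeta_toAddCircle_one hj]
      exact (HurwitzLog.hasDerivAt_hurwitzZetaEven_zero (by simpa using hj)).const_mul (Φ j)
  have hzero : ∑ j, Φ j * hurwitzZetaEven (ZMod.toAddCircle j) 0 = 0 := by
    refine Finset.sum_eq_zero fun j _ ↦ ?_
    rcases eq_or_ne j 0 with rfl | hj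
    · rw [h0, zero_mul]
    · rw [hurwitzZetaEven_apply_zero, if_neg (by simpa using hj), mul_zero]
  have hderiv := (hpow.mul hsum).deriv
  rw [hzero, mul_zero, zero_add, neg_zero, Complex.cpow_zero, one_mul] at hderiv
  rw [funext (ZMod.LFunction_def_even hΦ), Finset.mul_sum]
  exact hderiv.trans (Finset.sum_congr rfl fun j _ ↦ by ring)

theorem LFunction_dft_one (hΦ : Φ.Even) (h0 : Φ 0 = 0) :
    ZMod.LFunction (ZMod.dft Φ) 1 = -∑ j, Φ j * cyclotomicLog j := by
  have hswap : ∑ j, Φ j * expZeta (ZMod.toAddCircle (-j)) 1 =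
      ∑ j, Φ j * expZeta (ZMod.toAddCircle j) 1 :=
    Fintype.sum_equiv (Equiv.neg _) _ _ fun j ↦ by rw [Equiv.neg_apply, hΦ]
  have hsym : ∑ j, Φ j * expZeta (ZMod.toAddCircle (-j)) 1 +
      ∑ j, Φ j * expZeta (ZMod.toAddCircle j) 1 = -2 * ∑ j, Φ j * cyclotomicLog j := by
    rw [← Finset.sum_add_distrib, Finset.mul_sum]
    refine Finset.sum_congr rfl fun j _ ↦ ?_
    rcases eq_or_ne j 0 with rfl | hj
    · simp only [h0, zero_mul, add_zero, mul_zero]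
    · rw [expZeta, expZeta, map_neg, cosZeta_neg, sinZeta_neg, cosZeta_toAddCircle_one hj]
      ring
  rw [ZMod.LFunction_dft Φ (Or.inl h0)]
  linear_combination (hsym + hswap) / 2

end LFunction

section Character

variable {N : ℕ}

theorem even_inv {χ : DirichletCharacter ℂ N} (hχ : χ.Even) : χ⁻¹.Even := by
  rw [DirichletCharacter.Even] at hχ ⊢
  rw [MulChar.inv_apply_eq_inv, hχ, Ring.inverse_one]

theorem even_of_even_changeLevel {M : ℕ} (hMN : M ∣ N) {χ : DirichletCharacter ℂ M}
    (h : (changeLevel hMN χ).Even) : χ.Even := by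
  have hχ := changeLevel_eq_cast_of_dvd χ hMN (-1)
  rwa [Units.val_neg, Units.val_one, h, ZMod.cast_neg hMN, ZMod.cast_one hMN, eq_comm] at hχ

variable [NeZero N]

theorem gaussSum_stdAddChar_ne_zero {χ : DirichletCharacter ℂ N} (hχ : χ.IsPrimitive) :
    gaussSum χ ZMod.stdAddChar ≠ 0 := by
  intro hgauss
  have hdft : ZMod.dft (χ : ZMod N → ℂ) = 0 := by
    ext k
    rw [hχ.fourierTransform_eq_inv_mul_gaussSum, hgauss, mul_zero, Pi.zero_apply]
  simpa using congrFun (ZMod.dft.map_eq_zero_iff.1 hdft) 1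

theorem sum_mul_ne_zero_of_isPrimitive {χ : DirichletCharacter ℂ N} (hχ : χ.IsPrimitive)
    (heven : χ.Even) (hne : χ ≠ 1) : ∑ j, χ j * (cyclotomicLog j : ℂ) ≠ 0 := by
  have hN : Fact (1 < N) := ⟨by
    by_contra! hN
    obtain rfl : N = 1 := le_antisymm hN (NeZero.pos N)
    exact hne (Subsingleton.elim _ _)⟩
  have hdft : ZMod.dft (χ : ZMod N → ℂ) = fun k ↦ gaussSum χ ZMod.stdAddChar * χ⁻¹ k := by
    ext k
    rw [hχ.fourierTransform_eq_inv_mul_gaussSum, (even_inv heven).eval_neg, mul_comm]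
  have hL : ZMod.LFunction (ZMod.dft (χ : ZMod N → ℂ)) 1 =
      gaussSum χ ZMod.stdAddChar * LFunction χ⁻¹ 1 := by
    simp only [hdft, LFunction, ZMod.LFunction, Finset.mul_sum]
    exact Finset.sum_congr rfl fun j _ ↦ by ring
  rw [← neg_ne_zero, ← LFunction_dft_one heven.to_fun χ.map_zero, hL]
  exact mul_ne_zero (gaussSum_stdAddChar_ne_zero hχ)
    (LFunction_apply_one_ne_zero (inv_ne_one.2 hne))

theorem deriv_LFunctionTrivChar_zero {p : ℕ} (hN : N.primeFactors = {p}) :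
    deriv (LFunctionTrivChar N) 0 = -(Real.log p / 2 : ℝ) := by
  have hp : p.Prime := Nat.prime_of_mem_primeFactors (hN ▸ Finset.mem_singleton_self p)
  have heuler : LFunctionTrivChar N =ᶠ[𝓝 0] fun s ↦ (1 - (p : ℂ) ^ (-s)) * riemannZeta s := by
    filter_upwards [isOpen_ne.mem_nhds (zero_ne_one (α := ℂ))] with s hs
    rw [LFunctionTrivChar_eq_mul_riemannZeta hs, hN, Finset.prod_singleton]
  have hfactor : HasDerivAt (fun s : ℂ ↦ 1 - (p : ℂ) ^ (-s)) (Real.log p) 0 := by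
    rw [Complex.ofReal_log p.cast_nonneg]
    simpa using ((hasDerivAt_neg (0 : ℂ)).const_cpow
      (Or.inl (Nat.cast_ne_zero.2 hp.ne_zero))).const_sub 1
  have hzeta := (differentiableAt_riemannZeta (zero_ne_one (α := ℂ))).hasDerivAt
  rw [heuler.deriv_eq, (hfactor.fun_mul hzeta).deriv, riemannZeta_zero, neg_zero,
    Complex.cpow_zero, sub_self, zero_mul, add_zero]
  push_cast
  ring

theorem LFunction_changeLevel_of_primeFactors_subset {M : ℕ} [NeZero M] (hMN : M ∣ N)
    (hsub : N.primeFactors ⊆ M.primeFactors) {χ : DirichletCharacter ℂ M} (hχ : χ ≠ 1) :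
    LFunction (changeLevel hMN χ) = LFunction χ := by
  ext s
  rw [LFunction_changeLevel hMN χ (Or.inl hχ), Finset.prod_eq_one, mul_one]
  intro p hp
  have hzero : χ (p : ZMod M) = 0 := χ.map_nonunit <| by
    rw [ZMod.isUnit_prime_iff_not_dvd (Nat.prime_of_mem_primeFactors hp), not_not]
    exact Nat.dvd_of_mem_primeFactors (hsub hp)
  rw [hzero, zero_mul, sub_zero]

theorem sum_mul_ne_zero (hN : IsPrimePow N) {χ : DirichletCharacter ℂ N} (heven : χ.Even) :
    ∑ j, χ j * (cyclotomicLog j : ℂ) ≠ 0 := by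
  obtain ⟨p, n, hp, hn, rfl⟩ := (isPrimePow_nat_iff _).1 hN
  have hpf : (p ^ n).primeFactors = {p} := Nat.primeFactors_prime_pow hn.ne' hp
  have : Fact (1 < p ^ n) := ⟨hN.one_lt⟩
  suffices deriv (LFunction χ) 0 ≠ 0 from
    right_ne_zero_of_mul (deriv_LFunction_zero heven.to_fun χ.map_zero ▸ this)
  rcases eq_or_ne χ 1 with rfl | hχ
  · have hlog : Real.log p ≠ 0 := (Real.log_pos (Nat.one_lt_cast.2 hp.one_lt)).ne'
    refine (deriv_LFunctionTrivChar_zero hpf).trans_ne ?_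
    exact_mod_cast neg_ne_zero.2 (div_ne_zero hlog two_ne_zero)
  have hdvd := χ.conductor_dvd_level
  have hlevel := χ.changeLevel_primitiveCharacter
  have : NeZero χ.conductor := ⟨ne_zero_of_dvd_ne_zero (NeZero.ne _) hdvd⟩
  have hprim : χ.primitiveCharacter ≠ 1 := fun h ↦ hχ (by rw [← hlevel, h, map_one])
  have hpeven : χ.primitiveCharacter.Even := even_of_even_changeLevel hdvd (hlevel.symm ▸ heven)
  have hcond : χ.conductor ≠ 1 := mt χ.eq_one_iff_conductor_eq_one.2 hχ
  have hsub : (p ^ n).primeFactors ⊆ χ.conductor.primeFactors := by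
    obtain ⟨k, -, hk⟩ := (Nat.dvd_prime_pow hp).1 hdvd
    have hk0 : k ≠ 0 := by
      rintro rfl
      exact hcond hk
    rw [hk, hpf, Nat.primeFactors_prime_pow hk0 hp]
  have : Fact (1 < χ.conductor) := ⟨by have := NeZero.ne χ.conductor; omega⟩
  rw [← hlevel, LFunction_changeLevel_of_primeFactors_subset hdvd hsub hprim]
  change deriv (ZMod.LFunction _) 0 ≠ 0
  rw [deriv_LFunction_zero hpeven.to_fun χ.primitiveCharacter.map_zero]
  exact mul_ne_zero (by norm_num)
    (sum_mul_ne_zero_of_isPrimitive χ.primitiveCharacter_isPrimitive hpeven hprim)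

end Character

section Galois

variable {N : ℕ} [NeZero N]

theorem exp_two_mul {j : ZMod N} (hj : j ≠ 0) :
    Complex.exp (2 * cyclotomicLog j) =
      (1 - ZMod.stdAddChar j) * (1 - ZMod.stdAddChar (-j)) := by
  rw [one_sub_stdAddChar_neg, Complex.mul_conj, Complex.normSq_eq_norm_sq, two_mul,
    Complex.exp_add, ← Complex.ofReal_exp, cyclotomicLog,
    Real.exp_log (norm_pos_iff.2 (one_sub_stdAddChar_ne_zero hj)), sq, Complex.ofReal_mul]

theorem isPrimitiveRoot_stdAddChar (b : (ZMod N)ˣ) :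
    IsPrimitiveRoot (ZMod.stdAddChar (b : ZMod N)) N := by
  have hone : IsPrimitiveRoot (ZMod.stdAddChar (1 : ZMod N)) N := by
    rw [← Int.cast_one, ZMod.stdAddChar_coe]
    simpa using Complex.isPrimitiveRoot_exp N (NeZero.ne N)
  have hpow := AddChar.map_nsmul_eq_pow ZMod.stdAddChar (b : ZMod N).val (1 : ZMod N)
  rw [nsmul_one, ZMod.natCast_zmod_val] at hpow
  exact hpow ▸ hone.pow_of_coprime _ (ZMod.val_coe_unit_coprime b)

section Field

variable {K : Type*} [Field K] {ζ : K}

/-- The element `(1 - ζ ^ j) * (1 - ζ ^ (-j))` of the cyclotomic field generated by `ζ`. Its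
conjugates are the numbers `|1 - exp (2πi bj / N)| ^ 2` with `b` coprime to `N`. -/
def cyclotomicNorm (ζ : K) (j : ZMod N) : K :=
  (1 - ζ ^ j.val) * (1 - ζ ^ (-j).val)

variable [Algebra ℚ K]

theorem exists_algHom_eq_stdAddChar [IsCyclotomicExtension {N} ℚ K] (hζ : IsPrimitiveRoot ζ N)
    (b : (ZMod N)ˣ) : ∃ φ : K →ₐ[ℚ] ℂ, φ ζ = ZMod.stdAddChar (b : ZMod N) := by
  have hirr := Polynomial.cyclotomic.irreducible_rat (NeZero.pos N)
  refine ⟨(hζ.embeddingsEquivPrimitiveRoots ℂ hirr).symm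
    ⟨_, (mem_primitiveRoots (NeZero.pos N)).2 (isPrimitiveRoot_stdAddChar b)⟩, ?_⟩
  rw [← hζ.embeddingsEquivPrimitiveRoots_apply_coe ℂ hirr, Equiv.apply_symm_apply]

variable [Nontrivial (ZMod N)]

theorem map_cyclotomicNorm {φ : K →ₐ[ℚ] ℂ} {b : (ZMod N)ˣ}
    (hφ : φ ζ = ZMod.stdAddChar (b : ZMod N)) (u : (ZMod N)ˣ) :
    φ (cyclotomicNorm ζ (u : ZMod N)) =
      Complex.exp (2 * cyclotomicLog ((b * u : (ZMod N)ˣ) : ZMod N)) := by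
  have hpow (j : ZMod N) :
      ZMod.stdAddChar (b : ZMod N) ^ j.val = ZMod.stdAddChar ((b : ZMod N) * j) := by
    rw [← AddChar.map_nsmul_eq_pow, nsmul_eq_mul, ZMod.natCast_zmod_val, mul_comm]
  simp only [cyclotomicNorm, map_mul, map_sub, map_one, map_pow, hφ, hpow, mul_neg]
  rw [exp_two_mul (b * u).ne_zero, Units.val_mul]

theorem prod_cyclotomicNorm_zpow_eq_one_iff [IsCyclotomicExtension {N} ℚ K]
    (hζ : IsPrimitiveRoot ζ N) (c : (ZMod N)ˣ → ℤ) (b : (ZMod N)ˣ) :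
    ∏ u : (ZMod N)ˣ, cyclotomicNorm ζ (u : ZMod N) ^ c u = 1 ↔
      ∑ u : (ZMod N)ˣ, c u * cyclotomicLog ((b * u : (ZMod N)ˣ) : ZMod N) = 0 := by
  obtain ⟨φ, hφ⟩ := exists_algHom_eq_stdAddChar hζ b
  have hprod : φ (∏ u : (ZMod N)ˣ, cyclotomicNorm ζ (u : ZMod N) ^ c u) =
      (Real.exp (2 * ∑ u, c u * cyclotomicLog ((b * u : (ZMod N)ˣ) : ZMod N)) : ℝ) := by
    push_cast
    rw [map_prod, Finset.mul_sum, Complex.exp_sum]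
    refine Finset.prod_congr rfl fun u _ ↦ ?_
    rw [map_zpow₀, map_cyclotomicNorm hφ, ← Complex.exp_int_mul]
    push_cast
    ring_nf
  rw [← map_eq_one_iff φ φ.injective, hprod, Complex.ofReal_eq_one, Real.exp_eq_one_iff]
  simp

end Field

variable [Nontrivial (ZMod N)]

theorem ker_linearCombination_le (b : (ZMod N)ˣ) :
    LinearMap.ker
        (Fintype.linearCombination ℚ fun u : (ZMod N)ˣ ↦ (cyclotomicLog (u : ZMod N) : ℂ)) ≤
      LinearMap.ker (Fintype.linearCombination ℚ fun u : (ZMod N)ˣ ↦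
        (cyclotomicLog ((b * u : (ZMod N)ˣ) : ZMod N) : ℂ)) := by
  intro c hc
  obtain ⟨⟨d, hd⟩, hint⟩ := IsLocalization.exist_integer_multiples_of_finite (nonZeroDivisors ℤ) c
  choose k hk using hint
  have hd0 : (d : ℝ) ≠ 0 := mod_cast nonZeroDivisors.ne_zero hd
  have hscale (x : (ZMod N)ˣ → ℝ) :
      ∑ u, k u * x u = 0 ↔ Fintype.linearCombination ℚ (fun u ↦ (x u : ℂ)) c = 0 := by
    have hcast (u) : (k u : ℝ) = d * c u := by
      have := hk u
      simp only [algebraMap_int_eq, eq_intCast, zsmul_eq_mul] at this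
      exact_mod_cast this
    simp only [hcast, mul_assoc, ← Finset.mul_sum, mul_eq_zero, hd0, false_or,
      Fintype.linearCombination_apply, Rat.smul_def]
    exact_mod_cast Iff.rfl
  rw [LinearMap.mem_ker, ← hscale] at hc ⊢
  have : IsCyclotomicExtension {N} ℚ (CyclotomicField N ℚ) :=
    CyclotomicField.isCyclotomicExtension N ℚ
  have hζ := IsCyclotomicExtension.zeta_spec N ℚ (CyclotomicField N ℚ)
  rw [← prod_cyclotomicNorm_zpow_eq_one_iff hζ k b, prod_cyclotomicNorm_zpow_eq_one_iff hζ k 1]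
  simpa only [one_mul] using hc

theorem isAlgebraic_exp (u : (ZMod N)ˣ) :
    IsAlgebraic ℚ (Complex.exp (cyclotomicLog (u : ZMod N))) := by
  have hsub (v : (ZMod N)ˣ) : IsAlgebraic ℚ (1 - ZMod.stdAddChar (v : ZMod N)) :=
    isAlgebraic_one.sub
      ((isPrimitiveRoot_stdAddChar v).isIntegral (NeZero.pos N)).tower_top.isAlgebraic
  refine IsAlgebraic.of_pow two_pos ?_
  rw [← Complex.exp_nat_mul, Nat.cast_two, exp_two_mul u.ne_zero, ← Units.val_neg]
  exact (hsub u).mul (hsub (-u))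

end Galois

section Fourier

variable {N : ℕ} [NeZero N] {c : (ZMod N)ˣ → ℂ}

theorem sum_mul_sum_mul_translate (χ : DirichletCharacter ℂ N) (c g : (ZMod N)ˣ → ℂ) :
    ∑ b : (ZMod N)ˣ, χ b * ∑ u, c u * g (b * u) =
      (∑ u, c u * χ⁻¹ u) * ∑ u : (ZMod N)ˣ, χ u * g u := by
  rw [Finset.sum_mul]
  simp only [Finset.mul_sum]
  rw [Finset.sum_comm]
  refine Finset.sum_congr rfl fun u _ ↦ ?_
  rw [← Equiv.sum_comp (Equiv.mulRight u⁻¹)]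
  refine Finset.sum_congr rfl fun v _ ↦ ?_
  rw [Equiv.coe_mulRight, inv_mul_cancel_right, Units.val_mul, map_mul, MulChar.inv_apply,
    Ring.inverse_unit]
  ring

theorem sum_mul_eq_zero_of_odd (hc : ∀ u, c (-u) = c u) {χ : DirichletCharacter ℂ N}
    (hχ : χ.Odd) : ∑ u, c u * χ u = 0 := by
  have hneg : ∑ u, c u * χ u = -∑ u, c u * χ u := by
    rw [← Finset.sum_neg_distrib]
    refine Fintype.sum_equiv (Equiv.neg _) _ _ fun u ↦ ?_
    rw [Equiv.neg_apply, hc, Units.val_neg, hχ.eval_neg, mul_neg, neg_neg]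
  exact self_eq_neg.1 hneg

theorem eq_zero_of_forall_sum_mul_eq_zero (h : ∀ χ : DirichletCharacter ℂ N, ∑ u, c u * χ u = 0)
    (a : (ZMod N)ˣ) : c a = 0 := by
  have horth : ∑ χ : DirichletCharacter ℂ N, χ (a : ZMod N)⁻¹ * ∑ u, c u * χ u =
      N.totient * c a := by
    simp only [Finset.mul_sum]
    rw [Finset.sum_comm, Finset.sum_eq_single a]
    · simp only [mul_left_comm _ (c a), ← Finset.mul_sum]
      rw [sum_char_inv_mul_char_eq ℂ a.isUnit, if_pos rfl, mul_comm]
    · intro u _ hu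
      simp only [mul_left_comm _ (c u), ← Finset.mul_sum]
      rw [sum_char_inv_mul_char_eq ℂ a.isUnit, if_neg fun h ↦ hu (Units.ext h.symm), mul_zero]
    · simp
  simp only [h, mul_zero, Finset.sum_const_zero] at horth
  exact (mul_eq_zero.1 horth.symm).resolve_left
    (Nat.cast_ne_zero.2 (Nat.totient_pos.2 (NeZero.pos N)).ne')

theorem eq_zero_of_forall_sum_mul_translate_eq_zero {g : (ZMod N)ˣ → ℂ}
    (hg : ∀ χ : DirichletCharacter ℂ N, χ.Even → ∑ u : (ZMod N)ˣ, χ u * g u ≠ 0)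
    (hc : ∀ u, c (-u) = c u) (h : ∀ b, ∑ u, c u * g (b * u) = 0) (u : (ZMod N)ˣ) : c u = 0 := by
  refine eq_zero_of_forall_sum_mul_eq_zero (fun χ ↦ ?_) u
  rcases χ.even_or_odd with hχ | hχ
  · have hconv := sum_mul_sum_mul_translate χ⁻¹ c g
    simp only [h, mul_zero, Finset.sum_const_zero, inv_inv] at hconv
    exact (mul_eq_zero.1 hconv.symm).resolve_right (hg _ (even_inv hχ))
  · exact sum_mul_eq_zero_of_odd hc hχ

end Fourier

section Transcendence

variable {N : ℕ} [NeZero N] {Φ : ZMod N → ℂ}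

theorem sum_eq_sum_units {F : ZMod N → ℂ} (hF : ∀ j, ¬IsUnit j → F j = 0) :
    ∑ j, F j = ∑ u : (ZMod N)ˣ, F u :=
  (Fintype.sum_of_injective _ Units.val_injective _ _ (fun j hj ↦ hF j hj) fun _ ↦ rfl).symm

theorem eq_zero_of_isAlgebraic_sum_mul (hN : IsPrimePow N) (heven : Φ.Even)
    (hunit : ∀ j, ¬IsUnit j → Φ j = 0) (halg : ∀ j, IsAlgebraic ℚ (Φ j))
    (hsum : IsAlgebraic ℚ (∑ j, Φ j * cyclotomicLog j)) : Φ = 0 := by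
  have : Fact (1 < N) := ⟨hN.one_lt⟩
  have htranslate (b : (ZMod N)ˣ) :
      ∑ u : (ZMod N)ˣ, Φ u * cyclotomicLog ((b * u : (ZMod N)ˣ) : ZMod N) = 0 := by
    refine Baker.sum_mul_eq_zero_of_ker_le isAlgebraic_exp (fun u ↦ halg u) ?_
      (ker_linearCombination_le b)
    rwa [← sum_eq_sum_units (F := fun j ↦ Φ j * cyclotomicLog j)
      fun j hj ↦ by rw [hunit j hj, zero_mul]]
  have hcharacter (χ : DirichletCharacter ℂ N) (hχ : χ.Even) :
      ∑ u : (ZMod N)ˣ, χ u * (cyclotomicLog (u : ZMod N) : ℂ) ≠ 0 := by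
    rw [← sum_eq_sum_units (F := fun j ↦ χ j * (cyclotomicLog j : ℂ))
      fun j hj ↦ by rw [χ.map_nonunit hj, zero_mul]]
    exact sum_mul_ne_zero hN hχ
  have hzero := eq_zero_of_forall_sum_mul_translate_eq_zero hcharacter
    (c := fun u ↦ Φ u) (fun u ↦ heven u) htranslate
  ext j
  by_cases hj : IsUnit j
  · exact hzero hj.unit
  · exact hunit j hj

theorem isAlgebraic_deriv_LFunction_zero_iff (hN : IsPrimePow N) (heven : Φ.Even)
    (hunit : ∀ j, ¬IsUnit j → Φ j = 0) (halg : ∀ j, IsAlgebraic ℚ (Φ j)) :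
    IsAlgebraic ℚ (deriv (ZMod.LFunction Φ) 0) ↔ Φ = 0 := by
  have : Fact (1 < N) := ⟨hN.one_lt⟩
  rw [deriv_LFunction_zero heven (hunit 0 not_isUnit_zero)]
  constructor
  · intro h
    refine eq_zero_of_isAlgebraic_sum_mul hN heven hunit halg ?_
    have hscale := (isAlgebraic_intCast (R := ℚ) (A := ℂ) (-2)).mul h
    rwa [← mul_assoc, show ((-2 : ℤ) : ℂ) * -(1 / 2) = 1 by norm_num, one_mul] at hscale
  · rintro rfl
    simpa using isAlgebraic_zero

end Transcendence

end cyclotomicLog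

namespace Lderiv0

variable {q : ℕ} [NeZero q]

theorem sum_Icc_eq_sum_zmod {M : Type*} [AddCommMonoid M] (F : ZMod q → M) :
    ∑ a ∈ Finset.Icc 1 q, F a = ∑ j, F j := by
  obtain ⟨m, rfl⟩ := Nat.exists_eq_succ_of_ne_zero (NeZero.ne q)
  calc ∑ a ∈ Finset.Icc 1 (m + 1), F a = ∑ a ∈ Finset.range (m + 1), F (a + 1 : ℕ) := by
        rw [Finset.range_eq_Ico, Finset.sum_Ico_add' (fun a : ℕ ↦ F a) 0 (m + 1) 1]
        rfl
    _ = ∑ j : ZMod (m + 1), F (j + 1) := by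
        rw [Finset.sum_range]
        refine Finset.sum_congr rfl fun j _ ↦ ?_
        rw [Nat.cast_add_one]
        exact congrArg (fun k : ZMod (m + 1) ↦ F (k + 1)) (ZMod.natCast_zmod_val (n := m + 1) j)
    _ = ∑ j, F j := Equiv.sum_comp (Equiv.addRight 1) F

theorem eq_deriv_LFunction {f : ℤ → ℂ} {Φ : ZMod q → ℂ} (hΦ : ∀ m : ℤ, Φ m = f m) :
    Lderiv0 q f = deriv (ZMod.LFunction Φ) 0 := by
  rw [Lderiv0]
  congr 1
  ext s
  rw [ZMod.LFunction, ← sum_Icc_eq_sum_zmod]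
  congr 1
  refine Finset.sum_congr rfl fun a _ ↦ ?_
  rw [← hΦ, Int.cast_natCast, ZMod.toAddCircle_natCast]

theorem exists_zmod_eq {f : ℤ → ℂ} (hper : Function.Periodic f q) :
    ∃ Φ : ZMod q → ℂ, ∀ m : ℤ, Φ m = f m := by
  refine ⟨fun j ↦ f j.val, fun m ↦ ?_⟩
  change f (m : ZMod q).val = f m
  rw [ZMod.val_intCast, ← hper.int_mul (m / q), Int.cast_id, mul_comm, Int.emod_add_mul_ediv]

end Lderiv0

/-- If `q = p^n > 1` is a prime power and `f` is an even, algebraic-valued, Dirichlet-type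
periodic function with period `q`, then `L'(0,f)` is transcendental iff `f` is not
identically zero. -/
theorem stmt3 (q p n : ℕ) (hp : p.Prime) (hn : 1 ≤ n) (hq : q = p ^ n) (hq1 : 1 < q)
    (f : ℤ → ℂ)
    (hper : ∀ m : ℤ, f (m + q) = f m)
    (heven : ∀ m : ℤ, f (-m) = f m)
    (hdir : ∀ m : ℤ, Int.gcd m q ≠ 1 → f m = 0)
    (halg : ∀ m : ℤ, IsAlgebraic ℚ (f m)) :
    Transcendental ℚ (Lderiv0 q f) ↔ ¬ (∀ m : ℤ, f m = 0) := by
  have : NeZero q := ⟨by omega⟩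
  have hpow : IsPrimePow q := hq ▸ hp.isPrimePow.pow (by omega)
  obtain ⟨Φ, hΦ⟩ := Lderiv0.exists_zmod_eq hper
  have hΦeven : Φ.Even := ZMod.intCast_surjective.forall.2 fun m ↦ by
    rw [← Int.cast_neg, hΦ, hΦ, heven]
  have hΦunit : ∀ j, ¬IsUnit j → Φ j = 0 := ZMod.intCast_surjective.forall.2 fun m hm ↦ by
    rw [ZMod.coe_int_isUnit_iff_isCoprime, isCoprime_comm, Int.isCoprime_iff_gcd_eq_one] at hm
    rw [hΦ, hdir m hm]
  have hΦalg : ∀ j, IsAlgebraic ℚ (Φ j) := ZMod.intCast_surjective.forall.2 fun m ↦ by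
    rw [hΦ]; exact halg m
  have hΦzero : Φ = 0 ↔ ∀ m : ℤ, f m = 0 := by
    simp only [funext_iff, ZMod.intCast_surjective.forall, hΦ, Pi.zero_apply]
  rw [Transcendental, Lderiv0.eq_deriv_LFunction hΦ,
    cyclotomicLog.isAlgebraic_deriv_LFunction_zero_iff hpow hΦeven hΦunit hΦalg, hΦzero]
end

section
/- Let q = 155 and let χ₀ be the non-principal real Dirichlet character modulo 5 with χ₀(1) = χ₀(4) = 1 and χ₀(2) = χ₀(3) = -1, extended to odd n coprime to 155 by χ(n) = χ₀(n mod 5) (χ is even and well defined on residues modulo 155 up to sign). Then ∑_{2 ≤ s ≤ 77, gcd(s,155)=1} (χ(s) - 1) · log(2 sin(sπ/155)) = 0; in particular, the numbers log(2 sin(sπ/155)), for 2 ≤ s ≤ 77 with gcd(s,155) = 1, are linearly dependent over the field of algebraic numbers. -/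
open scoped Real

/-- The even character modulo `155` induced by the non-principal real character `χ₀` mod `5`
(with `χ₀(1) = χ₀(4) = 1` and `χ₀(2) = χ₀(3) = -1`): `χ(s) = χ₀(s mod 5)`. -/
noncomputable def chi155 (s : ℕ) : ℝ :=
  if s % 5 = 1 ∨ s % 5 = 4 then 1 else if s % 5 = 2 ∨ s % 5 = 3 then -1 else 0

/-!
Write `f x = log |2 sin (π x)|`. Evaluating `X ^ n - α ^ n = ∏ (X - ζ α)`, the product being over
the `n`-th roots of unity `ζ`, at `X = 1` with `|α| = 1` gives the distribution relation
`∑_{k < n} f (x + k / n) = f (n x)`. Hence, if `w` is a function on `ℤ / m` with `w 0 = 0`, the sum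
of `w s * f (s / (m p))` over all residues `s` modulo `m p` is `∑_r w r * f (r / m)`, and the terms
with `p ∣ s` contribute `∑_r w (p r) * f (r / m)`. For `w = χ - 1` on units (and `0` elsewhere) the
two cancel as soon as the Euler factor `1 - χ p` vanishes, and evenness folds the sum onto
`s ≤ m p / 2`. The numbers `log (2 sin (s π / 155))` are the case `m = 5`, `p = 31`.
-/

section SumsOverResidues

open Finset

variable {M : Type*} [AddCommMonoid M]

theorem sum_range_mul_eq_sum_sum (f : ℕ → M) (m n : ℕ) :
    ∑ s ∈ range (m * n), f s = ∑ r ∈ range m, ∑ k ∈ range n, f (r + m * k) := by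
  rw [sum_comm]
  induction n with
  | zero => simp
  | succ n ih =>
    rw [mul_add_one, sum_range_add, ih, sum_range_succ]
    simp only [add_comm]

theorem sum_range_mul_filter_dvd (f : ℕ → M) (m : ℕ) {n : ℕ} (hn : 0 < n) :
    ∑ s ∈ range (m * n) with n ∣ s, f s = ∑ r ∈ range m, f (r * n) := by
  have image_eq : {s ∈ range (m * n) | n ∣ s} = (range m).image (· * n) := by
    ext s
    simp only [mem_filter, mem_range, mem_image]
    constructor
    · rintro ⟨hs, r, rfl⟩
      exact ⟨r, by nlinarith, mul_comm r n⟩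
    · rintro ⟨r, hr, rfl⟩
      exact ⟨Nat.mul_lt_mul_of_pos_right hr hn, dvd_mul_left n r⟩
  rw [image_eq, sum_image fun a _ b _ h ↦ Nat.eq_of_mul_eq_mul_right hn h]

theorem sum_coprime_mul_eq_sum_not_dvd {m p : ℕ} (hp : p.Prime) (S : Finset ℕ) {g : ℕ → M}
    (hg : ∀ s, ¬s.Coprime m → g s = 0) :
    ∑ s ∈ S with s.Coprime (m * p), g s = ∑ s ∈ S with ¬p ∣ s, g s := by
  have coprime_iff (s : ℕ) : s.Coprime (m * p) ↔ ¬p ∣ s ∧ s.Coprime m := by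
    rw [Nat.coprime_mul_iff_right, Nat.coprime_comm (n := s) (m := p), hp.coprime_iff_not_dvd,
      and_comm]
  simp only [coprime_iff, ← filter_filter]
  exact sum_filter_of_ne fun s _ ↦ not_imp_comm.mp (hg s)

theorem sum_coprime_range_eq_two_nsmul {q : ℕ} (hq : 2 < q) {g : ℕ → M}
    (hg : ∀ s < q, g (q - s) = g s) :
    ∑ s ∈ range q with s.Coprime q, g s = 2 • ∑ s ∈ Icc 1 (q / 2) with s.Coprime q, g s := by
  have coprime_pos {s : ℕ} (hs : s.Coprime q) : 0 < s :=
    Nat.pos_of_ne_zero fun h ↦ by simp_all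
  have coprime_half {s : ℕ} (hs : s.Coprime q) : 2 * s ≠ q := by
    rintro rfl
    have := Nat.Coprime.eq_one_of_dvd hs (dvd_mul_left s 2)
    lia
  have lower : ∑ s ∈ range q with s.Coprime q ∧ s ≤ q / 2, g s =
      ∑ s ∈ Icc 1 (q / 2) with s.Coprime q, g s := by
    refine sum_congr ?_ fun _ _ ↦ rfl
    ext s
    simp only [mem_filter, mem_range, mem_Icc]
    grind
  have upper : ∑ s ∈ range q with s.Coprime q ∧ ¬s ≤ q / 2, g s =
      ∑ s ∈ Icc 1 (q / 2) with s.Coprime q, g s := by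
    refine sum_nbij' (q - ·) (q - ·) ?_ ?_ ?_ ?_ ?_ <;>
      simp only [mem_filter, mem_range, mem_Icc] <;> intro s hs
    · have := (Nat.coprime_self_sub_left hs.1.le).mpr hs.2.1
      grind
    · have := (Nat.coprime_self_sub_left (show s ≤ q by lia)).mpr hs.2
      grind
    · lia
    · lia
    · exact (hg s hs.1).symm
  rw [← sum_filter_add_sum_filter_not _ (· ≤ q / 2), filter_filter, filter_filter, lower, upper,
    two_nsmul]

end SumsOverResidues

section DistributionRelation

open Real Finset

theorem prod_abs_two_mul_sin_add {n : ℕ} (hn : n ≠ 0) (x : ℝ) :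
    ∏ k ∈ range n, |2 * sin (x + k * π / n)| = |2 * sin (n * x)| := by
  have norm_one_sub_exp (t : ℝ) : ‖1 - Complex.exp (Complex.I * (2 * t : ℝ))‖ = |2 * sin t| := by
    rw [norm_sub_rev, Complex.norm_exp_I_mul_ofReal_sub_one, mul_div_cancel_left₀ t two_ne_zero,
      norm_eq_abs]
  have factorization := congrArg (Polynomial.eval 1) <|
    X_pow_sub_C_eq_prod (Complex.isPrimitiveRoot_exp n hn) (Nat.pos_of_ne_zero hn)
      (α := Complex.exp (Complex.I * (2 * x : ℝ))) rfl
  simp only [Polynomial.eval_sub, Polynomial.eval_pow, Polynomial.eval_X, Polynomial.eval_C,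
    Polynomial.eval_prod, one_pow, ← Complex.exp_nat_mul, ← Complex.exp_add] at factorization
  calc ∏ k ∈ range n, |2 * sin (x + k * π / n)|
      = ‖∏ k ∈ range n, (1 - Complex.exp (k * (2 * π * Complex.I / n) +
          Complex.I * (2 * x : ℝ)))‖ := by
        rw [norm_prod]
        refine prod_congr rfl fun k _ ↦ ?_
        rw [← norm_one_sub_exp]
        congr 3
        push_cast
        ring
    _ = |2 * sin (n * x)| := by
        rw [← factorization, ← norm_one_sub_exp]
        congr 3
        push_cast
        ring

-- The sines may be negative: `Real.log t = log |t|`.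
theorem sum_log_two_mul_sin_add {n : ℕ} {x : ℝ} (hx : sin (n * x) ≠ 0) :
    ∑ k ∈ range n, log (2 * sin (x + k * π / n)) = log (2 * sin (n * x)) := by
  have hn : n ≠ 0 := by
    rintro rfl
    simp at hx
  have hprod := prod_abs_two_mul_sin_add hn x
  have factor_ne_zero : ∀ k ∈ range n, |2 * sin (x + k * π / n)| ≠ 0 :=
    prod_ne_zero_iff.mp (by rw [hprod]; positivity)
  simpa only [log_prod factor_ne_zero, log_abs] using congrArg log hprod

theorem sin_natCast_mul_pi_div_pos {r m : ℕ} (hr : 0 < r) (hrm : r < m) :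
    0 < sin (r * π / m) := by
  have hm : (0 : ℝ) < m := by exact_mod_cast hr.trans hrm
  refine sin_pos_of_pos_of_lt_pi (by positivity) ?_
  rw [div_lt_iff₀ hm, mul_comm π]
  gcongr

theorem sin_natCast_sub_mul_pi_div {q s : ℕ} (hs : s < q) :
    sin ((q - s : ℕ) * π / q) = sin (s * π / q) := by
  have hq : (q : ℝ) ≠ 0 := Nat.cast_ne_zero.mpr (by lia)
  rw [← sin_pi_sub, Nat.cast_sub hs.le]
  congr 1
  field_simp
  ring

theorem sum_range_mul_weight_mul_log_two_mul_sin {m p : ℕ} (hp : 0 < p) {w : ZMod m → ℝ}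
    (hw : w 0 = 0) :
    ∑ s ∈ range (m * p), w s * log (2 * sin (s * π / (m * p : ℕ))) =
      ∑ r ∈ range m, w r * log (2 * sin (r * π / m)) := by
  rw [sum_range_mul_eq_sum_sum]
  refine sum_congr rfl fun r hr ↦ ?_
  obtain rfl | hr0 := r.eq_zero_or_pos
  · simp [hw]
  have hrm : r < m := mem_range.mp hr
  have hm' : (m : ℝ) ≠ 0 := Nat.cast_ne_zero.mpr (by lia)
  have hp' : (p : ℝ) ≠ 0 := Nat.cast_ne_zero.mpr hp.ne'
  have hx : p * (r * π / (m * p : ℕ)) = r * π / m := by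
    push_cast
    field_simp
  have distribution := sum_log_two_mul_sin_add (n := p) (x := r * π / (m * p : ℕ))
    (by rw [hx]; exact (sin_natCast_mul_pi_div_pos hr0 hrm).ne')
  rw [hx] at distribution
  rw [← distribution, mul_sum]
  refine sum_congr rfl fun k _ ↦ ?_
  have residue : ((r + m * k : ℕ) : ZMod m) = r := by simp
  have angle : ((r + m * k : ℕ) : ℝ) * π / (m * p : ℕ) = r * π / (m * p : ℕ) + k * π / p := by
    push_cast
    field_simp
  rw [residue, angle]

theorem sum_not_dvd_weight_mul_log_two_mul_sin {m p : ℕ} (hp : 0 < p) {w : ZMod m → ℝ}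
    (hw : w 0 = 0) :
    ∑ s ∈ range (m * p) with ¬p ∣ s, w s * log (2 * sin (s * π / (m * p : ℕ))) =
      ∑ r ∈ range m, (w r - w (r * p)) * log (2 * sin (r * π / m)) := by
  have multiples : ∑ s ∈ range (m * p) with p ∣ s, w s * log (2 * sin (s * π / (m * p : ℕ))) =
      ∑ r ∈ range m, w (r * p) * log (2 * sin (r * π / m)) := by
    rw [sum_range_mul_filter_dvd _ m hp]
    refine sum_congr rfl fun r _ ↦ ?_
    have hp' : (p : ℝ) ≠ 0 := Nat.cast_ne_zero.mpr hp.ne'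
    push_cast
    rw [mul_right_comm, mul_div_mul_right _ _ hp']
  simp only [sub_mul, sum_sub_distrib]
  rw [← sum_range_mul_weight_mul_log_two_mul_sin hp hw, ← multiples,
    ← sum_filter_add_sum_filter_not (range (m * p)) (p ∣ ·), add_sub_cancel_left]

end DistributionRelation

section CharacterValues

variable {m : ℕ} {R : Type*} [CommRing R]

theorem isAlgebraic_character_apply {M K : Type*} [CommMonoid M] [Finite Mˣ] [CommRing K]
    [Nontrivial K] [Algebra K R] (χ : MulChar M R) (a : M) :
    IsAlgebraic K (χ a) := by
  by_cases ha : IsUnit a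
  · refine IsAlgebraic.of_pow χ.orderOf_pos ?_
    rw [← MulChar.pow_apply' _ χ.orderOf_pos.ne', pow_orderOf_eq_one, MulChar.one_apply ha]
    exact isAlgebraic_one
  · rw [χ.map_nonunit ha]
    exact isAlgebraic_zero

variable {χ : DirichletCharacter R m}

theorem even_character_apply_natCast_sub (hχ : χ.Even) {q s : ℕ} (hmq : m ∣ q)
    (hs : s ≤ q) : χ (q - s : ℕ) = χ s := by
  rw [Nat.cast_sub hs, (ZMod.natCast_eq_zero_iff q m).mpr hmq, zero_sub, hχ.eval_neg]

theorem exists_coprime_apply_ne_one {q : ℕ} [NeZero q] (hmq : m ∣ q) (hχ : χ ≠ 1)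
    (heven : χ.Even) : ∃ s ∈ Finset.Icc 2 (q / 2), s.Coprime q ∧ χ s ≠ 1 := by
  obtain ⟨a, ha⟩ := MulChar.ne_one_iff.mp hχ
  obtain ⟨b, rfl⟩ := ZMod.unitsMap_surjective hmq a
  obtain ⟨t, htq, ht, hχt⟩ : ∃ t < q, t.Coprime q ∧ χ t ≠ 1 := by
    refine ⟨b.val.val, ZMod.val_lt _, ZMod.val_coe_unit_coprime b, ?_⟩
    rwa [ZMod.natCast_val, ← ZMod.unitsMap_val hmq]
  obtain ⟨s, hsq, hs, hχs⟩ : ∃ s ≤ q / 2, s.Coprime q ∧ χ s ≠ 1 := by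
    by_cases h : t ≤ q / 2
    · exact ⟨t, h, ht, hχt⟩
    · refine ⟨q - t, by lia, (Nat.coprime_self_sub_left htq.le).mpr ht, ?_⟩
      rwa [even_character_apply_natCast_sub heven hmq htq.le]
  refine ⟨s, Finset.mem_Icc.mpr ⟨?_, hsq⟩, hs, hχs⟩
  have s_ne_zero : s ≠ 0 := by
    rintro rfl
    rw [(Nat.coprime_zero_left q).mp hs, Nat.dvd_one] at hmq
    exact hχ (χ.level_one' hmq)
  have s_ne_one : s ≠ 1 := by
    rintro rfl
    simp at hχs
  lia

end CharacterValues

section CharacterSums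

open Real Finset

variable {m p : ℕ} {χ : DirichletCharacter ℝ m}

theorem sum_coprime_character_sub_one_mul_log_two_mul_sin (hp : p.Prime) (hχp : χ p = 1) :
    ∑ s ∈ range (m * p) with s.Coprime (m * p),
      (χ s - 1) * log (2 * sin (s * π / (m * p : ℕ))) = 0 := by
  have hpm : IsUnit (p : ZMod m) := by
    by_contra h
    simp [χ.map_nonunit h] at hχp
  let w : ZMod m → ℝ := fun a ↦ χ a - (1 : DirichletCharacter ℝ m) a
  have w_zero : w 0 = 0 := by
    obtain rfl | hm := eq_or_ne m 1
    · simp [w, χ.level_one]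
    · simp [w, DirichletCharacter.map_zero' _ hm]
  have w_mul_p (a : ZMod m) : w (a * p) = w a := by
    simp only [w, map_mul, hχp, MulChar.one_apply hpm, mul_one]
  have w_of_coprime {s : ℕ} (hs : s.Coprime m) : w s = χ s - 1 := by
    simp only [w, MulChar.one_apply ((ZMod.isUnit_iff_coprime s m).mpr hs)]
  have w_of_not_coprime (s : ℕ) (hs : ¬s.Coprime m) : w s = 0 := by
    simp only [w, MulChar.map_nonunit _ (mt (ZMod.isUnit_iff_coprime s m).mp hs), sub_zero]
  calc ∑ s ∈ range (m * p) with s.Coprime (m * p),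
        (χ s - 1) * log (2 * sin (s * π / (m * p : ℕ)))
      = ∑ s ∈ range (m * p) with s.Coprime (m * p),
          w s * log (2 * sin (s * π / (m * p : ℕ))) :=
        sum_congr rfl fun s hs ↦ by
          rw [w_of_coprime (mem_filter.mp hs).2.coprime_mul_right_right]
    _ = ∑ s ∈ range (m * p) with ¬p ∣ s, w s * log (2 * sin (s * π / (m * p : ℕ))) :=
        sum_coprime_mul_eq_sum_not_dvd hp _ fun s hs ↦ by rw [w_of_not_coprime s hs, zero_mul]
    _ = 0 := by
        rw [sum_not_dvd_weight_mul_log_two_mul_sin hp.pos w_zero]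
        simp only [w_mul_p, sub_self, zero_mul, sum_const_zero]

theorem sum_half_character_sub_one_mul_log_two_mul_sin (hp : p.Prime) (hq : 2 < m * p)
    (heven : χ.Even) (hχp : χ p = 1) :
    ∑ s ∈ Icc 2 (m * p / 2) with s.Coprime (m * p),
      (χ s - 1) * log (2 * sin (s * π / (m * p : ℕ))) = 0 := by
  have full := sum_coprime_character_sub_one_mul_log_two_mul_sin hp hχp
  rw [sum_coprime_range_eq_two_nsmul hq fun s hs ↦ by
    rw [even_character_apply_natCast_sub heven (dvd_mul_right m p) hs.le,
      sin_natCast_sub_mul_pi_div hs]] at full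
  have hhalf : 1 ≤ m * p / 2 := by lia
  rw [smul_eq_zero_iff_right two_ne_zero, ← insert_Icc_add_one_left_eq_Icc hhalf, filter_insert,
    if_pos (Nat.coprime_one_left _), sum_insert (by simp)] at full
  simpa using full

theorem stmt5_general [NeZero m] (hp : p.Prime) (hχ : χ ≠ 1) (heven : χ.Even) (hχp : χ p = 1) :
    (∑ s ∈ Icc 2 (m * p / 2) with s.Coprime (m * p),
        (χ s - 1) * log (2 * sin (s * π / (m * p : ℕ))) = 0) ∧
      ∃ c : ℕ → ℝ, (∀ s, IsAlgebraic ℚ (c s)) ∧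
        (∃ s ∈ {s ∈ Icc 2 (m * p / 2) | s.Coprime (m * p)}, c s ≠ 0) ∧
        ∑ s ∈ Icc 2 (m * p / 2) with s.Coprime (m * p),
          c s * log (2 * sin (s * π / (m * p : ℕ))) = 0 := by
  have hm : 1 < m := (NeZero.one_le (n := m)).lt_of_ne' fun h ↦ hχ (χ.level_one' h)
  have hq : 2 < m * p := by nlinarith [hp.two_le]
  have vanishing := sum_half_character_sub_one_mul_log_two_mul_sin hp hq heven hχp
  have : NeZero p := ⟨hp.ne_zero⟩
  obtain ⟨s, hs, hsq, hχs⟩ := exists_coprime_apply_ne_one (dvd_mul_right m p) hχ heven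
  exact ⟨vanishing, fun s ↦ χ s - 1,
    fun s ↦ (isAlgebraic_character_apply χ s).sub isAlgebraic_one,
    ⟨s, mem_filter.mpr ⟨hs, hsq⟩, sub_ne_zero.mpr hχs⟩, vanishing⟩

end CharacterSums

instance fact_prime_five : Fact (Nat.Prime 5) :=
  ⟨Nat.prime_five⟩

/-- The non-principal real Dirichlet character modulo `5`, which the function `chi155` evaluates
on residues modulo `5`. -/
noncomputable def chi5 : DirichletCharacter ℝ 5 :=
  (quadraticChar (ZMod 5)).ringHomComp (Int.castRingHom ℝ)

theorem chi5_natCast (s : ℕ) : chi5 s = chi155 s := by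
  have quadraticChar_values : ∀ a : ZMod 5, quadraticChar (ZMod 5) a =
      if a = (1 : ℕ) ∨ a = (4 : ℕ) then 1
      else if a = (2 : ℕ) ∨ a = (3 : ℕ) then -1 else 0 := by decide
  simp only [chi5, MulChar.ringHomComp_apply, quadraticChar_values, ZMod.natCast_eq_natCast_iff',
    chi155]
  push_cast
  split_ifs <;> simp

theorem chi5_ne_one : chi5 ≠ 1 := by
  refine (MulChar.ringHomComp_ne_one_iff Int.cast_injective).mpr (quadraticChar_ne_one ?_)
  simp [ZMod.ringChar_zmod_n]

theorem chi5_even : chi5.Even := by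
  have : (-1 : ZMod 5) = (4 : ℕ) := rfl
  rw [DirichletCharacter.Even, this, chi5_natCast]
  norm_num [chi155]

/-- For `q = 155`, the combination `∑_{2 ≤ s ≤ 77, (s,155)=1} (χ(s) - 1) log(2 sin(sπ/155))`
vanishes; in particular the numbers `log(2 sin(sπ/155))` for `2 ≤ s ≤ 77`, `gcd(s,155) = 1`,
are linearly dependent over the field of algebraic numbers. -/
theorem stmt5 :
    (∑ s ∈ Finset.filter (fun s => Nat.gcd s 155 = 1) (Finset.Icc 2 77),
        (chi155 s - 1) * Real.log (2 * Real.sin ((s : ℝ) * π / 155)) = 0) ∧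
      ∃ c : ℕ → ℝ, (∀ s, IsAlgebraic ℚ (c s)) ∧
        (∃ s ∈ Finset.filter (fun s => Nat.gcd s 155 = 1) (Finset.Icc 2 77), c s ≠ 0) ∧
        ∑ s ∈ Finset.filter (fun s => Nat.gcd s 155 = 1) (Finset.Icc 2 77),
          c s * Real.log (2 * Real.sin ((s : ℝ) * π / 155)) = 0 := by
  simpa [chi5_natCast] using stmt5_general (p := 31) (by norm_num) chi5_ne_one chi5_even
    (by rw [chi5_natCast]; norm_num [chi155])
end
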